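/- arXiv:1909.06409 — 8 statements merged into one kernel-verified Lean document; each statement's English description precedes it below -/
import Mathlib

section
/- Let q be a prime power, let n ≥ 1, and let f(x) = Σ_{i=0}^{n−1} a_i x^{q^i} ∈ F_{q^n}[x] be a q-polynomial. For 0 ≤ μ ≤ n−1, the F_q-dimension of the kernel of the F_q-linear transformation of F_{q^n} induced by f equals μ if and only if det(D_0(f)) = det(D_1(f)) = … = det(D_{μ−1}(f)) = 0 and det(D_μ(f)) ≠ 0. -/
/-!
Let `L/K` be a cyclic Galois extension of degree `n` with generator `σ`, and let
`f = ∑ a_i σ^i` and `g = ∑ c_i σ^i` be `σ`-polynomials with coefficients in `L`; for finite fields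
and `σ` the Frobenius automorphism these are the `q`-polynomials. Since `σ^n = 1`, the composite
`g ∘ f` is the `σ`-polynomial with coefficient vector `c ᵥ* D(f)`. Hence `det D_m(f) = 0` if and
only if there is a nonzero `g` of `σ`-degree `< n - m` for which `g ∘ f` has `σ`-degree `< m`.

Let `k = dim_K ker f`. A `σ`-polynomial of degree `< d` that vanishes on a subspace of dimension
`≥ d` has only zero coefficients.

* If `m < k`, then the image of `f` has dimension `n - k < n - m`, so some nonzero `g` of degree
  `< n - m` vanishes on it; then `g ∘ f = 0` and `det D_m(f) = 0`.
* If `m = k` and `g ∘ f` has degree `< k`, then it vanishes on `ker f`, so it is zero. Thus `g`, of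
  degree `< n - k`, vanishes on the image of `f`, so `g = 0`. Hence `det D_k(f) ≠ 0`.

So `k` is the least `m` with `det D_m(f) ≠ 0`.
-/

/-- The `(n-m) × (n-m)` matrix obtained from the Dickson (σ-Dickson) matrix of the
`q`-polynomial with coefficients `a 0, …, a (n-1)` by removing its first `m` columns and
last `m` rows; entry `(i,j)` is `a_((j+m-i) mod n) ^ (q ^ i)`. -/
noncomputable def dickSub (q n m : ℕ) {F : Type*} [Field F] (a : ℕ → F) :
    Matrix (Fin (n - m)) (Fin (n - m)) F :=
  Matrix.of fun i j => a ((j.val + m + n - i.val) % n) ^ q ^ i.val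

open Module Matrix

theorem det_submatrix_eq_zero_iff_exists_vecMul {κ ι ι' R : Type*} [Fintype κ] [DecidableEq κ]
    [Fintype ι] [CommRing R] [IsDomain R] (M : Matrix ι ι' R) {f : κ → ι}
    (hf : Function.Injective f) (g : κ → ι') :
    (M.submatrix f g).det = 0 ↔
      ∃ c : ι → R, c ≠ 0 ∧ (∀ i ∉ Set.range f, c i = 0) ∧ ∀ k, (c ᵥ* M) (g k) = 0 := by
  have vecMul_comp (c : ι → R) (hc : ∀ i ∉ Set.range f, c i = 0) (k : κ) :
      ((c ∘ f) ᵥ* M.submatrix f g) k = (c ᵥ* M) (g k) :=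
    Fintype.sum_of_injective f hf _ _ (fun i hi => by rw [hc i hi, zero_mul]) fun _ => rfl
  rw [← exists_vecMul_eq_zero_iff]
  constructor
  · rintro ⟨v, hv, hvM⟩
    have hsupp : ∀ i ∉ Set.range f, Function.extend f v 0 i = 0 := fun i hi => by
      rw [Function.extend_apply' _ _ _ hi, Pi.zero_apply]
    have hrestrict : Function.extend f v 0 ∘ f = v := Function.extend_comp hf v 0
    refine ⟨Function.extend f v 0, fun h => hv ?_, hsupp, fun k => ?_⟩
    · rw [← hrestrict, h, Pi.zero_comp]
    · rw [← vecMul_comp _ hsupp, hrestrict, hvM, Pi.zero_apply]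
  · rintro ⟨c, hc, hsupp, hcM⟩
    refine ⟨c ∘ f, fun h => hc (funext fun i => ?_), funext fun k => ?_⟩
    · by_cases hi : i ∈ Set.range f
      · obtain ⟨k, rfl⟩ := hi
        exact congrFun h k
      · exact hsupp i hi
    · rw [vecMul_comp c hsupp, hcM, Pi.zero_apply]

theorem exists_ne_zero_apply_eq_zero_of_finrank_lt_card {κ ι R V : Type*} [Fintype κ]
    [DivisionRing R] [AddCommGroup V] [Module R V] [FiniteDimensional R V] {f : κ → ι}
    (hf : Function.Injective f) (φ : (ι → R) →ₗ[R] V) (hκ : finrank R V < Fintype.card κ) :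
    ∃ c : ι → R, c ≠ 0 ∧ (∀ i ∉ Set.range f, c i = 0) ∧ φ c = 0 := by
  obtain ⟨v, hv, hv0⟩ := (Submodule.ne_bot_iff _).1 <|
    (φ ∘ₗ Function.ExtendByZero.linearMap R f).ker_ne_bot_of_finrank_lt (by simpa using hκ)
  refine ⟨Function.extend f v 0, fun h => hv0 ?_, fun i hi => ?_, hv⟩
  · rw [← Function.extend_comp hf v 0, h, Pi.zero_comp]
  · rw [Function.extend_apply' _ _ _ hi, Pi.zero_apply]

section SigmaPolynomials

variable {K L : Type*} [Field K] [Field L] [Algebra K L] {n : ℕ} {σ : Gal(L/K)}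

/-- The `σ`-polynomial `c₀ + c₁ σ + ⋯ + c_{n-1} σ^(n-1)` as a `K`-linear map on `L`, depending
linearly on its coefficient vector. It is a `q`-polynomial when `σ` is `x ↦ x ^ q`. -/
def sigmaPoly (σ : Gal(L/K)) : (Fin n → L) →ₗ[L] L →ₗ[K] L :=
  Fintype.linearCombination L fun i : Fin n => (σ ^ (i : ℕ)).toLinearMap

theorem sigmaPoly_apply (c : Fin n → L) (x : L) :
    sigmaPoly σ c x = ∑ i : Fin n, c i * (σ ^ (i : ℕ)) x := by
  simp [sigmaPoly, Fintype.linearCombination_apply]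

theorem exists_sigmaPoly_eq_zero_on (σ : Gal(L/K)) {d : ℕ} (hd : d ≤ n) (S : Submodule K L)
    [FiniteDimensional K S] (hS : finrank K S < d) :
    ∃ c : Fin n → L, c ≠ 0 ∧ (∀ i : Fin n, d ≤ i → c i = 0) ∧ ∀ x ∈ S, sigmaPoly σ c x = 0 := by
  obtain ⟨c, hc, hsupp, hcS⟩ := exists_ne_zero_apply_eq_zero_of_finrank_lt_card
    (Fin.castLE_injective hd) (LinearMap.lcomp L L S.subtype ∘ₗ sigmaPoly σ)
    (by rwa [finrank_linearMap_self, Fintype.card_fin])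
  exact ⟨c, hc, fun i hi => hsupp i (by simpa using hi), fun x hx =>
    LinearMap.congr_fun hcS ⟨x, hx⟩⟩

theorem finrank_le_finrank_map_sub_one_comp_mulLeft_add_one
    (hfix : ∀ x, σ x = x → x ∈ (algebraMap K L).range) {S : Submodule K L} [FiniteDimensional K S]
    {u : L} (huS : u ∈ S) (hu : u ≠ 0) :
    finrank K S ≤ finrank K (S.map ((σ.toLinearMap - 1) ∘ₗ LinearMap.mulLeft K u⁻¹)) + 1 := by
  set φ : L →ₗ[K] L := (σ.toLinearMap - 1) ∘ₗ LinearMap.mulLeft K u⁻¹ with hφ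
  have ker_le : (φ.domRestrict S).ker ≤ K ∙ (⟨u, huS⟩ : S) := by
    intro x hx
    have hxu : σ (u⁻¹ * x) = u⁻¹ * x := by
      simpa [hφ, sub_eq_zero] using LinearMap.mem_ker.1 hx
    obtain ⟨k, hk⟩ := hfix _ hxu
    refine Submodule.mem_span_singleton.2 ⟨k, Subtype.ext ?_⟩
    rw [Submodule.coe_smul, Algebra.smul_def, hk, inv_mul_eq_div, div_mul_cancel₀ _ hu]
  have finrank_ker_le := Submodule.finrank_mono ker_le
  rw [finrank_span_singleton (by simpa using hu)] at finrank_ker_le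
  rw [← (φ.domRestrict S).finrank_range_add_finrank_ker, LinearMap.range_domRestrict]
  gcongr

-- With `e i = c i * σ^i u` and `y = u⁻¹ * x`, summation by parts gives
-- `∑ e i * σ^i y = -∑ (e 0 + ⋯ + e i) * σ^i (σ y - y)`, since the `e i` add up to zero.
theorem sum_range_partialSum_mul_eq_zero {d : ℕ} {c : ℕ → L} {u x : L} (hu : u ≠ 0)
    (hcu : ∑ i ∈ Finset.range (d + 1), c i * (σ ^ i) u = 0)
    (hcx : ∑ i ∈ Finset.range (d + 1), c i * (σ ^ i) x = 0) :
    ∑ i ∈ Finset.range d, (∑ j ∈ Finset.range (i + 1), c j * (σ ^ j) u) *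
      (σ ^ i) (σ (u⁻¹ * x) - u⁻¹ * x) = 0 := by
  have hterm (i : ℕ) : (σ ^ i) (u⁻¹ * x) * (c i * (σ ^ i) u) = c i * (σ ^ i) x := by
    rw [mul_left_comm, ← map_mul, mul_right_comm, inv_mul_cancel₀ hu, one_mul]
  have hparts := Finset.sum_range_by_parts (fun i => (σ ^ i) (u⁻¹ * x))
    (fun i => c i * (σ ^ i) u) (d + 1)
  simp only [smul_eq_mul, hterm, hcu, hcx, Nat.add_sub_cancel, mul_zero, zero_sub] at hparts
  rw [← neg_eq_zero.1 hparts.symm]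
  refine Finset.sum_congr rfl fun i _ => ?_
  rw [map_sub, pow_succ, AlgEquiv.mul_apply, mul_comm]

theorem eq_zero_of_sum_range_eq_zero_on
    (hfix : ∀ x, σ x = x → x ∈ (algebraMap K L).range) {d : ℕ} {c : ℕ → L} {S : Submodule K L}
    (hS : d ≤ finrank K S) (hc : ∀ x ∈ S, ∑ i ∈ Finset.range d, c i * (σ ^ i) x = 0) :
    ∀ i < d, c i = 0 := by
  induction d generalizing c S with
  | zero => simp
  | succ d ih =>
    have : FiniteDimensional K S := Module.finite_of_finrank_pos (by omega)
    obtain ⟨u, huS, hu⟩ := S.ne_bot_iff.1 (by rintro rfl; simp at hS)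
    have hpartial : ∀ i ≤ d + 1, ∑ j ∈ Finset.range i, c j * (σ ^ j) u = 0 := by
      have hlt : ∀ i < d, ∑ j ∈ Finset.range (i + 1), c j * (σ ^ j) u = 0 := by
        refine ih (S := S.map ((σ.toLinearMap - 1) ∘ₗ LinearMap.mulLeft K u⁻¹)) ?_ ?_
        · have := finrank_le_finrank_map_sub_one_comp_mulLeft_add_one hfix huS hu
          omega
        · rintro _ ⟨x, hx, rfl⟩
          exact sum_range_partialSum_mul_eq_zero hu (hc u huS) (hc x hx)
      rintro (_ | i) hi
      · simp
      · rcases (Nat.le_of_succ_le_succ hi).eq_or_lt with rfl | hi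
        exacts [hc u huS, hlt i hi]
    intro i hi
    have hmul : c i * (σ ^ i) u = 0 := by
      rw [← Finset.sum_range_succ_sub_sum fun j => c j * (σ ^ j) u, hpartial i hi.le,
        hpartial (i + 1) hi, sub_zero]
    exact (mul_eq_zero.1 hmul).resolve_right ((map_ne_zero_iff _ (σ ^ i).injective).2 hu)

theorem eq_zero_of_sigmaPoly_eq_zero_on
    (hfix : ∀ x, σ x = x → x ∈ (algebraMap K L).range) {d : ℕ} {c : Fin n → L}
    (hsupp : ∀ i : Fin n, d ≤ i → c i = 0) {S : Submodule K L} (hS : d ≤ finrank K S)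
    (hc : ∀ x ∈ S, sigmaPoly σ c x = 0) : c = 0 := by
  let coeff : ℕ → L := fun i => if h : i < n then c ⟨i, h⟩ else 0
  have hcoeff : ∀ i < min d n, coeff i = 0 := by
    refine eq_zero_of_sum_range_eq_zero_on hfix (min_le_of_left_le hS) fun x hx => ?_
    rw [← hc x hx, sigmaPoly_apply, Finset.sum_fin_eq_sum_range]
    refine Finset.sum_subset_zero_on_sdiff (by simp) (fun i hi => ?_) fun i hi => ?_
    · have hin : i < n ∧ d ≤ i := by simp only [Finset.mem_sdiff, Finset.mem_range] at hi; omega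
      simp [hin.1, hsupp ⟨i, hin.1⟩ hin.2]
    · have hin : i < n := by simp only [Finset.mem_range] at hi; omega
      simp [coeff, hin]
  funext i
  rcases lt_or_ge (i : ℕ) d with hi | hi
  · simpa [coeff] using hcoeff i (lt_min hi i.isLt)
  · exact hsupp i hi

/-- The Dickson matrix of the `σ`-polynomial with coefficient vector `a`; the subtraction `j - i`
is the one of `Fin n`, that is, modulo `n`. -/
def sigmaDickson (σ : Gal(L/K)) (a : Fin n → L) : Matrix (Fin n) (Fin n) L :=
  of fun i j => (σ ^ (i : ℕ)) (a (j - i))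

theorem sigmaPoly_sigmaPoly_apply (hσ : σ ^ n = 1) (c a : Fin n → L) (x : L) :
    sigmaPoly σ c (sigmaPoly σ a x) = sigmaPoly σ (c ᵥ* sigmaDickson σ a) x := by
  have hrow (i : Fin n) : (σ ^ (i : ℕ)) (sigmaPoly σ a x) =
      (sigmaDickson σ a *ᵥ fun j => (σ ^ (j : ℕ)) x) i := by
    have : NeZero n := ⟨i.pos.ne'⟩
    rw [sigmaPoly_apply, map_sum]
    refine Fintype.sum_equiv (Equiv.addLeft i) _ _ fun l => ?_
    have hpow : σ ^ ((i + l : Fin n) : ℕ) = σ ^ (i : ℕ) * σ ^ (l : ℕ) := by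
      rw [Fin.val_add, ← pow_eq_pow_mod _ hσ, pow_add]
    simp [sigmaDickson, hpow]
  rw [sigmaPoly_apply c, sigmaPoly_apply (c ᵥ* _)]
  simp only [hrow]
  exact dotProduct_mulVec c _ _

/-- The matrix `D_m`: the first `m` columns and the last `m` rows of the Dickson matrix are
removed. For `n ≤ m` it is the empty matrix, whose determinant is `1`. -/
def sigmaDicksonMinor (σ : Gal(L/K)) (a : Fin n → L) (m : ℕ) :
    Matrix (Fin (n - m)) (Fin (n - m)) L :=
  (sigmaDickson σ a).submatrix (Fin.castLE (Nat.sub_le n m)) fun j => ⟨j + m, by omega⟩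

theorem det_sigmaDicksonMinor_eq_zero_iff (a : Fin n → L) (m : ℕ) :
    (sigmaDicksonMinor σ a m).det = 0 ↔ ∃ c : Fin n → L, c ≠ 0 ∧
      (∀ i : Fin n, n - m ≤ i → c i = 0) ∧
      ∀ j : Fin n, m ≤ j → (c ᵥ* sigmaDickson σ a) j = 0 := by
  rw [sigmaDicksonMinor, det_submatrix_eq_zero_iff_exists_vecMul _ (Fin.castLE_injective _)]
  refine exists_congr fun c => and_congr_right fun _ => and_congr ?_ ?_
  · simp only [Fin.range_castLE, Set.mem_ofPred_eq, not_lt]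
  · refine ⟨fun h j hj => ?_, fun h k => h _ (Nat.le_add_left m k)⟩
    simpa only [Nat.sub_add_cancel hj] using h ⟨j - m, by omega⟩

section Galois

variable [FiniteDimensional K L] [IsGalois K L]

theorem mem_range_algebraMap_of_apply_eq_self (hσ : ∀ τ, τ ∈ Subgroup.zpowers σ) {x : L}
    (hx : σ x = x) : x ∈ (algebraMap K L).range :=
  (IsGalois.mem_range_algebraMap_iff_fixed x).2 fun τ => by
    have : σ ∈ MulAction.stabilizer Gal(L/K) x := hx
    exact Subgroup.zpowers_le.2 this (hσ τ)

theorem pow_finrank_eq_one (σ : Gal(L/K)) : σ ^ finrank K L = 1 := by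
  rw [← IsGalois.card_aut_eq_finrank, pow_card_eq_one']

variable (hσ : ∀ τ, τ ∈ Subgroup.zpowers σ) (a : Fin (finrank K L) → L)
include hσ

theorem det_sigmaDicksonMinor_eq_zero_of_lt_finrank_ker {m : ℕ}
    (hm : m < finrank K (sigmaPoly σ a).ker) : (sigmaDicksonMinor σ a m).det = 0 := by
  have hrank := (sigmaPoly σ a).finrank_range_add_finrank_ker
  obtain ⟨c, hc, hsupp, hrange⟩ := exists_sigmaPoly_eq_zero_on σ (Nat.sub_le (finrank K L) m)
    (sigmaPoly σ a).range (by omega)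
  have hcomp : c ᵥ* sigmaDickson σ a = 0 := by
    refine eq_zero_of_sigmaPoly_eq_zero_on (fun _ => mem_range_algebraMap_of_apply_eq_self hσ)
      (d := finrank K L) (by omega) (S := ⊤) (finrank_top K L).ge fun x _ => ?_
    rw [← sigmaPoly_sigmaPoly_apply (pow_finrank_eq_one σ)]
    exact hrange _ (LinearMap.mem_range_self _ x)
  exact (det_sigmaDicksonMinor_eq_zero_iff a m).2 ⟨c, hc, hsupp, fun j _ => congrFun hcomp j⟩

theorem det_sigmaDicksonMinor_finrank_ker_ne_zero :
    (sigmaDicksonMinor σ a (finrank K (sigmaPoly σ a).ker)).det ≠ 0 := by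
  have hrank := (sigmaPoly σ a).finrank_range_add_finrank_ker
  have hfix : ∀ x, σ x = x → x ∈ (algebraMap K L).range :=
    fun _ => mem_range_algebraMap_of_apply_eq_self hσ
  rw [Ne, det_sigmaDicksonMinor_eq_zero_iff]
  rintro ⟨c, hc, hsupp, hcomp_supp⟩
  have hcomp : c ᵥ* sigmaDickson σ a = 0 := by
    refine eq_zero_of_sigmaPoly_eq_zero_on hfix hcomp_supp (S := (sigmaPoly σ a).ker) le_rfl
      fun x hx => ?_
    rw [← sigmaPoly_sigmaPoly_apply (pow_finrank_eq_one σ), LinearMap.mem_ker.1 hx, map_zero]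
  refine hc (eq_zero_of_sigmaPoly_eq_zero_on hfix hsupp (S := (sigmaPoly σ a).range) (by omega) ?_)
  rintro _ ⟨x, rfl⟩
  rw [sigmaPoly_sigmaPoly_apply (pow_finrank_eq_one σ), hcomp, map_zero, LinearMap.zero_apply]

end Galois

end SigmaPolynomials

theorem stmt_0_general {K L : Type*} [Field K] [Field L] [Algebra K L] [FiniteDimensional K L]
    [IsGalois K L] {σ : Gal(L/K)} (hσ : ∀ τ, τ ∈ Subgroup.zpowers σ) (a : Fin (finrank K L) → L)
    (μ : ℕ) :
    finrank K (sigmaPoly σ a).ker = μ ↔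
      (∀ m < μ, (sigmaDicksonMinor σ a m).det = 0) ∧ (sigmaDicksonMinor σ a μ).det ≠ 0 := by
  have hbelow (m : ℕ) := det_sigmaDicksonMinor_eq_zero_of_lt_finrank_ker hσ a (m := m)
  have hker := det_sigmaDicksonMinor_finrank_ker_ne_zero hσ a
  constructor
  · rintro rfl
    exact ⟨hbelow, hker⟩
  · rintro ⟨hzero, hμ⟩
    exact le_antisymm (not_lt.1 fun h => hμ (hbelow μ h)) (not_lt.1 fun h => hker (hzero _ h))

section FiniteField

variable (K : Type*) {F : Type*} [Field K] [Fintype K] [Field F] [Finite F] [Algebra K F]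

open FiniteField

theorem frobeniusAlgEquivOfAlgebraic_pow_apply (i : ℕ) (x : F) :
    (frobeniusAlgEquivOfAlgebraic K F ^ i) x = x ^ Fintype.card K ^ i := by
  rw [AlgEquiv.coe_pow, coe_frobeniusAlgEquivOfAlgebraic_iterate]

theorem mem_zpowers_frobeniusAlgEquivOfAlgebraic (τ : Gal(F/K)) :
    τ ∈ Subgroup.zpowers (frobeniusAlgEquivOfAlgebraic K F) := by
  obtain ⟨i, rfl⟩ := (bijective_frobeniusAlgEquivOfAlgebraic_pow K F).2 τ
  exact Subgroup.npow_mem_zpowers _ _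

theorem sigmaDicksonMinor_frobenius (n m : ℕ) (a : ℕ → F) :
    sigmaDicksonMinor (frobeniusAlgEquivOfAlgebraic K F) (fun i : Fin n => a i) m =
      dickSub (Fintype.card K) n m a := by
  ext i j
  have hindex : n - i + (j + m) = j + m + n - (i : ℕ) := by omega
  simp [sigmaDicksonMinor, sigmaDickson, dickSub, Fin.sub_def, hindex,
    frobeniusAlgEquivOfAlgebraic_pow_apply, -AlgEquiv.coe_pow]

theorem natCard_zeros_eq_pow_finrank_ker_sigmaPoly (n : ℕ) (a : ℕ → F) :
    Nat.card {x : F // ∑ i ∈ Finset.range n, a i * x ^ Fintype.card K ^ i = 0} =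
      Fintype.card K ^
        finrank K (sigmaPoly (frobeniusAlgEquivOfAlgebraic K F) fun i : Fin n => a i).ker := by
  rw [← Nat.card_eq_fintype_card, ← natCard_eq_pow_finrank]
  refine Nat.card_congr (Equiv.subtypeEquivRight fun x => ?_)
  simp only [LinearMap.mem_ker, sigmaPoly_apply, frobeniusAlgEquivOfAlgebraic_pow_apply,
    Finset.sum_range, Nat.card_eq_fintype_card]

theorem natCard_zeros_eq_pow_iff_det_dickSub (a : ℕ → F) (μ : ℕ) :
    Nat.card {x : F // ∑ i ∈ Finset.range (finrank K F), a i * x ^ Fintype.card K ^ i = 0} =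
        Fintype.card K ^ μ ↔
      (∀ m < μ, (dickSub (Fintype.card K) (finrank K F) m a).det = 0) ∧
        (dickSub (Fintype.card K) (finrank K F) μ a).det ≠ 0 := by
  rw [natCard_zeros_eq_pow_finrank_ker_sigmaPoly,
    (Nat.pow_right_injective (Fintype.one_lt_card (α := K))).eq_iff,
    stmt_0_general (mem_zpowers_frobeniusAlgEquivOfAlgebraic K)]
  simp only [sigmaDicksonMinor_frobenius]

end FiniteField

theorem exists_subfield_natCard_eq_and_finrank_eq (F : Type*) [Field F] [Finite F] {q n : ℕ}
    (hF : Nat.card F = q ^ n) : ∃ K : Subfield F, Nat.card K = q ∧ finrank K F = n := by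
  obtain ⟨p, _⟩ := CharP.exists F
  have hp : p.Prime := CharP.char_is_prime F p
  have : Fact p.Prime := ⟨hp⟩
  let : Algebra (ZMod p) F := ZMod.algebra F p
  have hcard : p ^ finrank (ZMod p) F = q ^ n := by rw [FiniteField.pow_finrank_eq_natCard, hF]
  have hone : 1 < q ^ n := hF ▸ Finite.one_lt_card
  have hn : n ≠ 0 := by rintro rfl; simp at hone
  obtain ⟨e, -, rfl⟩ := (Nat.dvd_prime_pow hp).1 (hcard ▸ dvd_pow_self q hn)
  have he : e ≠ 0 := by rintro rfl; simp at hone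
  have hdvd : finrank (ZMod p) (GaloisField p e) ∣ finrank (ZMod p) F := by
    rw [GaloisField.finrank p he]
    exact ⟨n, Nat.pow_right_injective hp.two_le (hcard.trans (pow_mul p e n).symm)⟩
  obtain ⟨φ⟩ := FiniteField.nonempty_algHom_of_finrank_dvd hdvd
  have hK : Nat.card φ.toRingHom.fieldRange = p ^ e := by
    rw [← GaloisField.card p e he]
    exact (Nat.card_congr φ.toRingHom.rangeRestrictFieldEquiv.toEquiv).symm
  have hrank : (p ^ e) ^ finrank φ.toRingHom.fieldRange F = (p ^ e) ^ n := by
    rw [← hK, ← natCard_eq_pow_finrank, hF, hK]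
  exact ⟨_, hK, Nat.pow_right_injective (hp.one_lt.trans_le (Nat.le_self_pow he p)) hrank⟩

/-- Theorem (main theorem): for `f(x) = ∑_{i=0}^{n-1} a_i x^{q^i} ∈ F_{q^n}[x]` and
`0 ≤ μ ≤ n-1`, the `F_q`-dimension of the kernel of the `F_q`-linear map induced by `f`
equals `μ` (equivalently, the kernel has exactly `q^μ` elements) iff
`det D_0(f) = ⋯ = det D_{μ-1}(f) = 0` and `det D_μ(f) ≠ 0`. -/
theorem stmt_0 (p e q n : ℕ) (hp : p.Prime) (he : 0 < e) (hq : q = p ^ e)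
    (hn : 0 < n) (F : Type*) [Field F] [Fintype F] (hF : Fintype.card F = q ^ n)
    (a : ℕ → F) (μ : ℕ) (hμ : μ ≤ n - 1) :
    Nat.card {x : F // ∑ i ∈ Finset.range n, a i * x ^ q ^ i = 0} = q ^ μ ↔
      (∀ m, m < μ → (dickSub q n m a).det = 0) ∧ (dickSub q n μ a).det ≠ 0 := by
  obtain ⟨K, hK, rfl⟩ :=
    exists_subfield_natCard_eq_and_finrank_eq F (Nat.card_eq_fintype_card.trans hF)
  have := Fintype.ofFinite K
  obtain rfl : Fintype.card K = q := Nat.card_eq_fintype_card.symm.trans hK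
  exact natCard_zeros_eq_pow_iff_det_dickSub K a μ
end

section
/- Let q be a prime power and let f(x) = Σ_{i=0}^{k} a_i x^{q^i} and g(x) = Σ_{i=0}^{l} b_i x^{q^i} be q-polynomials over the algebraic closure of F_q with a_k b_l ≠ 0. Let μ be the q-degree of gcd(f,g), i.e. deg gcd(f,g) = q^μ. Then for 0 ≤ μ ≤ min{k,l}: the q-degree of gcd(f,g) equals μ if and only if det(R_{0,q}(f,g)) = det(R_{1,q}(f,g)) = … = det(R_{μ−1,q}(f,g)) = 0 and det(R_{μ,q}(f,g)) ≠ 0. -/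
/-!
Under addition and composition the `q`-polynomials form a noncommutative ring with right division,
and `f ∣ u ∘ f` in `K[X]`, so the Euclidean algorithm run with composition computes the ordinary
`gcd f g`. It also controls the relations `u ∘ f = v ∘ g` with `v ≠ 0`: the least degree of such a
`v` is `deg f / deg (gcd f g)`.

The rows of `R_{m,q}(f, g)` list the coefficients of the polynomials `f ^ q ^ s` (`s < l - m`) and
`g ^ q ^ s` (`s < k - m`) at the monomials `X ^ q ^ n`, `m ≤ n < k + l - m`. Hence the determinant
vanishes iff some nontrivial `u ∘ f + v ∘ g`, with `u` and `v` of `q`-degrees less than `l - m` and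
`k - m`, has degree less than `q ^ m`. Let `deg (gcd f g) = q ^ d`. For `m < d` a least relation
`u ∘ f = v ∘ g` is such a combination. For `m = d` the combination is divisible by `gcd f g` and
of smaller degree, so it is zero, and `v` is too small for a nontrivial relation.
-/

open Polynomial

/-- The `m`-th scalar `q`-subresultant matrix `R_{m,q}(f,g)` of the `q`-polynomials
`f = ∑_{i=0}^k a_i x^{q^i}` and `g = ∑_{i=0}^l b_i x^{q^i}`: a
`(k+l-2m) × (k+l-2m)` matrix whose `(i,j)` entry is `a_{k+i-j}^{q^{l-m-1-i}}` for
`0 ≤ i ≤ l-m-1` and `b_{l+(i-(l-m))-j}^{q^{k-m-1-(i-(l-m))}}` for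
`l-m ≤ i ≤ k+l-2m-1`, out-of-range coefficients being `0`. -/
noncomputable def Rmat (q k l m : ℕ) {K : Type*} [Field K] (a b : ℕ → K) :
    Matrix (Fin (k + l - 2 * m)) (Fin (k + l - 2 * m)) K :=
  Matrix.of fun i j =>
    if i.val < l - m then
      if i.val ≤ j.val ∧ j.val ≤ k + i.val then
        a (k + i.val - j.val) ^ q ^ (l - m - 1 - i.val) else 0
    else
      if i.val - (l - m) ≤ j.val ∧ j.val ≤ l + (i.val - (l - m)) then
        b (l + (i.val - (l - m)) - j.val) ^ q ^ (k - m - 1 - (i.val - (l - m))) else 0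

namespace QPolynomial

variable {K : Type*} [Field K]

/-- The space of `q`-polynomials `∑ aᵢ X ^ q ^ i` inside `K[X]`; their product is composition. -/
noncomputable def qPolynomials (K : Type*) [Field K] (q : ℕ) : Submodule K K[X] :=
  Submodule.span K (Set.range fun i : ℕ => (X : K[X]) ^ q ^ i)

section Basic

variable {q : ℕ} {f : K[X]}

lemma X_pow_mem_qPolynomials (q i : ℕ) : (X : K[X]) ^ q ^ i ∈ qPolynomials K q :=
  Submodule.subset_span ⟨i, rfl⟩

lemma X_mem_qPolynomials (q : ℕ) : (X : K[X]) ∈ qPolynomials K q := by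
  simpa only [pow_zero, pow_one] using X_pow_mem_qPolynomials (K := K) q 0

lemma C_mul_X_pow_mem_qPolynomials (q i : ℕ) (c : K) : C c * X ^ q ^ i ∈ qPolynomials K q := by
  rw [← smul_eq_C_mul]
  exact Submodule.smul_mem _ _ (X_pow_mem_qPolynomials q i)

lemma coeff_eq_zero_of_forall_ne_pow (hf : f ∈ qPolynomials K q) {n : ℕ} (hn : ∀ i, n ≠ q ^ i) :
    f.coeff n = 0 := by
  induction hf using Submodule.span_induction with
  | mem x h =>
    obtain ⟨i, rfl⟩ := h
    exact (coeff_X_pow _ _).trans (if_neg (hn i))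
  | zero => exact coeff_zero n
  | add x y _ _ hx hy => rw [coeff_add, hx, hy, add_zero]
  | smul c x _ hx => rw [coeff_smul, hx, smul_zero]

lemma exists_natDegree_eq_pow (hf : f ∈ qPolynomials K q) (hf0 : f ≠ 0) :
    ∃ i, f.natDegree = q ^ i := by
  by_contra! h
  exact hf0 (leadingCoeff_eq_zero.1 (coeff_eq_zero_of_forall_ne_pow hf h))

lemma natDegree_pos (hq : 1 < q) (hf : f ∈ qPolynomials K q) (hf0 : f ≠ 0) :
    0 < f.natDegree := by
  obtain ⟨i, hi⟩ := exists_natDegree_eq_pow hf hf0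
  rw [hi]
  positivity

lemma natDegree_lt_pow_iff (hq : 1 < q) (hf : f ∈ qPolynomials K q) {N : ℕ} :
    f.natDegree < q ^ N ↔ ∀ n, N ≤ n → f.coeff (q ^ n) = 0 := by
  constructor
  · exact fun h n hn =>
      coeff_eq_zero_of_natDegree_lt (h.trans_le (Nat.pow_le_pow_right hq.le hn))
  · intro h
    by_contra! hN
    have hf0 : f ≠ 0 := ne_zero_of_natDegree_gt (lt_of_lt_of_le (by positivity) hN)
    obtain ⟨i, hi⟩ := exists_natDegree_eq_pow hf hf0
    refine leadingCoeff_ne_zero.2 hf0 ?_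
    rw [leadingCoeff, hi]
    exact h i ((Nat.pow_le_pow_iff_right hq).1 (hi ▸ hN))

lemma coeff_zero_eq_zero (hq : 1 < q) (hf : f ∈ qPolynomials K q) : f.coeff 0 = 0 :=
  coeff_eq_zero_of_forall_ne_pow hf fun _ => (pow_pos (by omega) _).ne

lemma dvd_comp (hq : 1 < q) {u : K[X]} (hu : u ∈ qPolynomials K q) (f : K[X]) :
    f ∣ u.comp f := by
  obtain ⟨w, rfl⟩ := X_dvd_iff.2 (coeff_zero_eq_zero hq hu)
  rw [mul_comp, X_comp]
  exact dvd_mul_right _ _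

lemma comp_ne_zero (hq : 1 < q) (hf : f ∈ qPolynomials K q) {u : K[X]} (hu0 : u ≠ 0)
    (hf0 : f ≠ 0) : u.comp f ≠ 0 := by
  rw [Ne, comp_eq_zero_iff, coeff_zero_eq_zero hq hf, C_0]
  tauto

lemma exists_degree_sub_comp_lt (hq : 1 < q) (hf : f ∈ qPolynomials K q) (hf0 : f ≠ 0)
    {g : K[X]} (hg : g ∈ qPolynomials K q) (hg0 : g ≠ 0) (hgf : g.degree ≤ f.degree) :
    ∃ w ∈ qPolynomials K q, (f - w.comp g).degree < f.degree := by
  obtain ⟨i, hi⟩ := exists_natDegree_eq_pow hf hf0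
  obtain ⟨j, hj⟩ := exists_natDegree_eq_pow hg hg0
  have hji : j ≤ i := by
    rw [← Nat.pow_le_pow_iff_right hq, ← hi, ← hj]
    exact natDegree_le_natDegree hgf
  have hlead : g.leadingCoeff ^ q ^ (i - j) ≠ 0 := pow_ne_zero _ (leadingCoeff_ne_zero.2 hg0)
  set c : K := f.leadingCoeff / g.leadingCoeff ^ q ^ (i - j) with hc
  have hc0 : c ≠ 0 := div_ne_zero (leadingCoeff_ne_zero.2 hf0) hlead
  refine ⟨C c * X ^ q ^ (i - j), C_mul_X_pow_mem_qPolynomials _ _ _, ?_⟩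
  rw [mul_comp, C_comp, X_pow_comp]
  refine degree_sub_lt_left ?_ hf0 ?_
  · rw [degree_eq_natDegree hf0,
      degree_eq_natDegree (mul_ne_zero (C_ne_zero.2 hc0) (pow_ne_zero _ hg0)),
      natDegree_C_mul hc0, natDegree_pow, hi, hj, ← pow_add, Nat.sub_add_cancel hji]
  · rw [leadingCoeff_mul, leadingCoeff_C, leadingCoeff_pow, hc, div_mul_cancel₀ _ hlead]

section Gcd

variable [DecidableEq K[X]]

lemma natDegree_gcd_comp (hq : 1 < q) {w : K[X]} (hw : w ∈ qPolynomials K q)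
    (f : K[X]) : (EuclideanDomain.gcd f (w.comp f)).natDegree = f.natDegree :=
  natDegree_eq_of_degree_eq <| degree_eq_degree_of_associated <| associated_of_dvd_dvd
    (EuclideanDomain.gcd_dvd_left _ _) (EuclideanDomain.dvd_gcd dvd_rfl (dvd_comp hq hw f))

lemma natDegree_gcd_comp_add (hq : 1 < q) {w : K[X]} (hw : w ∈ qPolynomials K q)
    (f r : K[X]) :
    (EuclideanDomain.gcd f (w.comp f + r)).natDegree = (EuclideanDomain.gcd r f).natDegree := by
  have dvd_comp_of_dvd {c : K[X]} (hc : c ∣ f) : c ∣ w.comp f := hc.trans (dvd_comp hq hw f)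
  refine natDegree_eq_of_degree_eq <| degree_eq_degree_of_associated <|
    associated_of_dvd_dvd (EuclideanDomain.dvd_gcd ?_ ?_) (EuclideanDomain.dvd_gcd ?_ ?_)
  · exact (dvd_add_right (dvd_comp_of_dvd (EuclideanDomain.gcd_dvd_left _ _))).1
      (EuclideanDomain.gcd_dvd_right _ _)
  · exact EuclideanDomain.gcd_dvd_left _ _
  · exact EuclideanDomain.gcd_dvd_right _ _
  · exact dvd_add (dvd_comp_of_dvd (EuclideanDomain.gcd_dvd_right _ _))
      (EuclideanDomain.gcd_dvd_left _ _)

end Gcd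

end Basic

section Composition

variable {p e : ℕ} [ExpChar K p] {u f g : K[X]}

lemma add_pow_pow_pow (f g : K[X]) (s : ℕ) :
    (f + g) ^ (p ^ e) ^ s = f ^ (p ^ e) ^ s + g ^ (p ^ e) ^ s := by
  rw [← pow_mul]
  exact add_pow_expChar_pow f g p (e * s)

lemma pow_mem_qPolynomials (hq : 1 < p ^ e) (hf : f ∈ qPolynomials K (p ^ e)) (s : ℕ) :
    f ^ (p ^ e) ^ s ∈ qPolynomials K (p ^ e) := by
  induction hf using Submodule.span_induction with
  | mem x h =>
    obtain ⟨i, rfl⟩ := h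
    rw [← pow_mul, ← pow_add]
    exact X_pow_mem_qPolynomials _ _
  | zero =>
    rw [zero_pow (pow_ne_zero _ (by omega))]
    exact Submodule.zero_mem _
  | add x y _ _ hx hy =>
    rw [add_pow_pow_pow]
    exact Submodule.add_mem _ hx hy
  | smul c x _ hx =>
    rw [_root_.smul_pow]
    exact Submodule.smul_mem _ _ hx

lemma comp_mem_qPolynomials (hq : 1 < p ^ e) (hu : u ∈ qPolynomials K (p ^ e))
    (hf : f ∈ qPolynomials K (p ^ e)) : u.comp f ∈ qPolynomials K (p ^ e) := by
  induction hu using Submodule.span_induction with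
  | mem x h =>
    obtain ⟨i, rfl⟩ := h
    rw [X_pow_comp]
    exact pow_mem_qPolynomials hq hf i
  | zero =>
    rw [zero_comp]
    exact Submodule.zero_mem _
  | add x y _ _ hx hy =>
    rw [add_comp]
    exact Submodule.add_mem _ hx hy
  | smul c x _ hx =>
    rw [smul_comp]
    exact Submodule.smul_mem _ _ hx

lemma comp_add_of_mem (hu : u ∈ qPolynomials K (p ^ e)) (f g : K[X]) :
    u.comp (f + g) = u.comp f + u.comp g := by
  induction hu using Submodule.span_induction with
  | mem x h =>
    obtain ⟨i, rfl⟩ := h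
    simpa only [X_pow_comp] using add_pow_pow_pow f g i
  | zero => simp only [zero_comp, add_zero]
  | add x y _ _ hx hy =>
    simp only [add_comp, hx, hy]
    ring
  | smul c x _ hx => simp only [smul_comp, hx, smul_add]

lemma exists_eq_comp_add (hq : 1 < p ^ e) (hf : f ∈ qPolynomials K (p ^ e))
    (hg : g ∈ qPolynomials K (p ^ e)) (hg0 : g ≠ 0) :
    ∃ w ∈ qPolynomials K (p ^ e), ∃ r ∈ qPolynomials K (p ^ e),
      f = w.comp g + r ∧ r.degree < g.degree := by
  induction hd : f.degree using WellFoundedLT.induction generalizing f with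
  | ind N ih =>
    subst hd
    rcases lt_or_ge f.degree g.degree with hlt | hge
    · exact ⟨0, Submodule.zero_mem _, f, hf, by rw [zero_comp, zero_add], hlt⟩
    have hf0 : f ≠ 0 := ne_zero_of_degree_ge_degree hge hg0
    obtain ⟨w, hw, hlt⟩ := exists_degree_sub_comp_lt hq hf hf0 hg hg0 hge
    obtain ⟨w', hw', r, hr, hdiv, hrg⟩ :=
      ih _ hlt (Submodule.sub_mem _ hf (comp_mem_qPolynomials hq hw hg)) rfl
    refine ⟨w + w', Submodule.add_mem _ hw hw', r, hr, ?_, hrg⟩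
    rw [add_comp, add_assoc, ← hdiv, add_sub_cancel]

theorem euclidean_induction (hq : 1 < p ^ e) {P : K[X] → K[X] → Prop}
    (comp : ∀ f ∈ qPolynomials K (p ^ e), f ≠ 0 → ∀ w ∈ qPolynomials K (p ^ e), P f (w.comp f))
    (comp_add : ∀ f ∈ qPolynomials K (p ^ e), f ≠ 0 → ∀ w ∈ qPolynomials K (p ^ e),
      ∀ r ∈ qPolynomials K (p ^ e), r ≠ 0 → P r f → P f (w.comp f + r))
    (hf : f ∈ qPolynomials K (p ^ e)) (hf0 : f ≠ 0) (hg : g ∈ qPolynomials K (p ^ e)) :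
    P f g := by
  induction hd : f.degree using WellFoundedLT.induction generalizing f g with
  | ind N ih =>
    subst hd
    obtain ⟨w, hw, r, hr, rfl, hlt⟩ := exists_eq_comp_add hq hg hf hf0
    by_cases hr0 : r = 0
    · rw [hr0, add_zero]
      exact comp f hf hf0 w hw
    · exact comp_add f hf hf0 w hw r hr hr0 (ih _ hlt hr hr0 hf rfl)

end Composition

section EuclideanAlgorithm

variable {p e : ℕ} [ExpChar K p] [DecidableEq K[X]] {f g : K[X]}

theorem exists_natDegree_gcd_eq_pow (hq : 1 < p ^ e) (hf : f ∈ qPolynomials K (p ^ e))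
    (hf0 : f ≠ 0) (hg : g ∈ qPolynomials K (p ^ e)) :
    ∃ d, (EuclideanDomain.gcd f g).natDegree = (p ^ e) ^ d := by
  refine euclidean_induction hq (P := fun f g => ∃ d, (EuclideanDomain.gcd f g).natDegree =
    (p ^ e) ^ d) ?_ ?_ hf hf0 hg
  · intro f hf hf0 w hw
    rw [natDegree_gcd_comp hq hw]
    exact exists_natDegree_eq_pow hf hf0
  · intro f _ _ w hw r _ _ ih
    rwa [natDegree_gcd_comp_add hq hw]

theorem exists_comp_eq_comp (hq : 1 < p ^ e) (hf : f ∈ qPolynomials K (p ^ e)) (hf0 : f ≠ 0)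
    (hg : g ∈ qPolynomials K (p ^ e)) :
    ∃ u ∈ qPolynomials K (p ^ e), ∃ v ∈ qPolynomials K (p ^ e), v ≠ 0 ∧
      u.comp f = v.comp g ∧
      v.natDegree * (EuclideanDomain.gcd f g).natDegree = f.natDegree := by
  refine euclidean_induction hq (P := fun f g => ∃ u ∈ qPolynomials K (p ^ e),
    ∃ v ∈ qPolynomials K (p ^ e), v ≠ 0 ∧ u.comp f = v.comp g ∧
      v.natDegree * (EuclideanDomain.gcd f g).natDegree = f.natDegree) ?_ ?_ hf hf0 hg
  · intro f _ _ w hw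
    refine ⟨w, hw, X, X_mem_qPolynomials _, X_ne_zero, X_comp.symm, ?_⟩
    rw [natDegree_gcd_comp hq hw, natDegree_X, one_mul]
  · rintro f hf hf0 w hw r hr hr0 ⟨u, hu, v, hv, hv0, huv, hdeg⟩
    refine ⟨u.comp w + v, Submodule.add_mem _ (comp_mem_qPolynomials hq hu hw) hv, u, hu,
      ?_, ?_, ?_⟩
    · rintro rfl
      exact comp_ne_zero hq hf hv0 hf0 (huv.symm.trans zero_comp)
    · rw [comp_add_of_mem hu, add_comp, comp_assoc, huv]
    · have hnat : u.natDegree * r.natDegree = v.natDegree * f.natDegree := by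
        rw [← natDegree_comp, huv, natDegree_comp]
      rw [natDegree_gcd_comp_add hq hw]
      refine Nat.eq_of_mul_eq_mul_right (natDegree_pos hq hr hr0) ?_
      rw [mul_right_comm, hnat, mul_right_comm, hdeg, mul_comm]

theorem natDegree_le_mul_natDegree_gcd (hq : 1 < p ^ e) (hf : f ∈ qPolynomials K (p ^ e))
    (hf0 : f ≠ 0) (hg : g ∈ qPolynomials K (p ^ e)) {u v : K[X]}
    (hu : u ∈ qPolynomials K (p ^ e)) (hv : v ∈ qPolynomials K (p ^ e)) (hv0 : v ≠ 0)
    (huv : u.comp f = v.comp g) :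
    f.natDegree ≤ v.natDegree * (EuclideanDomain.gcd f g).natDegree := by
  refine euclidean_induction hq (P := fun f g => ∀ u ∈ qPolynomials K (p ^ e),
    ∀ v ∈ qPolynomials K (p ^ e), v ≠ 0 → u.comp f = v.comp g →
      f.natDegree ≤ v.natDegree * (EuclideanDomain.gcd f g).natDegree) ?_ ?_ hf hf0 hg
      u hu v hv hv0 huv
  · intro f _ _ w hw u _ v hv hv0 _
    rw [natDegree_gcd_comp hq hw]
    exact Nat.le_mul_of_pos_left _ (natDegree_pos hq hv hv0)
  · intro f _ _ w hw r hr hr0 ih u hu v hv hv0 huv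
    have hrel : v.comp r = (u - v.comp w).comp f := by
      rw [sub_comp, comp_assoc, huv, comp_add_of_mem hv, add_sub_cancel_left]
    have hsub0 : u - v.comp w ≠ 0 := by
      intro hz
      exact comp_ne_zero hq hr hv0 hr0 (by rw [hrel, hz, zero_comp])
    have hle := ih v hv _ (Submodule.sub_mem _ hu (comp_mem_qPolynomials hq hv hw)) hsub0 hrel
    have hnat : v.natDegree * r.natDegree = (u - v.comp w).natDegree * f.natDegree := by
      rw [← natDegree_comp, hrel, natDegree_comp]
    rw [natDegree_gcd_comp_add hq hw]
    refine Nat.le_of_mul_le_mul_right ?_ (natDegree_pos hq hr hr0)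
    rw [mul_right_comm v.natDegree, hnat, mul_right_comm, mul_comm f.natDegree]
    exact Nat.mul_le_mul_right _ hle

end EuclideanAlgorithm

section OfCoeffs

/-- The `q`-polynomial `∑_{i < N} cᵢ X ^ q ^ i` with coefficient vector `c`. -/
noncomputable def ofCoeffs (q : ℕ) {N : ℕ} (c : Fin N → K) : K[X] :=
  ∑ i, C (c i) * X ^ q ^ (i : ℕ)

variable {q N : ℕ}

lemma ofCoeffs_mem_qPolynomials (q : ℕ) (c : Fin N → K) : ofCoeffs q c ∈ qPolynomials K q :=
  Submodule.sum_mem _ fun _ _ => C_mul_X_pow_mem_qPolynomials _ _ _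

lemma ofCoeffs_comp (q : ℕ) (c : Fin N → K) (f : K[X]) :
    (ofCoeffs q c).comp f = ∑ i, C (c i) * f ^ q ^ (i : ℕ) := by
  simp only [ofCoeffs, sum_comp, mul_comp, C_comp, X_pow_comp]

lemma coeff_ofCoeffs (hq : 1 < q) (c : Fin N → K) (i : Fin N) :
    (ofCoeffs q c).coeff (q ^ (i : ℕ)) = c i := by
  simp [ofCoeffs, coeff_X_pow, Nat.pow_right_inj hq, Fin.val_inj]

lemma ofCoeffs_eq_zero_iff (hq : 1 < q) {c : Fin N → K} : ofCoeffs q c = 0 ↔ c = 0 := by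
  refine ⟨fun h => funext fun i => ?_, ?_⟩
  · rw [← coeff_ofCoeffs hq c i, h, coeff_zero, Pi.zero_apply]
  · rintro rfl
    simp [ofCoeffs]

lemma natDegree_ofCoeffs_lt (hq : 1 < q) (c : Fin N → K) : (ofCoeffs q c).natDegree < q ^ N := by
  rw [natDegree_lt_pow_iff hq (ofCoeffs_mem_qPolynomials q c)]
  intro n hn
  simp only [ofCoeffs, finsetSum_coeff, coeff_C_mul, coeff_X_pow, Nat.pow_right_inj hq]
  exact Finset.sum_eq_zero fun i _ => by rw [if_neg (by omega), mul_zero]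

lemma natDegree_ofCoeffs_le (hq : 1 < q) (c : Fin (N + 1) → K) :
    (ofCoeffs q c).natDegree ≤ q ^ N :=
  natDegree_sum_le_of_forall_le _ _ fun i _ =>
    (natDegree_C_mul_X_pow_le _ _).trans (Nat.pow_le_pow_right hq.le (by omega))

lemma natDegree_ofCoeffs (hq : 1 < q) {c : Fin (N + 1) → K} (hc : c (Fin.last N) ≠ 0) :
    (ofCoeffs q c).natDegree = q ^ N :=
  (natDegree_ofCoeffs_le hq c).antisymm <| le_natDegree_of_ne_zero <| by
    have hlast := coeff_ofCoeffs hq c (Fin.last N)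
    rw [Fin.val_last] at hlast
    rwa [hlast]

lemma ofCoeffs_coeff (hq : 1 < q) {u : K[X]} (hu : u ∈ qPolynomials K q)
    (hN : u.natDegree < q ^ N) : ofCoeffs q (fun i : Fin N => u.coeff (q ^ (i : ℕ))) = u := by
  set w := ofCoeffs q (fun i : Fin N => u.coeff (q ^ (i : ℕ))) with hw
  have hwu : w - u ∈ qPolynomials K q :=
    Submodule.sub_mem _ (ofCoeffs_mem_qPolynomials q _) hu
  ext n
  rw [← sub_eq_zero, ← coeff_sub]
  by_cases! hn : ∀ i, n ≠ q ^ i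
  · exact coeff_eq_zero_of_forall_ne_pow hwu hn
  obtain ⟨i, rfl⟩ := hn
  rcases lt_or_ge i N with hi | hi
  · rw [coeff_sub, hw, coeff_ofCoeffs hq _ ⟨i, hi⟩, sub_self]
  · refine (natDegree_lt_pow_iff hq hwu).1 ?_ i hi
    exact (natDegree_sub_le _ _).trans_lt (max_lt (natDegree_ofCoeffs_lt hq _) hN)

/-- The `q`-polynomial `∑_{i ≤ k} aᵢ X ^ q ^ i`, where `a` lists its coefficients up to `k`. -/
noncomputable abbrev truncation (q k : ℕ) (a : ℕ → K) : K[X] :=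
  ofCoeffs q fun i : Fin (k + 1) => a i

lemma sum_range_eq_truncation (q k : ℕ) (a : ℕ → K) :
    ∑ i ∈ Finset.range (k + 1), C (a i) * X ^ q ^ i = truncation q k a :=
  Finset.sum_range _

lemma natDegree_truncation (hq : 1 < q) {k : ℕ} {a : ℕ → K} (ha : a k ≠ 0) :
    (truncation q k a).natDegree = q ^ k :=
  natDegree_ofCoeffs hq ha

lemma truncation_ne_zero (hq : 1 < q) {k : ℕ} {a : ℕ → K} (ha : a k ≠ 0) :
    truncation q k a ≠ 0 := by
  refine ne_zero_of_natDegree_gt (n := 0) ?_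
  rw [natDegree_truncation hq ha]
  positivity

lemma truncation_mem_qPolynomials (q k : ℕ) (a : ℕ → K) : truncation q k a ∈ qPolynomials K q :=
  ofCoeffs_mem_qPolynomials q _

lemma coeff_truncation_pow {p e : ℕ} [ExpChar K p] (hq : 1 < p ^ e) (k : ℕ) (a : ℕ → K)
    (s n : ℕ) : (truncation (p ^ e) k a ^ (p ^ e) ^ s).coeff ((p ^ e) ^ n) =
      if s ≤ n ∧ n ≤ k + s then a (n - s) ^ (p ^ e) ^ s else 0 := by
  have hpow : truncation (p ^ e) k a ^ (p ^ e) ^ s =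
      ∑ i ∈ Finset.range (k + 1), C (a i ^ (p ^ e) ^ s) * X ^ (p ^ e) ^ (i + s) := by
    rw [← sum_range_eq_truncation, ← pow_mul, sum_pow_char_pow]
    simp only [mul_pow, C_pow, pow_add, pow_mul]
  simp only [hpow, finsetSum_coeff, coeff_C_mul, coeff_X_pow, Nat.pow_right_inj hq]
  split_ifs with h
  · rw [Finset.sum_eq_single_of_mem (n - s) (Finset.mem_range.2 (by omega)),
      if_pos (by omega), mul_one]
    exact fun i _ hi => by rw [if_neg (by omega), mul_zero]
  · refine Finset.sum_eq_zero fun i hi => ?_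
    rw [Finset.mem_range] at hi
    rw [if_neg (by omega), mul_zero]

end OfCoeffs

section Subresultant

variable {p e k l m : ℕ} [ExpChar K p]

/-- The indexing of the rows of `Rmat q k l m a b` by the exponents `s` of the powers `f ^ q ^ s`
(left summand) and `g ^ q ^ s` (right summand) they come from; `s` decreases down each block. -/
def rowEquiv (hk : m ≤ k) (hl : m ≤ l) : Fin (l - m) ⊕ Fin (k - m) ≃ Fin (k + l - 2 * m) :=
  (Equiv.sumCongr Fin.revPerm Fin.revPerm).trans
    (finSumFinEquiv.trans (finCongr (by omega)))

lemma Rmat_rowEquiv_inl (hq : 1 < p ^ e) (hk : m ≤ k) (hl : m ≤ l) (a b : ℕ → K)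
    (s : Fin (l - m)) (j : Fin (k + l - 2 * m)) :
    Rmat (p ^ e) k l m a b (rowEquiv hk hl (Sum.inl s)) j =
      (truncation (p ^ e) k a ^ (p ^ e) ^ (s : ℕ)).coeff ((p ^ e) ^ (k + l - m - 1 - j)) := by
  have hrow : (rowEquiv hk hl (Sum.inl s) : ℕ) = l - m - (s + 1) := by simp [rowEquiv]
  have hs := s.2
  have hj := j.2
  rw [Rmat, Matrix.of_apply, hrow, if_pos (by omega), coeff_truncation_pow hq,
    show l - m - 1 - (l - m - (s + 1)) = (s : ℕ) by omega,
    show k + (l - m - (s + 1)) - j = k + l - m - 1 - j - s by omega]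
  exact if_congr (by omega) rfl rfl

lemma Rmat_rowEquiv_inr (hq : 1 < p ^ e) (hk : m ≤ k) (hl : m ≤ l) (a b : ℕ → K)
    (s : Fin (k - m)) (j : Fin (k + l - 2 * m)) :
    Rmat (p ^ e) k l m a b (rowEquiv hk hl (Sum.inr s)) j =
      (truncation (p ^ e) l b ^ (p ^ e) ^ (s : ℕ)).coeff ((p ^ e) ^ (k + l - m - 1 - j)) := by
  have hrow : (rowEquiv hk hl (Sum.inr s) : ℕ) = l - m + (k - m - (s + 1)) := by simp [rowEquiv]
  have hs := s.2
  have hj := j.2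
  rw [Rmat, Matrix.of_apply, hrow, if_neg (by omega), coeff_truncation_pow hq,
    Nat.add_sub_cancel_left, show k - m - 1 - (k - m - (s + 1)) = (s : ℕ) by omega,
    show l + (k - m - (s + 1)) - j = k + l - m - 1 - j - s by omega]
  exact if_congr (by omega) rfl rfl

lemma vecMul_Rmat (hq : 1 < p ^ e) (hk : m ≤ k) (hl : m ≤ l) (a b : ℕ → K)
    (c : Fin (l - m) → K) (d : Fin (k - m) → K) (j : Fin (k + l - 2 * m)) :
    Matrix.vecMul (Sum.elim c d ∘ (rowEquiv hk hl).symm) (Rmat (p ^ e) k l m a b) j =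
      ((ofCoeffs (p ^ e) c).comp (truncation (p ^ e) k a) +
        (ofCoeffs (p ^ e) d).comp (truncation (p ^ e) l b)).coeff
          ((p ^ e) ^ (k + l - m - 1 - j)) := by
  rw [Matrix.vecMul, dotProduct, ← (rowEquiv hk hl).sum_comp, Fintype.sum_sum_type]
  simp only [Function.comp_apply, Equiv.symm_apply_apply, Sum.elim_inl, Sum.elim_inr,
    Rmat_rowEquiv_inl hq, Rmat_rowEquiv_inr hq, ofCoeffs_comp, coeff_add, finsetSum_coeff,
    coeff_C_mul]

lemma natDegree_comp_truncation_lt {q r : ℕ} (hq : 1 < q) {u : K[X]} (hu : u.natDegree < q ^ r)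
    (k : ℕ) (a : ℕ → K) : (u.comp (truncation q k a)).natDegree < q ^ (r + k) := by
  rw [natDegree_comp, pow_add]
  exact Nat.mul_lt_mul_of_lt_of_le hu (natDegree_ofCoeffs_le hq _) (by positivity)

lemma vecMul_Rmat_eq_zero_iff (hq : 1 < p ^ e) (hk : m ≤ k) (hl : m ≤ l) (a b : ℕ → K)
    (c : Fin (l - m) → K) (d : Fin (k - m) → K) :
    Matrix.vecMul (Sum.elim c d ∘ (rowEquiv hk hl).symm) (Rmat (p ^ e) k l m a b) = 0 ↔
      ((ofCoeffs (p ^ e) c).comp (truncation (p ^ e) k a) +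
        (ofCoeffs (p ^ e) d).comp (truncation (p ^ e) l b)).natDegree < (p ^ e) ^ m := by
  set u := ofCoeffs (p ^ e) c with hu
  set v := ofCoeffs (p ^ e) d with hv
  set F := u.comp (truncation (p ^ e) k a) + v.comp (truncation (p ^ e) l b) with hF
  have hmem : F ∈ qPolynomials K (p ^ e) := Submodule.add_mem _
    (comp_mem_qPolynomials hq (ofCoeffs_mem_qPolynomials _ _) (ofCoeffs_mem_qPolynomials _ _))
    (comp_mem_qPolynomials hq (ofCoeffs_mem_qPolynomials _ _) (ofCoeffs_mem_qPolynomials _ _))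
  have hdeg : F.natDegree < (p ^ e) ^ (k + l - m) := by
    have huf := natDegree_comp_truncation_lt hq (natDegree_ofCoeffs_lt hq c) k a
    have hvg := natDegree_comp_truncation_lt hq (natDegree_ofCoeffs_lt hq d) l b
    rw [show l - m + k = k + l - m by omega] at huf
    rw [show k - m + l = k + l - m by omega] at hvg
    exact (natDegree_add_le _ _).trans_lt (max_lt huf hvg)
  rw [natDegree_lt_pow_iff hq hmem, funext_iff]
  simp only [vecMul_Rmat hq, ← hu, ← hv, ← hF, Pi.zero_apply]
  constructor
  · intro h n hn
    rcases lt_or_ge n (k + l - m) with hlt | hge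
    · have hn' := h ⟨k + l - m - 1 - n, by omega⟩
      rwa [show k + l - m - 1 - (k + l - m - 1 - n) = n by omega] at hn'
    · exact (natDegree_lt_pow_iff hq hmem).1 hdeg n hge
  · exact fun h j => h _ (by omega)

theorem det_Rmat_eq_zero_iff (hq : 1 < p ^ e) (hk : m ≤ k) (hl : m ≤ l) (a b : ℕ → K) :
    (Rmat (p ^ e) k l m a b).det = 0 ↔
      ∃ u ∈ qPolynomials K (p ^ e), ∃ v ∈ qPolynomials K (p ^ e), (u ≠ 0 ∨ v ≠ 0) ∧
        u.natDegree < (p ^ e) ^ (l - m) ∧ v.natDegree < (p ^ e) ^ (k - m) ∧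
        (u.comp (truncation (p ^ e) k a) + v.comp (truncation (p ^ e) l b)).natDegree <
          (p ^ e) ^ m := by
  rw [← Matrix.exists_vecMul_eq_zero_iff]
  constructor
  · rintro ⟨x, hx0, hx⟩
    obtain ⟨c, d, rfl⟩ : ∃ c d, x = Sum.elim c d ∘ (rowEquiv hk hl).symm :=
      ⟨x ∘ rowEquiv hk hl ∘ Sum.inl, x ∘ rowEquiv hk hl ∘ Sum.inr, by
        rw [Equiv.eq_comp_symm, ← Sum.elim_comp_inl_inr (x ∘ rowEquiv hk hl)]; rfl⟩
    refine ⟨ofCoeffs _ c, ofCoeffs_mem_qPolynomials _ c, ofCoeffs _ d,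
      ofCoeffs_mem_qPolynomials _ d, ?_, natDegree_ofCoeffs_lt hq c, natDegree_ofCoeffs_lt hq d,
      (vecMul_Rmat_eq_zero_iff hq hk hl a b c d).1 hx⟩
    rw [Ne, Ne, ofCoeffs_eq_zero_iff hq, ofCoeffs_eq_zero_iff hq]
    by_contra! hcd
    exact hx0 (by rw [hcd.1, hcd.2, Sum.elim_zero_zero, Pi.zero_comp])
  · rintro ⟨u, hu, v, hv, huv0, hud, hvd, hdeg⟩
    rw [← ofCoeffs_coeff hq hu hud, ← ofCoeffs_coeff hq hv hvd] at hdeg huv0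
    refine ⟨_, fun hx => ?_, (vecMul_Rmat_eq_zero_iff hq hk hl a b _ _).2 hdeg⟩
    rw [Equiv.comp_symm_eq, Pi.zero_comp, ← Sum.elim_zero_zero, Sum.elim_eq_iff] at hx
    rw [Ne, Ne, ofCoeffs_eq_zero_iff hq, ofCoeffs_eq_zero_iff hq] at huv0
    tauto

variable [DecidableEq K[X]] {a : ℕ → K}

theorem det_Rmat_eq_zero_of_lt (hq : 1 < p ^ e) (ha : a k ≠ 0) (b : ℕ → K) (hk : m ≤ k)
    (hl : m ≤ l) (hm : (p ^ e) ^ m < (EuclideanDomain.gcd (truncation (p ^ e) k a)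
      (truncation (p ^ e) l b)).natDegree) :
    (Rmat (p ^ e) k l m a b).det = 0 := by
  obtain ⟨u, hu, v, hv, hv0, huv, hdeg⟩ := exists_comp_eq_comp hq
    (truncation_mem_qPolynomials _ k a) (truncation_ne_zero hq ha)
    (truncation_mem_qPolynomials _ l b)
  have hvd : v.natDegree < (p ^ e) ^ (k - m) := by
    refine Nat.lt_of_mul_lt_mul_right (a := (p ^ e) ^ m) ?_
    rw [← pow_add, Nat.sub_add_cancel hk, ← natDegree_truncation hq ha, ← hdeg]
    exact Nat.mul_lt_mul_of_pos_left hm (natDegree_pos hq hv hv0)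
  have hud : u.natDegree < (p ^ e) ^ (l - m) := by
    refine Nat.lt_of_mul_lt_mul_right (a := (p ^ e) ^ k) ?_
    rw [← pow_add, show l - m + k = k - m + l by omega,
      ← natDegree_truncation hq ha, ← natDegree_comp, huv]
    exact natDegree_comp_truncation_lt hq hvd l b
  refine (det_Rmat_eq_zero_iff hq hk hl a b).2
    ⟨u, hu, -v, Submodule.neg_mem _ hv, Or.inr (neg_ne_zero.2 hv0), hud, ?_, ?_⟩
  · rwa [natDegree_neg]
  · rw [neg_comp, huv, add_neg_cancel, natDegree_zero]
    positivity

theorem det_Rmat_ne_zero (hq : 1 < p ^ e) (ha : a k ≠ 0) (b : ℕ → K) (hk : m ≤ k) (hl : m ≤ l)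
    (hm : (EuclideanDomain.gcd (truncation (p ^ e) k a)
      (truncation (p ^ e) l b)).natDegree = (p ^ e) ^ m) :
    (Rmat (p ^ e) k l m a b).det ≠ 0 := by
  rw [Ne, det_Rmat_eq_zero_iff hq hk hl]
  rintro ⟨u, hu, v, hv, huv0, -, hvd, hdeg⟩
  have hfmem := truncation_mem_qPolynomials (p ^ e) k a
  have hgmem := truncation_mem_qPolynomials (p ^ e) l b
  have hfd := natDegree_truncation hq ha
  have hf0 := truncation_ne_zero hq ha
  set f := truncation (p ^ e) k a
  set g := truncation (p ^ e) l b
  have hgcd : EuclideanDomain.gcd f g ∣ u.comp f + v.comp g :=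
    dvd_add ((EuclideanDomain.gcd_dvd_left f g).trans (dvd_comp hq hu f))
      ((EuclideanDomain.gcd_dvd_right f g).trans (dvd_comp hq hv g))
  have hzero : u.comp f + v.comp g = 0 := eq_zero_of_dvd_of_natDegree_lt hgcd (hm ▸ hdeg)
  have hv0 : v ≠ 0 := by
    rintro rfl
    rw [zero_comp, add_zero] at hzero
    exact comp_ne_zero hq hfmem (huv0.resolve_right (not_not.2 rfl)) hf0 hzero
  have hle : f.natDegree ≤ v.natDegree * (EuclideanDomain.gcd f g).natDegree :=
    natDegree_le_mul_natDegree_gcd hq hfmem hf0 hgmem (Submodule.neg_mem _ hu) hv hv0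
      (by rw [neg_comp, neg_eq_of_add_eq_zero_right hzero])
  rw [hfd, hm] at hle
  refine hle.not_gt ?_
  calc v.natDegree * (p ^ e) ^ m < (p ^ e) ^ (k - m) * (p ^ e) ^ m :=
        Nat.mul_lt_mul_of_pos_right hvd (by positivity)
    _ = (p ^ e) ^ k := by rw [← pow_add, Nat.sub_add_cancel hk]

end Subresultant

end QPolynomial

open QPolynomial in
theorem stmt_1_general {K : Type*} [Field K] [DecidableEq K[X]] {p e k l μ : ℕ} [ExpChar K p]
    (hq : 1 < p ^ e) (a b : ℕ → K) (ha : a k ≠ 0) (hμ : μ ≤ min k l) :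
    (EuclideanDomain.gcd
        (∑ i ∈ Finset.range (k + 1), C (a i) * X ^ (p ^ e) ^ i)
        (∑ i ∈ Finset.range (l + 1), C (b i) * X ^ (p ^ e) ^ i)).natDegree = (p ^ e) ^ μ ↔
      (∀ m, m < μ → (Rmat (p ^ e) k l m a b).det = 0) ∧
        (Rmat (p ^ e) k l μ a b).det ≠ 0 := by
  obtain ⟨hk, hl⟩ := le_min_iff.1 hμ
  rw [sum_range_eq_truncation, sum_range_eq_truncation]
  obtain ⟨d, hd⟩ := exists_natDegree_gcd_eq_pow hq (truncation_mem_qPolynomials _ k a)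
    (truncation_ne_zero hq ha) (truncation_mem_qPolynomials _ l b)
  have hlow (m : ℕ) (hmd : m < d) (hmμ : m ≤ μ) : (Rmat (p ^ e) k l m a b).det = 0 :=
    det_Rmat_eq_zero_of_lt hq ha b (hmμ.trans hk) (hmμ.trans hl)
      (hd ▸ Nat.pow_lt_pow_right hq hmd)
  have htop (hdμ : d ≤ μ) : (Rmat (p ^ e) k l d a b).det ≠ 0 :=
    det_Rmat_ne_zero hq ha b (hdμ.trans hk) (hdμ.trans hl) hd
  rw [hd, Nat.pow_right_inj hq]
  constructor
  · rintro rfl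
    exact ⟨fun m hm => hlow m hm hm.le, htop le_rfl⟩
  · rintro ⟨hzero, hne⟩
    rcases lt_trichotomy d μ with hlt | heq | hgt
    · exact absurd (hzero d hlt) (htop hlt.le)
    · exact heq
    · exact absurd (hlow μ hgt le_rfl) hne

/-- Theorem: for `q`-polynomials `f, g` over the algebraic closure of `F_q` with nonzero
leading coefficients, and `0 ≤ μ ≤ min{k,l}`: `deg gcd(f,g) = q^μ` iff
`det R_{0,q}(f,g) = ⋯ = det R_{μ-1,q}(f,g) = 0` and `det R_{μ,q}(f,g) ≠ 0`. -/
theorem stmt_1 (p e q k l μ : ℕ) [Fact p.Prime] (he : 0 < e) (hq : q = p ^ e)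
    [DecidableEq (Polynomial (AlgebraicClosure (ZMod p)))]
    (a b : ℕ → AlgebraicClosure (ZMod p)) (ha : a k ≠ 0) (hb : b l ≠ 0)
    (hμ : μ ≤ min k l) :
    (EuclideanDomain.gcd
        (∑ i ∈ Finset.range (k + 1), C (a i) * X ^ q ^ i)
        (∑ i ∈ Finset.range (l + 1), C (b i) * X ^ q ^ i)).natDegree = q ^ μ ↔
      (∀ m, m < μ → (Rmat q k l m a b).det = 0) ∧ (Rmat q k l μ a b).det ≠ 0 := by
  subst hq
  exact stmt_1_general (Nat.one_lt_pow he.ne' (Fact.out : p.Prime).one_lt) a b ha hμ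
end

section
/- Let q be a prime power, let f(x) = Σ_{i=0}^{k} a_i x^{q^i} and g(x) = Σ_{i=0}^{l} b_i x^{q^i} be q-polynomials over the algebraic closure K of F_q with a_k b_l ≠ 0, let q^μ = deg gcd(f,g), and let 0 ≤ m ≤ μ. Consider q-polynomials c(x) = Σ_{i=0}^{k−m} c_i x^{q^i} and d(x) = Σ_{i=0}^{l−m} d_i x^{q^i} over K with prescribed leading coefficients c_{k−m} = a_k^{q^{l−m}} and d_{l−m} = b_l^{q^{k−m}}, and the remaining coefficients c_0,…,c_{k−m−1}, d_0,…,d_{l−m−1} regarded as unknowns. Then the set of tuples (c_0,…,c_{k−m−1}, d_0,…,d_{l−m−1}) ∈ K^{k+l−2m} for which d ∘ f − c ∘ g = 0 is a (μ−m)-dimensional affine K-subspace of K^{k+l−2m}. -/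
open Polynomial

/-!
Under addition and composition the `q`-polynomials over `K` form a ring with right division.
Hence the left ideal generated by `f` and `g` has a single generator `h`. Since `u ∘ h` is
divisible by `h` for every `q`-polynomial `u`, this `h` is also a gcd of `f` and `g` in `K[X]`, so
`f = f' ∘ h` and `g = g' ∘ h` with `f'`, `g'` of degrees `q ^ (k - μ)` and `q ^ (l - μ)`, and
`s ∘ f' + t ∘ g' = X` for some `s`, `t`. Composition on the right with `h` is injective, so `f'`
and `g'` may replace `f` and `g`.

Counting dimensions gives `d₀ ≠ 0` of degree at most `q ^ (l - μ)` with `d₀ ∘ f' = c₀ ∘ g'`. Given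
`w`, replacing the left factor of `f'` in `w = (w ∘ s) ∘ f' + (w ∘ t) ∘ g'` by its remainder modulo
`d₀` bounds its degree, and the degree of `w` then bounds the left factor of `g'`. So
`(c, d) ↦ d ∘ f' - c ∘ g'`, with `c` of degree `< q ^ (k - m)` and `d` of degree `< q ^ (l - m)`,
is onto the `q`-polynomials of degree `< q ^ (k + l - m - μ)`, and its kernel has dimension
`(k - m) + (l - m) - (k + l - m - μ) = μ - m`. The prescribed leading terms of `c` and `d` make the
top terms of `d ∘ f` and `c ∘ g` cancel, so they contribute an element of the range, and the
solutions form a translate of the kernel.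
-/

lemma exists_affineSubspace_eq_preimage_singleton {k V W : Type*} [Ring k] [AddCommGroup V]
    [Module k V] [AddCommGroup W] [Module k W] (φ : V →ₗ[k] W) {w : W}
    (hw : w ∈ LinearMap.range φ) :
    ∃ S : AffineSubspace k V, (S : Set V) = φ ⁻¹' {w} ∧ (S : Set V).Nonempty ∧
      S.direction = LinearMap.ker φ := by
  obtain ⟨v₀, rfl⟩ := hw
  refine ⟨AffineSubspace.mk' v₀ (LinearMap.ker φ), ?_, ⟨v₀, AffineSubspace.self_mem_mk' _ _⟩,
    AffineSubspace.direction_mk' _ _⟩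
  ext v
  simp [AffineSubspace.mem_mk', sub_eq_zero]

/-- The space of `q`-polynomials `∑ i, a i * X ^ q ^ i` over `R`. -/
noncomputable def QPoly (R : Type*) [CommSemiring R] (q : ℕ) : Submodule R R[X] :=
  Submodule.span R (Set.range fun i : ℕ => (X : R[X]) ^ q ^ i)

namespace QPoly

section CommSemiring

variable {R : Type*} [CommSemiring R] {q : ℕ}

lemma X_pow_mem (q i : ℕ) : (X : R[X]) ^ q ^ i ∈ QPoly R q :=
  Submodule.subset_span ⟨i, rfl⟩

lemma X_mem (q : ℕ) : (X : R[X]) ∈ QPoly R q := by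
  simpa using X_pow_mem (R := R) q 0

lemma C_mul_X_pow_mem (q i : ℕ) (c : R) : C c * X ^ q ^ i ∈ QPoly R q := by
  rw [← smul_eq_C_mul]
  exact Submodule.smul_mem _ _ (X_pow_mem q i)

lemma coeff_eq_zero {u : R[X]} (hu : u ∈ QPoly R q) {j : ℕ} (hj : ∀ i, j ≠ q ^ i) :
    u.coeff j = 0 := by
  induction hu using Submodule.span_induction with
  | mem _ hx =>
    obtain ⟨i, rfl⟩ := hx
    simp [coeff_X_pow, hj i]
  | zero => simp
  | add _ _ _ _ hx hy => simp [hx, hy]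
  | smul _ _ _ hx => simp [hx]

lemma exists_natDegree_eq_pow {u : R[X]} (hu : u ∈ QPoly R q) (hu0 : u ≠ 0) :
    ∃ n, u.natDegree = q ^ n := by
  by_contra! h
  exact hu0 (leadingCoeff_eq_zero.1 (coeff_eq_zero hu h))

lemma dvd_comp (hq : 0 < q) {u : R[X]} (hu : u ∈ QPoly R q) (h : R[X]) : h ∣ u.comp h := by
  obtain ⟨w, rfl⟩ : X ∣ u := X_dvd_iff.2 (coeff_eq_zero hu fun i => (Nat.pow_pos hq).ne)
  simp

lemma natDegree_comp_lt_iff [NoZeroDivisors R] (hq : 0 < q) {f : R[X]} {k : ℕ}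
    (hf : f.natDegree = q ^ k) (u : R[X]) (n : ℕ) :
    (u.comp f).natDegree < q ^ (n + k) ↔ u.natDegree < q ^ n := by
  rw [natDegree_comp, hf, pow_add, Nat.mul_lt_mul_right (Nat.pow_pos hq)]

lemma natDegree_right_factor [NoZeroDivisors R] (hq : 1 < q) {u h : R[X]} (hu : u ∈ QPoly R q)
    {k μ : ℕ} (hh : h.natDegree = q ^ μ) (huh : (u.comp h).natDegree = q ^ k) :
    μ ≤ k ∧ u.natDegree = q ^ (k - μ) := by
  have hu0 : u ≠ 0 := by
    rintro rfl
    simpa using huh.trans_gt (Nat.pow_pos (by lia))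
  obtain ⟨n, hn⟩ := exists_natDegree_eq_pow hu hu0
  rw [natDegree_comp, hn, hh, ← pow_add] at huh
  obtain rfl := Nat.pow_right_injective hq huh
  simp [hn]

lemma le_of_dvd_of_natDegree_eq_pow [NoZeroDivisors R] (hq : 1 < q) {f g : R[X]} {k l : ℕ}
    (hfk : f.natDegree = q ^ k) (hgl : g.natDegree = q ^ l) (hgf : g ∣ f) : l ≤ k := by
  have hf0 : f ≠ 0 := ne_zero_of_natDegree_gt (hfk ▸ Nat.pow_pos (by lia))
  exact (Nat.pow_le_pow_iff_right hq).1 (hgl ▸ hfk ▸ natDegree_le_of_dvd hgf hf0)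

/-- The linear map sending a coefficient vector `v` of length `n` to the `q`-polynomial
`∑ i < n, v i * X ^ q ^ i`. -/
noncomputable def ofCoeffs (R : Type*) [CommSemiring R] (q n : ℕ) : (Fin n → R) →ₗ[R] R[X] where
  toFun v := ∑ i : Fin n, C (v i) * X ^ q ^ i.val
  map_add' u v := by simp [add_mul, Finset.sum_add_distrib]
  map_smul' c v := by simp [Finset.smul_sum, smul_eq_C_mul, mul_assoc]

lemma ofCoeffs_apply (q n : ℕ) (v : Fin n → R) :
    ofCoeffs R q n v = ∑ i : Fin n, C (v i) * X ^ q ^ i.val := rfl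

lemma ofCoeffs_mem (q n : ℕ) (v : Fin n → R) : ofCoeffs R q n v ∈ QPoly R q := by
  rw [ofCoeffs_apply]
  exact Submodule.sum_mem _ fun i _ => C_mul_X_pow_mem q i.val (v i)

lemma sum_range_eq_ofCoeffs (q n : ℕ) (a : ℕ → R) :
    ∑ i ∈ Finset.range n, C (a i) * X ^ q ^ i = ofCoeffs R q n fun i => a i :=
  Finset.sum_range _

lemma coeff_ofCoeffs (hq : 1 < q) {n : ℕ} (v : Fin n → R) (j : ℕ) :
    (ofCoeffs R q n v).coeff (q ^ j) = if h : j < n then v ⟨j, h⟩ else 0 := by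
  simp only [ofCoeffs_apply, finsetSum_coeff, coeff_C_mul_X_pow,
    (Nat.pow_right_injective hq).eq_iff]
  split_ifs with h
  · rw [Fintype.sum_eq_single ⟨j, h⟩ fun i hi => if_neg fun hji => hi (Fin.ext hji.symm),
      if_pos rfl]
  · exact Finset.sum_eq_zero fun i _ => if_neg (by lia)

lemma ofCoeffs_injective (hq : 1 < q) (n : ℕ) : Function.Injective (ofCoeffs R q n) := by
  intro u v huv
  ext i
  simpa [coeff_ofCoeffs hq] using congrArg (coeff · (q ^ i.val)) huv

lemma natDegree_ofCoeffs_lt (hq : 1 < q) (n : ℕ) (v : Fin n → R) :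
    (ofCoeffs R q n v).natDegree < q ^ n := by
  by_cases hv : ofCoeffs R q n v = 0
  · simpa [hv] using Nat.pow_pos (by lia)
  obtain ⟨j, hj⟩ := exists_natDegree_eq_pow (ofCoeffs_mem q n v) hv
  have hcoeff : (ofCoeffs R q n v).coeff (q ^ j) ≠ 0 := by
    rw [← hj]
    exact leadingCoeff_ne_zero.2 hv
  have hjn : j < n := by
    by_contra h
    exact hcoeff (by rw [coeff_ofCoeffs hq, dif_neg h])
  exact hj ▸ Nat.pow_lt_pow_right hq hjn

lemma mem_range_ofCoeffs (hq : 1 < q) {n : ℕ} {u : R[X]} :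
    u ∈ LinearMap.range (ofCoeffs R q n) ↔ u ∈ QPoly R q ∧ u.natDegree < q ^ n := by
  constructor
  · rintro ⟨v, rfl⟩
    exact ⟨ofCoeffs_mem q n v, natDegree_ofCoeffs_lt hq n v⟩
  · rintro ⟨hu, hdeg⟩
    refine ⟨fun i => u.coeff (q ^ i.val), Polynomial.ext fun j => ?_⟩
    by_cases hj : ∃ i, j = q ^ i
    · obtain ⟨i, rfl⟩ := hj
      rw [coeff_ofCoeffs hq]
      split_ifs with hi
      · rfl
      · have hni : q ^ n ≤ q ^ i := Nat.pow_le_pow_right (by lia) (not_lt.1 hi)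
        exact (coeff_eq_zero_of_natDegree_lt (hdeg.trans_le hni)).symm
    · push Not at hj
      rw [coeff_eq_zero hu hj, coeff_eq_zero (ofCoeffs_mem q n _) hj]

lemma natDegree_ofCoeffs (hq : 1 < q) (k : ℕ) {a : ℕ → R} (ha : a k ≠ 0) :
    (ofCoeffs R q (k + 1) fun i => a i).natDegree = q ^ k := by
  have hcoeff : (ofCoeffs R q (k + 1) fun i => a i).coeff (q ^ k) ≠ 0 := by
    simpa [coeff_ofCoeffs hq] using ha
  obtain ⟨j, hj⟩ := exists_natDegree_eq_pow (ofCoeffs_mem q (k + 1) fun i => a i)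
    (fun h => hcoeff (by simp [h]))
  have hkj : k ≤ j := (Nat.pow_le_pow_iff_right hq).1 (hj ▸ le_natDegree_of_ne_zero hcoeff)
  have hjk : j < k + 1 := (Nat.pow_lt_pow_iff_right hq).1 (hj ▸ natDegree_ofCoeffs_lt hq _ _)
  rw [hj, show j = k by lia]

lemma leadingCoeff_ofCoeffs (hq : 1 < q) (k : ℕ) {a : ℕ → R} (ha : a k ≠ 0) :
    (ofCoeffs R q (k + 1) fun i => a i).leadingCoeff = a k := by
  rw [leadingCoeff, natDegree_ofCoeffs hq k ha, coeff_ofCoeffs hq, dif_pos k.lt_succ_self]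

section ExpChar

variable {p e : ℕ} [ExpChar R p]

lemma add_pow_pow (hqp : q = p ^ e) (i : ℕ) (u v : R[X]) :
    (u + v) ^ q ^ i = u ^ q ^ i + v ^ q ^ i := by
  rw [hqp, ← pow_mul, add_pow_expChar_pow]

lemma pow_mem (hqp : q = p ^ e) (i : ℕ) {u : R[X]} (hu : u ∈ QPoly R q) :
    u ^ q ^ i ∈ QPoly R q := by
  induction hu using Submodule.span_induction with
  | mem _ hx =>
    obtain ⟨j, rfl⟩ := hx
    simpa only [← pow_mul, ← pow_add] using X_pow_mem q (j + i)
  | zero =>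
    rw [hqp, ← pow_mul, zero_pow (Nat.pow_pos (expChar_pos R p)).ne']
    exact zero_mem _
  | add _ _ _ _ hx hy =>
    rw [add_pow_pow hqp]
    exact add_mem hx hy
  | smul _ _ _ hx =>
    rw [_root_.smul_pow]
    exact Submodule.smul_mem _ _ hx

lemma comp_mem (hqp : q = p ^ e) {u f : R[X]} (hu : u ∈ QPoly R q)
    (hf : f ∈ QPoly R q) : u.comp f ∈ QPoly R q := by
  induction hu using Submodule.span_induction with
  | mem _ hx =>
    obtain ⟨j, rfl⟩ := hx
    simpa using pow_mem hqp j hf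
  | zero => simp
  | add _ _ _ _ hx hy =>
    rw [add_comp]
    exact add_mem hx hy
  | smul _ _ _ hx =>
    rw [smul_comp]
    exact Submodule.smul_mem _ _ hx

lemma comp_add (hqp : q = p ^ e) {u : R[X]} (hu : u ∈ QPoly R q) (f g : R[X]) :
    u.comp (f + g) = u.comp f + u.comp g := by
  induction hu using Submodule.span_induction with
  | mem _ hx =>
    obtain ⟨j, rfl⟩ := hx
    simpa using add_pow_pow hqp j f g
  | zero => simp
  | add _ _ _ _ hx hy => rw [add_comp, add_comp, add_comp, hx, hy, add_add_add_comm]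
  | smul _ _ _ hx => rw [smul_comp, smul_comp, smul_comp, hx, smul_add]

end ExpChar

end CommSemiring

section CommRing

variable {R : Type*} [CommRing R]

lemma natDegree_sub_lt {u v : R[X]} (hdeg : u.natDegree = v.natDegree) (hpos : 0 < u.natDegree)
    (hlead : u.leadingCoeff = v.leadingCoeff) : (u - v).natDegree < u.natDegree := by
  by_cases huv : u - v = 0
  · simpa [huv] using hpos
  have hu0 : u ≠ 0 := ne_zero_of_natDegree_gt hpos
  have hv0 : v ≠ 0 := ne_zero_of_natDegree_gt (hdeg ▸ hpos)
  have hdeg' : u.degree = v.degree := by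
    rw [degree_eq_natDegree hu0, degree_eq_natDegree hv0, hdeg]
  exact natDegree_lt_natDegree huv (degree_sub_lt_left hdeg' hu0 hlead)

lemma comp_left_injective [NoZeroDivisors R] {h : R[X]} (hh : h.natDegree ≠ 0) :
    Function.Injective fun u : R[X] => u.comp h := by
  intro u v huv
  have hzero : (u - v).comp h = 0 := by simpa [sub_eq_zero] using huv
  rcases comp_eq_zero_iff.1 hzero with h0 | ⟨-, hC⟩
  · exact sub_eq_zero.1 h0
  · exact absurd (hC ▸ natDegree_C _) hh

/-- The linear map `(c, d) ↦ d ∘ f - c ∘ g` on coefficient vectors, where `c` has `n₁` coefficients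
(the left summand) and `d` has `n₂` (the right summand). It is the analogue of the Sylvester map
for composition, and its kernel consists of the relations `d ∘ f = c ∘ g`. -/
noncomputable def syzygyMap (q : ℕ) (f g : R[X]) (n₁ n₂ : ℕ) :
    (Fin n₁ ⊕ Fin n₂ → R) →ₗ[R] R[X] where
  toFun v := (ofCoeffs R q n₂ fun i => v (.inr i)).comp f -
    (ofCoeffs R q n₁ fun i => v (.inl i)).comp g
  map_add' u v := by
    simp only [ofCoeffs_apply, Pi.add_apply, C_add, add_mul, Finset.sum_add_distrib, add_comp]
    ring
  map_smul' c v := by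
    simp [ofCoeffs_apply, mul_assoc, ← Finset.mul_sum, smul_eq_C_mul, mul_sub]

lemma syzygyMap_apply (q : ℕ) (f g : R[X]) (n₁ n₂ : ℕ) (v : Fin n₁ ⊕ Fin n₂ → R) :
    syzygyMap q f g n₁ n₂ v = (ofCoeffs R q n₂ fun i => v (.inr i)).comp f -
      (ofCoeffs R q n₁ fun i => v (.inl i)).comp g := rfl

lemma syzygyMap_comp (q : ℕ) (f g h : R[X]) (n₁ n₂ : ℕ) (v : Fin n₁ ⊕ Fin n₂ → R) :
    syzygyMap q (f.comp h) (g.comp h) n₁ n₂ v = (syzygyMap q f g n₁ n₂ v).comp h := by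
  simp only [syzygyMap_apply, sub_comp, comp_assoc]

lemma ker_syzygyMap_comp [NoZeroDivisors R] (q : ℕ) (f g : R[X]) {h : R[X]}
    (hh : h.natDegree ≠ 0) (n₁ n₂ : ℕ) :
    LinearMap.ker (syzygyMap q (f.comp h) (g.comp h) n₁ n₂) =
      LinearMap.ker (syzygyMap q f g n₁ n₂) := by
  ext v
  rw [LinearMap.mem_ker, LinearMap.mem_ker, syzygyMap_comp]
  exact (comp_left_injective hh).eq_iff' zero_comp

variable {p e q k l n₁ n₂ N : ℕ} [ExpChar R p] {f g : R[X]}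

lemma range_syzygyMap_le [NoZeroDivisors R] (hqp : q = p ^ e) (hq : 1 < q) (hf : f ∈ QPoly R q)
    (hg : g ∈ QPoly R q) (hfk : f.natDegree = q ^ k) (hgl : g.natDegree = q ^ l)
    (h₁ : n₁ + l = N) (h₂ : n₂ + k = N) :
    LinearMap.range (syzygyMap q f g n₁ n₂) ≤ LinearMap.range (ofCoeffs R q N) := by
  rintro _ ⟨v, rfl⟩
  refine (mem_range_ofCoeffs hq).2 ⟨sub_mem (comp_mem hqp (ofCoeffs_mem _ _ _) hf)
    (comp_mem hqp (ofCoeffs_mem _ _ _) hg), (natDegree_sub_le _ _).trans_lt (max_lt ?_ ?_)⟩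
  · exact h₂ ▸ (natDegree_comp_lt_iff hq.pos hfk _ _).2 (natDegree_ofCoeffs_lt hq _ _)
  · exact h₁ ▸ (natDegree_comp_lt_iff hq.pos hgl _ _).2 (natDegree_ofCoeffs_lt hq _ _)

/-- `f` and `g` generate the unit left ideal of the ring of `q`-polynomials under composition,
whose identity is `X`. -/
def IsRightCoprime (q : ℕ) (f g : R[X]) : Prop :=
  ∃ s ∈ QPoly R q, ∃ t ∈ QPoly R q, s.comp f + t.comp g = X

end CommRing

section Field

variable {K : Type*} [Field K] {p e q k l n₁ n₂ N : ℕ} {f g : K[X]}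

lemma exists_natDegree_sub_comp_lt (hq : 1 < q) {w : K[X]} (hw : w ∈ QPoly K q)
    (hf : f ∈ QPoly K q) (hf0 : f ≠ 0) (hfw : f.natDegree ≤ w.natDegree) :
    ∃ u ∈ QPoly K q, (w - u.comp f).natDegree < w.natDegree := by
  obtain ⟨k, hk⟩ := exists_natDegree_eq_pow hf hf0
  have hfpos : 0 < f.natDegree := hk ▸ Nat.pow_pos (by lia)
  have hw0 : w ≠ 0 := ne_zero_of_natDegree_gt (hfpos.trans_le hfw)
  obtain ⟨j, hj⟩ := exists_natDegree_eq_pow hw hw0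
  have hkj : k ≤ j := (Nat.pow_le_pow_iff_right hq).1 (hk ▸ hj ▸ hfw)
  have hlead0 : f.leadingCoeff ^ q ^ (j - k) ≠ 0 := pow_ne_zero _ (leadingCoeff_ne_zero.2 hf0)
  set c := w.leadingCoeff / f.leadingCoeff ^ q ^ (j - k) with hc
  have hc0 : c ≠ 0 := div_ne_zero (leadingCoeff_ne_zero.2 hw0) hlead0
  refine ⟨C c * X ^ q ^ (j - k), C_mul_X_pow_mem q _ c,
    natDegree_sub_lt ?_ (hfpos.trans_le hfw) ?_⟩
  · rw [natDegree_comp, natDegree_C_mul_X_pow _ _ hc0, hj, hk, ← pow_add, Nat.sub_add_cancel hkj]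
  · rw [leadingCoeff_comp hfpos.ne', leadingCoeff_C_mul_X_pow, natDegree_C_mul_X_pow _ _ hc0, hc,
      div_mul_cancel₀ _ hlead0]

variable [ExpChar K p]

lemma exists_comp_remainder (hqp : q = p ^ e) (hq : 1 < q) (hf : f ∈ QPoly K q) (hf0 : f ≠ 0)
    {w : K[X]} (hw : w ∈ QPoly K q) :
    ∃ u ∈ QPoly K q, (w - u.comp f).natDegree < f.natDegree := by
  induction hn : w.natDegree using Nat.strong_induction_on generalizing w with
  | _ n ih =>
    obtain hlt | hle := lt_or_ge w.natDegree f.natDegree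
    · exact ⟨0, zero_mem _, by simpa using hlt⟩
    obtain ⟨u₁, hu₁, hlt⟩ := exists_natDegree_sub_comp_lt hq hw hf hf0 hle
    obtain ⟨u₂, hu₂, hrem⟩ :=
      ih _ (hn ▸ hlt) (sub_mem hw (comp_mem hqp hu₁ hf)) rfl
    exact ⟨u₁ + u₂, add_mem hu₁ hu₂, by rwa [add_comp, ← sub_sub]⟩

lemma exists_left_ideal_generator (hqp : q = p ^ e) (hq : 1 < q) {J : Submodule K K[X]}
    (hJ : J ≤ QPoly K q) (hcomp : ∀ u ∈ QPoly K q, ∀ w ∈ J, u.comp w ∈ J) :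
    ∃ h ∈ J, ∀ w ∈ J, ∃ u ∈ QPoly K q, w = u.comp h := by
  by_cases hbot : J = ⊥
  · exact ⟨0, zero_mem J, fun w hw => ⟨0, zero_mem _, by simpa [hbot] using hw⟩⟩
  obtain ⟨h, ⟨hhJ, hh0⟩, hmin⟩ := exists_minimalFor_of_wellFoundedLT
    (fun w => w ∈ J ∧ w ≠ 0) natDegree (Submodule.exists_mem_ne_zero_of_ne_bot hbot)
  refine ⟨h, hhJ, fun w hw => ?_⟩
  obtain ⟨u, hu, hlt⟩ := exists_comp_remainder hqp hq (hJ hhJ) hh0 (hJ hw)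
  have hrem : w - u.comp h ∈ J := sub_mem hw (hcomp u hu h hhJ)
  refine ⟨u, hu, sub_eq_zero.1 (by_contra fun hne => ?_)⟩
  exact hlt.not_ge (hmin ⟨hrem, hne⟩ hlt.le)

lemma exists_right_bezout (hqp : q = p ^ e) (hq : 1 < q) (hf : f ∈ QPoly K q)
    (hg : g ∈ QPoly K q) :
    ∃ h, (∃ f' ∈ QPoly K q, f = f'.comp h) ∧ (∃ g' ∈ QPoly K q, g = g'.comp h) ∧
      ∃ s ∈ QPoly K q, ∃ t ∈ QPoly K q, s.comp f + t.comp g = h := by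
  let J : Submodule K K[X] :=
    (QPoly K q).map (aeval f).toLinearMap ⊔ (QPoly K q).map (aeval g).toLinearMap
  have mem_J (w : K[X]) :
      w ∈ J ↔ ∃ s ∈ QPoly K q, ∃ t ∈ QPoly K q, s.comp f + t.comp g = w := by
    simp [J, Submodule.mem_sup, comp_eq_aeval]
  have hJ : J ≤ QPoly K q := by
    intro w hw
    obtain ⟨s, hs, t, ht, rfl⟩ := (mem_J w).1 hw
    exact add_mem (comp_mem hqp hs hf) (comp_mem hqp ht hg)
  have hcomp (u) (hu : u ∈ QPoly K q) (w) (hw : w ∈ J) : u.comp w ∈ J := by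
    obtain ⟨s, hs, t, ht, rfl⟩ := (mem_J w).1 hw
    refine (mem_J _).2 ⟨u.comp s, comp_mem hqp hu hs, u.comp t, comp_mem hqp hu ht, ?_⟩
    rw [comp_add hqp hu, comp_assoc, comp_assoc]
  have hfJ : f ∈ J := (mem_J f).2 ⟨X, X_mem q, 0, zero_mem _, by simp⟩
  have hgJ : g ∈ J := (mem_J g).2 ⟨0, zero_mem _, X, X_mem q, by simp⟩
  obtain ⟨h, hhJ, hgen⟩ := exists_left_ideal_generator hqp hq hJ hcomp
  exact ⟨h, hgen f hfJ, hgen g hgJ, (mem_J h).1 hhJ⟩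

lemma exists_rightCoprime_factorization [DecidableEq K[X]] (hqp : q = p ^ e) (hq : 1 < q)
    (hf : f ∈ QPoly K q) (hg : g ∈ QPoly K q) (hgcd : (EuclideanDomain.gcd f g).natDegree ≠ 0) :
    ∃ h, h.natDegree = (EuclideanDomain.gcd f g).natDegree ∧ ∃ f' ∈ QPoly K q,
      ∃ g' ∈ QPoly K q, f = f'.comp h ∧ g = g'.comp h ∧ IsRightCoprime q f' g' := by
  obtain ⟨h, ⟨f', hf', hff'⟩, ⟨g', hg', hgg'⟩, s, hs, t, ht, hst⟩ :=
    exists_right_bezout hqp hq hf hg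
  have hdvd : h ∣ EuclideanDomain.gcd f g :=
    EuclideanDomain.dvd_gcd (hff' ▸ dvd_comp hq.pos hf' h) (hgg' ▸ dvd_comp hq.pos hg' h)
  have hdvd' : EuclideanDomain.gcd f g ∣ h := hst ▸ dvd_add
    ((EuclideanDomain.gcd_dvd_left f g).trans (dvd_comp hq.pos hs f))
    ((EuclideanDomain.gcd_dvd_right f g).trans (dvd_comp hq.pos ht g))
  have hdeg : h.natDegree = (EuclideanDomain.gcd f g).natDegree :=
    natDegree_eq_natDegree (degree_eq_degree_of_associated (associated_of_dvd_dvd hdvd hdvd'))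
  refine ⟨h, hdeg, f', hf', g', hg', hff', hgg', s, hs, t, ht, ?_⟩
  apply comp_left_injective (hdeg ▸ hgcd)
  simpa only [add_comp, comp_assoc, ← hff', ← hgg', X_comp] using hst

/-- The Ore condition for the ring of `q`-polynomials under composition. -/
lemma exists_comp_eq_comp (hqp : q = p ^ e) (hq : 1 < q) (hf : f ∈ QPoly K q)
    (hg : g ∈ QPoly K q) (hfk : f.natDegree = q ^ k) (hgl : g.natDegree = q ^ l) :
    ∃ d ∈ QPoly K q, d ≠ 0 ∧ d.natDegree ≤ q ^ l ∧ ∃ c ∈ QPoly K q, d.comp f = c.comp g := by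
  have hfin : Module.finrank K (LinearMap.range (syzygyMap q f g (k + 1) (l + 1))) ≤
      k + l + 1 := by
    simpa [LinearMap.finrank_range_of_inj (ofCoeffs_injective hq _)] using
      Submodule.finrank_mono (range_syzygyMap_le (N := k + l + 1) hqp hq hf hg hfk hgl
        (by lia) (by lia))
  have hker : LinearMap.ker (syzygyMap q f g (k + 1) (l + 1)) ≠ ⊥ := by
    intro hbot
    rw [LinearMap.finrank_range_of_inj (LinearMap.ker_eq_bot.1 hbot)] at hfin
    simp only [Module.finrank_fintype_fun_eq_card, Fintype.card_sum, Fintype.card_fin] at hfin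
    lia
  obtain ⟨v, hv, hv0⟩ := Submodule.exists_mem_ne_zero_of_ne_bot hker
  rw [LinearMap.mem_ker, syzygyMap_apply, sub_eq_zero] at hv
  have hd0 : (ofCoeffs K q (l + 1) fun i => v (.inr i)) ≠ 0 := by
    intro hd
    have hc : (ofCoeffs K q (k + 1) fun i => v (.inl i)) = 0 := by
      apply comp_left_injective (h := g) (hgl ▸ (Nat.pow_pos (by lia)).ne')
      simpa [hd] using hv.symm
    rw [map_eq_zero_iff _ (ofCoeffs_injective hq _)] at hc hd
    exact hv0 (funext (Sum.rec (congrFun hc) (congrFun hd)))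
  obtain ⟨j, hj⟩ := exists_natDegree_eq_pow (ofCoeffs_mem _ _ _) hd0
  have hjl : j < l + 1 := (Nat.pow_lt_pow_iff_right hq).1 (hj ▸ natDegree_ofCoeffs_lt hq _ _)
  exact ⟨_, ofCoeffs_mem _ _ _, hd0, hj ▸ Nat.pow_le_pow_right (by lia) (by lia),
    _, ofCoeffs_mem _ _ _, hv⟩

lemma IsRightCoprime.exists_comp_sub_comp_eq (hfg : IsRightCoprime q f g) (hqp : q = p ^ e)
    (hq : 1 < q) (hf : f ∈ QPoly K q) (hg : g ∈ QPoly K q) (hfk : f.natDegree = q ^ k)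
    (hgl : g.natDegree = q ^ l) {w : K[X]} (hw : w ∈ QPoly K q) :
    ∃ d ∈ QPoly K q, d.natDegree < q ^ l ∧ ∃ c ∈ QPoly K q, d.comp f - c.comp g = w := by
  obtain ⟨s, hs, t, ht, hst⟩ := hfg
  obtain ⟨d₀, hd₀, hd₀_ne, hd₀_deg, c₀, hc₀, hsyz⟩ := exists_comp_eq_comp hqp hq hf hg hfk hgl
  have hws := comp_mem hqp hw hs
  obtain ⟨y, hy, hrem⟩ := exists_comp_remainder hqp hq hd₀ hd₀_ne hws
  refine ⟨w.comp s - y.comp d₀, sub_mem hws (comp_mem hqp hy hd₀), hrem.trans_le hd₀_deg,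
    -(y.comp c₀ + w.comp t),
    neg_mem (add_mem (comp_mem hqp hy hc₀) (comp_mem hqp hw ht)), ?_⟩
  calc (w.comp s - y.comp d₀).comp f - (-(y.comp c₀ + w.comp t)).comp g
      = w.comp (s.comp f) + w.comp (t.comp g) + (y.comp (c₀.comp g) - y.comp (d₀.comp f)) := by
        simp only [sub_comp, neg_comp, add_comp, comp_assoc]
        ring
    _ = w.comp (s.comp f + t.comp g) := by rw [hsyz, sub_self, add_zero, comp_add hqp hw]
    _ = w := by rw [hst, comp_X]

lemma IsRightCoprime.range_syzygyMap (hfg : IsRightCoprime q f g) (hqp : q = p ^ e) (hq : 1 < q)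
    (hf : f ∈ QPoly K q) (hg : g ∈ QPoly K q) (hfk : f.natDegree = q ^ k)
    (hgl : g.natDegree = q ^ l) (h₁ : n₁ + l = N) (h₂ : n₂ + k = N) (hN : k + l ≤ N) :
    LinearMap.range (syzygyMap q f g n₁ n₂) = LinearMap.range (ofCoeffs K q N) := by
  refine (range_syzygyMap_le hqp hq hf hg hfk hgl h₁ h₂).antisymm fun w hwN => ?_
  obtain ⟨hw, hwdeg⟩ := (mem_range_ofCoeffs hq).1 hwN
  obtain ⟨d, hd, hdl, c, hc, hdc⟩ := hfg.exists_comp_sub_comp_eq hqp hq hf hg hfk hgl hw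
  have hddeg : d.natDegree < q ^ n₂ := hdl.trans_le (Nat.pow_le_pow_right (by lia) (by lia))
  have hcdeg : c.natDegree < q ^ n₁ := by
    rw [← natDegree_comp_lt_iff hq.pos hgl, h₁, show c.comp g = d.comp f - w by rw [← hdc]; ring]
    refine (natDegree_sub_le _ _).trans_lt (max_lt ?_ hwdeg)
    exact h₂ ▸ (natDegree_comp_lt_iff hq.pos hfk _ _).2 hddeg
  obtain ⟨vd, rfl⟩ := (mem_range_ofCoeffs hq).2 ⟨hd, hddeg⟩
  obtain ⟨vc, rfl⟩ := (mem_range_ofCoeffs hq).2 ⟨hc, hcdeg⟩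
  exact ⟨Sum.elim vc vd, hdc⟩

lemma IsRightCoprime.finrank_ker_syzygyMap (hfg : IsRightCoprime q f g) (hqp : q = p ^ e)
    (hq : 1 < q) (hf : f ∈ QPoly K q) (hg : g ∈ QPoly K q) (hfk : f.natDegree = q ^ k)
    (hgl : g.natDegree = q ^ l) (h₁ : n₁ + l = N) (h₂ : n₂ + k = N) (hN : k + l ≤ N) :
    Module.finrank K (LinearMap.ker (syzygyMap q f g n₁ n₂)) = N - (k + l) := by
  have hrank := LinearMap.finrank_range_add_finrank_ker (syzygyMap q f g n₁ n₂)
  rw [hfg.range_syzygyMap hqp hq hf hg hfk hgl h₁ h₂ hN,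
    LinearMap.finrank_range_of_inj (ofCoeffs_injective hq N)] at hrank
  simp only [Module.finrank_fintype_fun_eq_card, Fintype.card_sum, Fintype.card_fin] at hrank
  lia

lemma IsRightCoprime.comp_sub_comp_mem_range (hfg : IsRightCoprime q f g) (hqp : q = p ^ e)
    (hq : 1 < q) (hf : f ∈ QPoly K q) (hg : g ∈ QPoly K q) (hfk : f.natDegree = q ^ k)
    (hgl : g.natDegree = q ^ l) (h₁ : n₁ + l = N) (h₂ : n₂ + k = N) (hN : k + l ≤ N)
    {h : K[X]} {μ : ℕ} (hhμ : h.natDegree = q ^ μ) {u v : K[X]} (hu : u ∈ QPoly K q)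
    (hv : v ∈ QPoly K q)
    (hdeg : (u.comp (f.comp h) - v.comp (g.comp h)).natDegree < q ^ (N + μ)) :
    u.comp (f.comp h) - v.comp (g.comp h) ∈
      LinearMap.range (syzygyMap q (f.comp h) (g.comp h) n₁ n₂) := by
  rw [← comp_assoc, ← comp_assoc, ← sub_comp] at hdeg ⊢
  obtain ⟨x, hx⟩ : u.comp f - v.comp g ∈ LinearMap.range (syzygyMap q f g n₁ n₂) := by
    rw [hfg.range_syzygyMap hqp hq hf hg hfk hgl h₁ h₂ hN, mem_range_ofCoeffs hq]
    exact ⟨sub_mem (comp_mem hqp hu hf) (comp_mem hqp hv hg),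
      (natDegree_comp_lt_iff hq.pos hhμ _ _).1 hdeg⟩
  exact ⟨x, by rw [syzygyMap_comp, hx]⟩

lemma exists_affineSubspace_comp_sub_comp_eq_zero [DecidableEq K[X]] (hqp : q = p ^ e)
    (hq : 1 < q) (hf : f ∈ QPoly K q) (hg : g ∈ QPoly K q) (hfk : f.natDegree = q ^ k)
    (hgl : g.natDegree = q ^ l) {m μ : ℕ}
    (hgcd : (EuclideanDomain.gcd f g).natDegree = q ^ μ) (hm : m ≤ μ) {c₁ d₁ : K[X]}
    (hc₁ : c₁ ∈ QPoly K q) (hd₁ : d₁ ∈ QPoly K q)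
    (hdeg : (d₁.comp f - c₁.comp g).natDegree < q ^ (k + l - m)) :
    ∃ S : AffineSubspace K (Fin (k - m) ⊕ Fin (l - m) → K),
      (S : Set (Fin (k - m) ⊕ Fin (l - m) → K)) =
        {v | ((ofCoeffs K q (l - m) fun i => v (.inr i)) + d₁).comp f -
          ((ofCoeffs K q (k - m) fun i => v (.inl i)) + c₁).comp g = 0} ∧
      (S : Set (Fin (k - m) ⊕ Fin (l - m) → K)).Nonempty ∧
      Module.finrank K S.direction = μ - m := by
  have hμ0 : q ^ μ ≠ 0 := (Nat.pow_pos (by lia)).ne'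
  obtain ⟨h, hhμ, f', hf', g', hg', rfl, rfl, hcoprime⟩ :=
    exists_rightCoprime_factorization hqp hq hf hg (hgcd ▸ hμ0)
  rw [hgcd] at hhμ
  obtain ⟨hμk, hf'k⟩ := natDegree_right_factor hq hf' hhμ hfk
  obtain ⟨hμl, hg'l⟩ := natDegree_right_factor hq hg' hhμ hgl
  have h₁ : k - m + (l - μ) = k + l - m - μ := by lia
  have h₂ : l - m + (k - μ) = k + l - m - μ := by lia
  have hN : k - μ + (l - μ) ≤ k + l - m - μ := by lia
  have hrange := hcoprime.comp_sub_comp_mem_range hqp hq hf' hg' hf'k hg'l h₁ h₂ hN hhμ hd₁ hc₁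
    (by rwa [show k + l - m - μ + μ = k + l - m by lia])
  obtain ⟨S, hS, hne, hdir⟩ := exists_affineSubspace_eq_preimage_singleton _ (neg_mem hrange)
  refine ⟨S, hS.trans (Set.ext fun v => ?_), hne, ?_⟩
  · change syzygyMap q _ _ _ _ v = _ ↔ _ = 0
    rw [eq_neg_iff_add_eq_zero, syzygyMap_apply, add_comp, add_comp, add_sub_add_comm]
  · rw [hdir, ker_syzygyMap_comp q f' g' (hhμ ▸ hμ0),
      hcoprime.finrank_ker_syzygyMap hqp hq hf' hg' hf'k hg'l h₁ h₂ hN]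
    lia

end Field

section LeadingTerm

variable {R : Type*} [CommRing R] [NoZeroDivisors R] {q k l : ℕ} {f g : R[X]}

lemma natDegree_leadingTerm_comp_sub_lt (hq : 0 < q) (hfk : f.natDegree = q ^ k)
    (hgl : g.natDegree = q ^ l) {m : ℕ} (hmk : m ≤ k) (hml : m ≤ l) :
    ((C (g.leadingCoeff ^ q ^ (k - m)) * X ^ q ^ (l - m)).comp f -
      (C (f.leadingCoeff ^ q ^ (l - m)) * X ^ q ^ (k - m)).comp g).natDegree <
        q ^ (k + l - m) := by
  have hpow (n : ℕ) : 0 < q ^ n := Nat.pow_pos hq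
  have hf0 : f ≠ 0 := ne_zero_of_natDegree_gt (hfk ▸ hpow k)
  have hg0 : g ≠ 0 := ne_zero_of_natDegree_gt (hgl ▸ hpow l)
  have hfc : f.leadingCoeff ^ q ^ (l - m) ≠ 0 := pow_ne_zero _ (leadingCoeff_ne_zero.2 hf0)
  have hgc : g.leadingCoeff ^ q ^ (k - m) ≠ 0 := pow_ne_zero _ (leadingCoeff_ne_zero.2 hg0)
  have hdf : ((C (g.leadingCoeff ^ q ^ (k - m)) * X ^ q ^ (l - m)).comp f).natDegree =
      q ^ (k + l - m) := by
    rw [natDegree_comp, natDegree_C_mul_X_pow _ _ hgc, hfk, ← pow_add,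
      show l - m + k = k + l - m by lia]
  have hcg : ((C (f.leadingCoeff ^ q ^ (l - m)) * X ^ q ^ (k - m)).comp g).natDegree =
      q ^ (k + l - m) := by
    rw [natDegree_comp, natDegree_C_mul_X_pow _ _ hfc, hgl, ← pow_add,
      show k - m + l = k + l - m by lia]
  refine hdf ▸ natDegree_sub_lt (hdf.trans hcg.symm) (hdf ▸ hpow _) ?_
  rw [leadingCoeff_comp (hfk ▸ (hpow k).ne'), leadingCoeff_comp (hgl ▸ (hpow l).ne'),
    leadingCoeff_C_mul_X_pow, leadingCoeff_C_mul_X_pow, natDegree_C_mul_X_pow _ _ hgc,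
    natDegree_C_mul_X_pow _ _ hfc, mul_comm]

end LeadingTerm

end QPoly

open QPoly

theorem stmt_2_general {K : Type*} [Field K] [DecidableEq K[X]] (p e q k l m μ : ℕ)
    [Fact p.Prime] [CharP K p] (he : 0 < e) (hq : q = p ^ e) (a b : ℕ → K)
    (ha : a k ≠ 0) (hb : b l ≠ 0)
    (hμ : (EuclideanDomain.gcd
        (∑ i ∈ Finset.range (k + 1), C (a i) * X ^ q ^ i)
        (∑ i ∈ Finset.range (l + 1), C (b i) * X ^ q ^ i)).natDegree = q ^ μ)
    (hm : m ≤ μ) :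
    ∃ S : AffineSubspace K (Fin (k - m) ⊕ Fin (l - m) → K),
      (S : Set (Fin (k - m) ⊕ Fin (l - m) → K)) =
        {v | ((∑ i : Fin (l - m), C (v (Sum.inr i)) * X ^ q ^ i.val)
                + C (b l ^ q ^ (k - m)) * X ^ q ^ (l - m)).comp
              (∑ i ∈ Finset.range (k + 1), C (a i) * X ^ q ^ i)
            - ((∑ i : Fin (k - m), C (v (Sum.inl i)) * X ^ q ^ i.val)
                + C (a k ^ q ^ (l - m)) * X ^ q ^ (k - m)).comp
              (∑ i ∈ Finset.range (l + 1), C (b i) * X ^ q ^ i) = 0} ∧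
      (S : Set (Fin (k - m) ⊕ Fin (l - m) → K)).Nonempty ∧
      Module.finrank K S.direction = μ - m := by
  have hq1 : 1 < q := hq ▸ Nat.one_lt_pow he.ne' (Fact.out : p.Prime).one_lt
  simp only [sum_range_eq_ofCoeffs] at hμ ⊢
  have hfk := natDegree_ofCoeffs hq1 k ha
  have hgl := natDegree_ofCoeffs hq1 l hb
  have hμk : μ ≤ k := le_of_dvd_of_natDegree_eq_pow hq1 hfk hμ (EuclideanDomain.gcd_dvd_left _ _)
  have hμl : μ ≤ l := le_of_dvd_of_natDegree_eq_pow hq1 hgl hμ (EuclideanDomain.gcd_dvd_right _ _)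
  have hcancel := natDegree_leadingTerm_comp_sub_lt hq1.pos hfk hgl (hm.trans hμk) (hm.trans hμl)
  rw [leadingCoeff_ofCoeffs hq1 k ha, leadingCoeff_ofCoeffs hq1 l hb] at hcancel
  exact exists_affineSubspace_comp_sub_comp_eq_zero hq hq1 (ofCoeffs_mem _ _ _)
    (ofCoeffs_mem _ _ _) hfk hgl hμ hm (C_mul_X_pow_mem _ _ _) (C_mul_X_pow_mem _ _ _) hcancel

/-- Proposition: let `q^μ = deg gcd(f,g)` and `m ≤ μ`.  Among the `q`-polynomials
`c(x) = ∑_{i=0}^{k-m} c_i x^{q^i}` and `d(x) = ∑_{i=0}^{l-m} d_i x^{q^i}` with prescribed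
leading coefficients `c_{k-m} = a_k^{q^{l-m}}`, `d_{l-m} = b_l^{q^{k-m}}`, the tuples of
remaining coefficients `(c_0,…,c_{k-m-1}, d_0,…,d_{l-m-1})` (encoded as elements of
`K^{(k-m)} × K^{(l-m)} ≃ K^{k+l-2m}`, first component the `c_i`, second the `d_i`)
satisfying `d ∘ f - c ∘ g = 0` form a `(μ-m)`-dimensional affine `K`-subspace. -/
theorem stmt_2 (p e q k l m μ : ℕ) [Fact p.Prime] (he : 0 < e) (hq : q = p ^ e)
    [DecidableEq (Polynomial (AlgebraicClosure (ZMod p)))]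
    (a b : ℕ → AlgebraicClosure (ZMod p)) (ha : a k ≠ 0) (hb : b l ≠ 0)
    (hμ : (EuclideanDomain.gcd
        (∑ i ∈ Finset.range (k + 1), C (a i) * X ^ q ^ i)
        (∑ i ∈ Finset.range (l + 1), C (b i) * X ^ q ^ i)).natDegree = q ^ μ)
    (hm : m ≤ μ) :
    ∃ S : AffineSubspace (AlgebraicClosure (ZMod p))
        (Fin (k - m) ⊕ Fin (l - m) → AlgebraicClosure (ZMod p)),
      (S : Set (Fin (k - m) ⊕ Fin (l - m) → AlgebraicClosure (ZMod p))) =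
        {v | ((∑ i : Fin (l - m), C (v (Sum.inr i)) * X ^ q ^ i.val)
                + C (b l ^ q ^ (k - m)) * X ^ q ^ (l - m)).comp
              (∑ i ∈ Finset.range (k + 1), C (a i) * X ^ q ^ i)
            - ((∑ i : Fin (k - m), C (v (Sum.inl i)) * X ^ q ^ i.val)
                + C (a k ^ q ^ (l - m)) * X ^ q ^ (k - m)).comp
              (∑ i ∈ Finset.range (l + 1), C (b i) * X ^ q ^ i) = 0} ∧
      (S : Set (Fin (k - m) ⊕ Fin (l - m) → AlgebraicClosure (ZMod p))).Nonempty ∧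
      Module.finrank (AlgebraicClosure (ZMod p)) S.direction = μ - m :=
  stmt_2_general p e q k l m μ he hq a b ha hb hμ hm
end

section
/- Let q be a prime power, let f(x) = Σ_{i=0}^{k} a_i x^{q^i} and g(x) = Σ_{i=0}^{l} b_i x^{q^i} be q-polynomials over the algebraic closure of F_q with a_k b_l ≠ 0, and let q^μ = deg gcd(f,g). Then for every 0 ≤ m ≤ μ, the nullity of the matrix R_{m,q}(f,g) (i.e. the dimension of the kernel of the linear map x ↦ x·R_{m,q}(f,g) on row vectors, equivalently (k+l−2m) minus the rank of R_{m,q}(f,g)) equals μ − m. -/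
/-!
Since `q`-polynomials have no constant term, every combination `u∘f + v∘g` with `q`-polynomial
cofactors is divisible by the ordinary gcd of `f` and `g`, of degree `q ^ μ`. A row vector encodes
such cofactors `u`, `v` of `q`-degrees less than `l - m` and `k - m`, and its product with
`R_{m,q}(f,g)` lists the coefficients of `u∘f + v∘g` at `X ^ q ^ t` for `t` from `k + l - m - 1`
down to `m`. As soon as the entries with `μ ≤ t` vanish, the combination has degree less than
`q ^ μ`, so it is zero; hence the kernel is cut out by `k + l - m - μ` equations and the nullity is
at least `(k + l - 2m) - (k + l - m - μ) = μ - m`.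

Conversely, the Euclidean algorithm for composition shows that a relation `u∘f + v∘g = 0` in which
`u` has `q`-degree less than `l - μ` is trivial. So a kernel vector is determined by its first
`μ - m` entries, the coefficients of `u` at `X ^ q ^ i` for `l - μ ≤ i < l - m`, and the nullity is
at most `μ - m`.
-/

open Polynomial

/-! ### Spaces of `q`-polynomials -/

/-- The space of `q`-polynomials: the polynomials whose only monomials are the `X ^ q ^ i`. -/
def qPolynomials (R : Type*) [Semiring R] (q : ℕ) : Submodule R R[X] where
  carrier := {f | ∀ n, f.coeff n ≠ 0 → ∃ i, n = q ^ i}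
  zero_mem' n hn := absurd (coeff_zero n) hn
  add_mem' {f g} hf hg n hn := by
    by_cases hfn : f.coeff n = 0
    · exact hg n (by simpa [hfn] using hn)
    · exact hf n hfn
  smul_mem' c f hf n hn := hf n (right_ne_zero_of_mul (by simpa using hn))

section Semiring

variable {R : Type*} [Semiring R] {q : ℕ} {f : R[X]}

theorem X_pow_mem_qPolynomials (i : ℕ) : (X ^ q ^ i : R[X]) ∈ qPolynomials R q := by
  intro n hn
  rw [coeff_X_pow] at hn
  exact ⟨i, by_contra fun h => hn (if_neg h)⟩

theorem coeff_zero_of_mem_qPolynomials (hq : 0 < q) (hf : f ∈ qPolynomials R q) :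
    f.coeff 0 = 0 := by
  by_contra h
  obtain ⟨i, hi⟩ := hf 0 h
  exact (pow_pos hq i).ne hi

theorem exists_natDegree_eq_pow (hf : f ∈ qPolynomials R q) (hf0 : f ≠ 0) :
    ∃ i, f.natDegree = q ^ i ∧ f.coeff (q ^ i) ≠ 0 := by
  have hlead : f.coeff f.natDegree ≠ 0 := leadingCoeff_ne_zero.2 hf0
  obtain ⟨i, hi⟩ := hf _ hlead
  exact ⟨i, hi, hi ▸ hlead⟩

theorem eq_zero_of_natDegree_eq_zero (hq : 0 < q) (hf : f ∈ qPolynomials R q)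
    (hdeg : f.natDegree = 0) : f = 0 := by
  rw [eq_C_of_natDegree_eq_zero hdeg, coeff_zero_of_mem_qPolynomials hq hf, C_0]

/-- The `q`-polynomial `∑_{i<n} c_i X ^ q ^ i`. -/
noncomputable def qSum (q n : ℕ) (c : ℕ → R) : R[X] :=
  ∑ i ∈ Finset.range n, C (c i) * X ^ q ^ i

theorem qSum_mem (q n : ℕ) (c : ℕ → R) : qSum q n c ∈ qPolynomials R q :=
  Submodule.sum_mem _ fun i _ => by
    rw [← smul_eq_C_mul]
    exact Submodule.smul_mem _ _ (X_pow_mem_qPolynomials i)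

theorem coeff_qSum (hq : 1 < q) (n : ℕ) (c : ℕ → R) (t : ℕ) :
    (qSum q n c).coeff (q ^ t) = if t < n then c t else 0 := by
  simp only [qSum, finsetSum_coeff, coeff_C_mul_X_pow, (Nat.pow_right_injective hq).eq_iff,
    Finset.sum_ite_eq, Finset.mem_range]

theorem eq_zero_of_qSum_eq_zero (hq : 1 < q) {n : ℕ} {c : ℕ → R} (h : qSum q n c = 0) {i : ℕ}
    (hi : i < n) : c i = 0 := by
  rw [← if_pos (t := c i) (e := 0) hi, ← coeff_qSum hq, h, coeff_zero]

theorem natDegree_qSum_lt (hq : 1 < q) {n j : ℕ} {c : ℕ → R}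
    (hc : ∀ i, j ≤ i → i < n → c i = 0) : (qSum q n c).natDegree < q ^ j := by
  by_cases h0 : qSum q n c = 0
  · rw [h0, natDegree_zero]
    positivity
  obtain ⟨i, hdeg, hi⟩ := exists_natDegree_eq_pow (qSum_mem q n c) h0
  rw [coeff_qSum hq, ite_ne_right_iff] at hi
  rw [hdeg, Nat.pow_lt_pow_iff_right hq]
  exact not_le.1 fun hji => hi.2 (hc i hji hi.1)

theorem natDegree_qSum_succ (hq : 1 < q) {k : ℕ} {a : ℕ → R} (ha : a k ≠ 0) :
    (qSum q (k + 1) a).natDegree = q ^ k := by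
  have hcoeff : (qSum q (k + 1) a).coeff (q ^ k) ≠ 0 := by
    rwa [coeff_qSum hq, if_pos k.lt_succ_self]
  have h0 : qSum q (k + 1) a ≠ 0 := fun h => hcoeff (by rw [h, coeff_zero])
  obtain ⟨i, hdeg, hi⟩ := exists_natDegree_eq_pow (qSum_mem q (k + 1) a) h0
  have hik : i < k + 1 := (ite_ne_right_iff.1 (coeff_qSum hq (k + 1) a i ▸ hi)).1
  have hki : q ^ k ≤ q ^ i := hdeg ▸ le_natDegree_of_ne_zero hcoeff
  rw [hdeg, le_antisymm (Nat.lt_succ_iff.1 hik) ((Nat.pow_le_pow_iff_right hq).1 hki)]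

end Semiring

/-! ### Composition of `q`-polynomials -/

section CommSemiring

variable {R : Type*} [CommSemiring R] {p e q : ℕ} {u f : R[X]}

theorem qSum_comp (q n : ℕ) (c : ℕ → R) (f : R[X]) :
    (qSum q n c).comp f = ∑ i ∈ Finset.range n, C (c i) * f ^ q ^ i := by
  simp only [qSum, Polynomial.sum_comp, mul_comp, C_comp, X_pow_comp]

theorem dvd_comp_of_dvd {c : R[X]} (hu : u.coeff 0 = 0) (hc : c ∣ f) : c ∣ u.comp f := by
  obtain ⟨w, rfl⟩ := X_dvd_iff.2 hu
  rw [mul_comp, X_comp]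
  exact hc.mul_right _

variable [ExpChar R p]

theorem coeff_pow_expChar_pow (f : R[X]) (s n : ℕ) :
    (f ^ p ^ s).coeff n = if p ^ s ∣ n then f.coeff (n / p ^ s) ^ p ^ s else 0 := by
  have hpos : 0 < p ^ s := pow_pos (expChar_pos R p) s
  rw [← map_iterateFrobenius_expand p f s, coeff_map, coeff_expand hpos,
    apply_ite (iterateFrobenius R p s), map_zero, iterateFrobenius_def]

theorem coeff_pow_q_pow (hqp : q = p ^ e) (hq : 1 < q) (f : R[X]) (s t : ℕ) :
    (f ^ q ^ s).coeff (q ^ t) = if s ≤ t then f.coeff (q ^ (t - s)) ^ q ^ s else 0 := by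
  have hqs : q ^ s = p ^ (e * s) := by rw [hqp, pow_mul]
  rw [hqs, coeff_pow_expChar_pow, ← hqs]
  simp only [Nat.pow_dvd_pow_iff_le_right hq]
  exact ite_congr rfl (fun hst => by rw [Nat.pow_div hst (by omega)]) fun _ => rfl

theorem pow_mem_qPolynomials (hqp : q = p ^ e) (hf : f ∈ qPolynomials R q) (s : ℕ) :
    f ^ q ^ s ∈ qPolynomials R q := by
  have hqs : q ^ s = p ^ (e * s) := by rw [hqp, pow_mul]
  intro n hn
  rw [hqs, coeff_pow_expChar_pow, ← hqs, ite_ne_right_iff] at hn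
  have hpos : q ^ s ≠ 0 := hqs ▸ (pow_pos (expChar_pos R p) _).ne'
  obtain ⟨i, hi⟩ := hf _ (ne_zero_pow hpos hn.2)
  exact ⟨s + i, by rw [pow_add, ← hi, Nat.mul_div_cancel' hn.1]⟩

theorem comp_mem_qPolynomials (hqp : q = p ^ e) (hu : u ∈ qPolynomials R q)
    (hf : f ∈ qPolynomials R q) : u.comp f ∈ qPolynomials R q := by
  rw [comp_eq_sum_left]
  refine Submodule.sum_mem _ fun n hn => ?_
  obtain ⟨i, rfl⟩ := hu n (mem_support_iff.1 hn)
  simp only [← smul_eq_C_mul]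
  exact Submodule.smul_mem _ _ (pow_mem_qPolynomials hqp hf i)

theorem comp_add_of_mem_qPolynomials (hqp : q = p ^ e) (hu : u ∈ qPolynomials R q) (f g : R[X]) :
    u.comp (f + g) = u.comp f + u.comp g := by
  simp only [comp_eq_sum_left, sum_def, ← Finset.sum_add_distrib]
  refine Finset.sum_congr rfl fun n hn => ?_
  obtain ⟨i, rfl⟩ := hu n (mem_support_iff.1 hn)
  rw [hqp, ← pow_mul, add_pow_expChar_pow, mul_add]

theorem coeff_qSum_succ_pow (hqp : q = p ^ e) (hq : 1 < q) (k s t : ℕ) (a : ℕ → R) :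
    (qSum q (k + 1) a ^ q ^ s).coeff (q ^ t) =
      if s ≤ t ∧ t ≤ k + s then a (t - s) ^ q ^ s else 0 := by
  rw [coeff_pow_q_pow hqp hq, coeff_qSum hq]
  have hqs : q ^ s ≠ 0 := by positivity
  split_ifs <;> first | rfl | omega | exact zero_pow hqs

end CommSemiring

section IsDomain

variable {R : Type*} [CommRing R] [IsDomain R] {q : ℕ} {f g : R[X]}

theorem eq_zero_of_comp_eq_zero {u : R[X]} (hg : g.coeff 0 = 0) (hg0 : g ≠ 0)
    (h : u.comp g = 0) : u = 0 := by
  refine (comp_eq_zero_iff.1 h).resolve_right fun hconst => hg0 ?_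
  rw [hconst.2, hg, C_0]

theorem eq_zero_of_dvd_of_coeff_eq_zero {d : R[X]} {μ n : ℕ} (hq : 1 < q)
    (hf : f ∈ qPolynomials R q) (hfn : f.natDegree < q ^ n) (hd : d ∣ f)
    (hdμ : d.natDegree = q ^ μ) (hcoeff : ∀ t, μ ≤ t → t < n → f.coeff (q ^ t) = 0) :
    f = 0 := by
  by_contra hf0
  obtain ⟨t, hdeg, ht⟩ := exists_natDegree_eq_pow hf hf0
  refine ht (hcoeff t ?_ ?_)
  · rw [← Nat.pow_le_pow_iff_right hq, ← hdeg, ← hdμ]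
    exact natDegree_le_of_dvd hd hf0
  · rwa [← Nat.pow_lt_pow_iff_right hq, ← hdeg]

end IsDomain

/-! ### The Euclidean algorithm for composition -/

section Field

variable {K : Type*} [Field K] {p e q : ℕ} {f g : K[X]}

theorem exists_degree_sub_comp_lt (hf : f ∈ qPolynomials K q) (hg : g ∈ qPolynomials K q)
    (hq : 1 < q) (hg0 : g ≠ 0) (hgf : g.degree ≤ f.degree) :
    ∃ s ∈ qPolynomials K q, (f - s.comp g).degree < f.degree := by
  have hf0 : f ≠ 0 := fun h => hg0 (by simpa [h] using hgf)
  obtain ⟨n, hn, -⟩ := exists_natDegree_eq_pow hf hf0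
  obtain ⟨d, hd, -⟩ := exists_natDegree_eq_pow hg hg0
  have hdn : d ≤ n := by
    rw [← Nat.pow_le_pow_iff_right hq, ← hn, ← hd]
    exact natDegree_le_natDegree hgf
  have hr : g.leadingCoeff ^ q ^ (n - d) ≠ 0 := pow_ne_zero _ (leadingCoeff_ne_zero.2 hg0)
  set c := f.leadingCoeff / g.leadingCoeff ^ q ^ (n - d)
  have hc : c ≠ 0 := div_ne_zero (leadingCoeff_ne_zero.2 hf0) hr
  have hnatDegree : f.natDegree = (C c * g ^ q ^ (n - d)).natDegree := by
    rw [natDegree_C_mul hc, natDegree_pow, hn, hd, ← pow_add, Nat.sub_add_cancel hdn]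
  have hne : C c * g ^ q ^ (n - d) ≠ 0 := mul_ne_zero (C_ne_zero.2 hc) (pow_ne_zero _ hg0)
  have hlead : f.leadingCoeff = (C c * g ^ q ^ (n - d)).leadingCoeff := by
    rw [leadingCoeff_mul, leadingCoeff_C, leadingCoeff_pow, div_mul_cancel₀ _ hr]
  refine ⟨c • X ^ q ^ (n - d), Submodule.smul_mem _ _ (X_pow_mem_qPolynomials _), ?_⟩
  rw [smul_comp, X_pow_comp, smul_eq_C_mul]
  exact degree_sub_lt_left
    (by rw [degree_eq_natDegree hf0, degree_eq_natDegree hne, hnatDegree]) hf0 hlead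

variable [ExpChar K p]

theorem exists_eq_comp_add (hqp : q = p ^ e) (hq : 1 < q) (hg : g ∈ qPolynomials K q)
    (hg0 : g ≠ 0) (hf : f ∈ qPolynomials K q) :
    ∃ s ∈ qPolynomials K q, ∃ r ∈ qPolynomials K q, f = s.comp g + r ∧ r.degree < g.degree := by
  induction hdeg : f.degree using WellFoundedLT.induction generalizing f with
  | ind N ih =>
  subst hdeg
  by_cases hfg : f.degree < g.degree
  · exact ⟨0, zero_mem _, f, hf, by rw [zero_comp, zero_add], hfg⟩
  obtain ⟨s₀, hs₀, hlt⟩ := exists_degree_sub_comp_lt hf hg hq hg0 (not_lt.1 hfg)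
  obtain ⟨s, hs, r, hr, heq, hrg⟩ :=
    ih _ hlt (sub_mem hf (comp_mem_qPolynomials hqp hs₀ hg)) rfl
  refine ⟨s + s₀, add_mem hs hs₀, r, hr, ?_, hrg⟩
  rw [add_comp, add_right_comm, ← heq, sub_add_cancel]

/-- If `f = s∘g + r`, then `u∘f + v∘g = (u∘s + v)∘g + u∘r`, and the degree hypothesis passes from
`u` to the cofactor `u∘s + v` of `g`, because degrees multiply under composition. -/
theorem cofactor_eq_zero_of_comp_add_comp_eq_zero (hqp : q = p ^ e) (hq : 1 < q)
    {u v d : K[X]} (hf : f ∈ qPolynomials K q) (hg : g ∈ qPolynomials K q) (hg0 : g ≠ 0)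
    (hu : u ∈ qPolynomials K q) (hv : v ∈ qPolynomials K q) (hd0 : d ≠ 0)
    (hd : ∀ c, c ∣ f → c ∣ g → c ∣ d) (huv : u.comp f + v.comp g = 0)
    (hdeg : u.natDegree * d.natDegree < g.natDegree) : u = 0 := by
  induction hN : g.degree using WellFoundedLT.induction generalizing f g u v with
  | ind N ih =>
  subst hN
  have hq0 : 0 < q := by omega
  have coeff_zero {h : K[X]} := coeff_zero_of_mem_qPolynomials (f := h) hq0
  obtain ⟨s, hs, r, hr, hfsr, hrg⟩ := exists_eq_comp_add hqp hq hg hg0 hf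
  have hd' : ∀ c, c ∣ g → c ∣ r → c ∣ d := fun c hcg hcr =>
    hd c (hfsr ▸ dvd_add (dvd_comp_of_dvd (coeff_zero hs) hcg) hcr) hcg
  by_cases hr0 : r = 0
  · have hgd : g.natDegree ≤ d.natDegree :=
      natDegree_le_of_dvd (hd' g dvd_rfl (hr0 ▸ dvd_zero g)) hd0
    refine eq_zero_of_natDegree_eq_zero hq0 hu ?_
    by_contra hu0
    nlinarith [Nat.pos_of_ne_zero hu0]
  set w := u.comp s + v
  have hw : w ∈ qPolynomials K q := add_mem (comp_mem_qPolynomials hqp hu hs) hv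
  have hwu : w.comp g + u.comp r = 0 := by
    rw [add_comp, comp_assoc, ← huv, hfsr, comp_add_of_mem_qPolynomials hqp hu]
    ring
  have hwdeg : w.natDegree * d.natDegree < r.natDegree := by
    have hwg : w.natDegree * g.natDegree = u.natDegree * r.natDegree := by
      rw [← natDegree_comp, ← natDegree_comp, eq_neg_of_add_eq_zero_left hwu, natDegree_neg]
    have hrpos : 0 < r.natDegree :=
      Nat.pos_of_ne_zero fun h => hr0 (eq_zero_of_natDegree_eq_zero hq0 hr h)
    refine lt_of_mul_lt_mul_left (a := g.natDegree) ?_ (Nat.zero_le _)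
    calc g.natDegree * (w.natDegree * d.natDegree)
        = w.natDegree * g.natDegree * d.natDegree := by ring
      _ = u.natDegree * d.natDegree * r.natDegree := by rw [hwg, mul_right_comm]
      _ < g.natDegree * r.natDegree := Nat.mul_lt_mul_of_pos_right hdeg hrpos
  have hw0 : w = 0 := ih _ hrg hg hr hr0 hw hu hd' hwu hwdeg rfl
  rw [hw0, zero_comp, zero_add] at hwu
  exact eq_zero_of_comp_eq_zero (coeff_zero hr) hr0 hwu

end Field

/-! ### Linear algebra -/

theorem finrank_ker_eq_of_ker_comp_le {K V W U U' : Type*} [DivisionRing K] [AddCommGroup V]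
    [Module K V] [FiniteDimensional K V] [AddCommGroup W] [Module K W] [AddCommGroup U] [Module K U]
    [FiniteDimensional K U] [AddCommGroup U'] [Module K U'] [FiniteDimensional K U']
    (T : V →ₗ[K] W) (π : V →ₗ[K] U) (ρ : W →ₗ[K] U')
    (hdim : Module.finrank K V = Module.finrank K U + Module.finrank K U')
    (hρ : LinearMap.ker (ρ ∘ₗ T) ≤ LinearMap.ker T)
    (hπ : Disjoint (LinearMap.ker T) (LinearMap.ker π)) :
    Module.finrank K (LinearMap.ker T) = Module.finrank K U := by
  apply le_antisymm
  · have hinj : Function.Injective (π.domRestrict (LinearMap.ker T)) :=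
      LinearMap.injective_domRestrict_iff.2 hπ
    exact LinearMap.finrank_le_finrank_of_injective hinj
  · have hker := Submodule.finrank_mono hρ
    have hrange := Submodule.finrank_le (LinearMap.range (ρ ∘ₗ T))
    have hsum := (ρ ∘ₗ T).finrank_range_add_finrank_ker
    omega

theorem rank_add_finrank_ker_vecMulLinear {K m n : Type*} [Field K] [Fintype m]
    [Fintype n] (A : Matrix m n K) :
    A.rank + Module.finrank K (LinearMap.ker A.vecMulLinear) = Fintype.card m := by
  rw [A.rank_eq_finrank_span_row, ← range_vecMulLinear,
    LinearMap.finrank_range_add_finrank_ker, Module.finrank_fintype_fun_eq_card]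

/-! ### The subresultant matrix -/

section Combination

variable {R : Type*} [CommSemiring R] {p e q k l m : ℕ} {a b c : ℕ → R}

/-- The polynomial whose coefficients at the `X ^ q ^ t` form the `i`-th row of `R_{m,q}(f,g)`. -/
noncomputable def subresultantRow (q k l m : ℕ) (f g : R[X]) (i : ℕ) : R[X] :=
  if i < l - m then f ^ q ^ (l - m - 1 - i) else g ^ q ^ (k - m - 1 - (i - (l - m)))

/-- The cofactor of `f` encoded by a row vector `c` multiplying `R_{m,q}(f,g)`. The rows of the
matrix are ordered by decreasing powers of `q`, hence the reversal. -/
noncomputable def leftCofactor (q l m : ℕ) (c : ℕ → R) : R[X] :=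
  qSum q (l - m) fun i => c (l - m - 1 - i)

/-- The cofactor of `g` encoded by a row vector `c` multiplying `R_{m,q}(f,g)`; its coefficients
come after the `l - m` coefficients of the cofactor of `f`. -/
noncomputable def rightCofactor (q k l m : ℕ) (c : ℕ → R) : R[X] :=
  qSum q (k - m) fun i => c (l - m + (k - m - 1 - i))

/-- The combination `u∘f + v∘g` with the cofactors `u` and `v` encoded by the row vector `c`. -/
noncomputable def subresultantCombination (q k l m : ℕ) (a b c : ℕ → R) : R[X] :=
  (leftCofactor q l m c).comp (qSum q (k + 1) a) +
    (rightCofactor q k l m c).comp (qSum q (l + 1) b)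

theorem sum_subresultantRow (hmk : m ≤ k) (hml : m ≤ l) (f g : R[X]) (c : ℕ → R) :
    ∑ i ∈ Finset.range (k + l - 2 * m), C (c i) * subresultantRow q k l m f g i =
      (leftCofactor q l m c).comp f + (rightCofactor q k l m c).comp g := by
  rw [show k + l - 2 * m = l - m + (k - m) by omega, Finset.sum_range_add, leftCofactor,
    rightCofactor, qSum_comp, qSum_comp]
  congr 1
  · rw [← Finset.sum_range_reflect]
    refine Finset.sum_congr rfl fun i hi => ?_
    have := Finset.mem_range.1 hi
    rw [subresultantRow, if_pos (by omega), Nat.sub_sub_self (by omega)]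
  · rw [← Finset.sum_range_reflect]
    refine Finset.sum_congr rfl fun i hi => ?_
    have := Finset.mem_range.1 hi
    rw [subresultantRow, if_neg (by omega), Nat.add_sub_cancel_left, Nat.sub_sub_self (by omega)]

theorem natDegree_subresultantCombination_lt [NoZeroDivisors R] (hq : 1 < q) (hmk : m ≤ k)
    (hml : m ≤ l) (ha : a k ≠ 0) (hb : b l ≠ 0) :
    (subresultantCombination q k l m a b c).natDegree < q ^ (k + l - m) := by
  refine (natDegree_add_le _ _).trans_lt (max_lt ?_ ?_)
  · rw [natDegree_comp, natDegree_qSum_succ hq ha, show k + l - m = l - m + k by omega, pow_add]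
    exact Nat.mul_lt_mul_of_pos_right
      (natDegree_qSum_lt hq fun i hi hi' => absurd hi' hi.not_gt) (by positivity)
  · rw [natDegree_comp, natDegree_qSum_succ hq hb, show k + l - m = k - m + l by omega, pow_add]
    exact Nat.mul_lt_mul_of_pos_right
      (natDegree_qSum_lt hq fun i hi hi' => absurd hi' hi.not_gt) (by positivity)

theorem dvd_subresultantCombination (hq : 0 < q) {d : R[X]} (hdf : d ∣ qSum q (k + 1) a)
    (hdg : d ∣ qSum q (l + 1) b) : d ∣ subresultantCombination q k l m a b c :=
  dvd_add (dvd_comp_of_dvd (coeff_zero_of_mem_qPolynomials hq (qSum_mem _ _ _)) hdf)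
    (dvd_comp_of_dvd (coeff_zero_of_mem_qPolynomials hq (qSum_mem _ _ _)) hdg)

theorem subresultantCombination_mem_qPolynomials [ExpChar R p] (hqp : q = p ^ e) :
    subresultantCombination q k l m a b c ∈ qPolynomials R q :=
  add_mem (comp_mem_qPolynomials hqp (qSum_mem _ _ _) (qSum_mem _ _ _))
    (comp_mem_qPolynomials hqp (qSum_mem _ _ _) (qSum_mem _ _ _))

end Combination

section Subresultant

variable {K : Type*} [Field K] {p e q k l μ m : ℕ} [ExpChar K p] {a b c : ℕ → K}

theorem Rmat_apply (hqp : q = p ^ e) (hq : 1 < q) (a b : ℕ → K)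
    (i j : Fin (k + l - 2 * m)) :
    Rmat q k l m a b i j =
      (subresultantRow q k l m (qSum q (k + 1) a) (qSum q (l + 1) b) i).coeff
        (q ^ (k + l - m - 1 - j)) := by
  have hi := i.2
  have hj := j.2
  simp only [Rmat, Matrix.of_apply, subresultantRow]
  by_cases hil : i.val < l - m
  · rw [if_pos hil, if_pos hil, coeff_qSum_succ_pow hqp hq]
    exact ite_congr (propext (by omega)) (fun _ => by congr 2; omega) fun _ => rfl
  · rw [if_neg hil, if_neg hil, coeff_qSum_succ_pow hqp hq]
    exact ite_congr (propext (by omega)) (fun _ => by congr 2; omega) fun _ => rfl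

theorem vecMul_Rmat (hqp : q = p ^ e) (hq : 1 < q) (hmk : m ≤ k) (hml : m ≤ l)
    (a b c : ℕ → K) (j : Fin (k + l - 2 * m)) :
    Matrix.vecMul (c ∘ Fin.val) (Rmat q k l m a b) j =
      (subresultantCombination q k l m a b c).coeff (q ^ (k + l - m - 1 - j)) := by
  simp only [subresultantCombination, ← sum_subresultantRow hmk hml, Matrix.vecMul, dotProduct,
    Rmat_apply hqp hq, finsetSum_coeff, coeff_C_mul, Finset.sum_range, Function.comp_apply]

theorem subresultantCombination_eq_zero (hqp : q = p ^ e) (hq : 1 < q) (hmk : m ≤ k)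
    (hml : m ≤ l) (hmμ : m ≤ μ) (ha : a k ≠ 0) (hb : b l ≠ 0) {d : K[X]}
    (hdf : d ∣ qSum q (k + 1) a) (hdg : d ∣ qSum q (l + 1) b) (hdμ : d.natDegree = q ^ μ)
    (hc : ∀ j : Fin (k + l - 2 * m), j < k + l - m - μ →
      Matrix.vecMul (c ∘ Fin.val) (Rmat q k l m a b) j = 0) :
    subresultantCombination q k l m a b c = 0 := by
  refine eq_zero_of_dvd_of_coeff_eq_zero hq (subresultantCombination_mem_qPolynomials hqp)
    (natDegree_subresultantCombination_lt hq hmk hml ha hb)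
    (dvd_subresultantCombination (by omega) hdf hdg) hdμ fun t hμt htn => ?_
  have hj := hc ⟨k + l - m - 1 - t, by omega⟩ (by simp only; omega)
  rwa [vecMul_Rmat hqp hq hmk hml, Nat.sub_sub_self (by omega)] at hj

theorem eq_zero_of_subresultantCombination_eq_zero (hqp : q = p ^ e) (hq : 1 < q)
    (hμl : μ ≤ l) (hb : b l ≠ 0) {d : K[X]}
    (hd : ∀ h, h ∣ qSum q (k + 1) a → h ∣ qSum q (l + 1) b → h ∣ d) (hdμ : d.natDegree = q ^ μ)
    (hcomb : subresultantCombination q k l m a b c = 0) (hc : ∀ i < μ - m, c i = 0) :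
    ∀ i < k + l - 2 * m, c i = 0 := by
  have hgl : (qSum q (l + 1) b).natDegree = q ^ l := natDegree_qSum_succ hq hb
  have hg0 : qSum q (l + 1) b ≠ 0 := ne_zero_of_natDegree_gt (n := 0) (by rw [hgl]; positivity)
  have hd0 : d ≠ 0 := ne_zero_of_natDegree_gt (n := 0) (by rw [hdμ]; positivity)
  have hu0 : leftCofactor q l m c = 0 := by
    refine cofactor_eq_zero_of_comp_add_comp_eq_zero hqp hq (qSum_mem _ _ _) (qSum_mem _ _ _) hg0
      (qSum_mem _ _ _) (qSum_mem _ _ _) hd0 hd hcomb ?_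
    rw [hgl, hdμ, ← Nat.sub_add_cancel hμl, pow_add]
    exact Nat.mul_lt_mul_of_pos_right
      (natDegree_qSum_lt hq fun i hi hil => hc _ (by omega)) (by positivity)
  have hv0 : rightCofactor q k l m c = 0 := by
    rw [subresultantCombination, hu0, zero_comp, zero_add] at hcomb
    exact eq_zero_of_comp_eq_zero
      (coeff_zero_of_mem_qPolynomials (by omega) (qSum_mem _ _ _)) hg0 hcomb
  intro i hi
  by_cases hil : i < l - m
  · have := eq_zero_of_qSum_eq_zero hq hu0 (i := l - m - 1 - i) (by omega)
    rwa [Nat.sub_sub_self (by omega)] at this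
  · have := eq_zero_of_qSum_eq_zero hq hv0 (i := k - m - 1 - (i - (l - m))) (by omega)
    rwa [Nat.sub_sub_self (by omega), Nat.add_sub_cancel' (by omega)] at this

theorem finrank_ker_vecMulLinear_Rmat (hqp : q = p ^ e) (hq : 1 < q) (hmμ : m ≤ μ)
    (hμk : μ ≤ k) (hμl : μ ≤ l) (ha : a k ≠ 0) (hb : b l ≠ 0) {d : K[X]}
    (hdf : d ∣ qSum q (k + 1) a) (hdg : d ∣ qSum q (l + 1) b)
    (hd : ∀ h, h ∣ qSum q (k + 1) a → h ∣ qSum q (l + 1) b → h ∣ d)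
    (hdμ : d.natDegree = q ^ μ) :
    Module.finrank K (LinearMap.ker (Rmat q k l m a b).vecMulLinear) = μ - m := by
  have hmk := hmμ.trans hμk
  have hml := hmμ.trans hμl
  have hcomb {c : ℕ → K} := subresultantCombination_eq_zero (c := c) hqp hq hmk hml hmμ ha hb
    hdf hdg hdμ
  rw [finrank_ker_eq_of_ker_comp_le (Rmat q k l m a b).vecMulLinear
    (LinearMap.funLeft K K (Fin.castLE (by omega : μ - m ≤ k + l - 2 * m)))
    (LinearMap.funLeft K K (Fin.castLE (by omega : k + l - m - μ ≤ k + l - 2 * m))),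
    Module.finrank_fin_fun]
  · simp only [Module.finrank_fin_fun]
    omega
  · intro x hx
    obtain ⟨c, rfl⟩ := Fin.val_injective.surjective_comp_right x
    ext j
    rw [Matrix.vecMulLinear_apply, vecMul_Rmat hqp hq hmk hml,
      hcomb fun j hj => congrFun hx ⟨j, hj⟩, coeff_zero, Pi.zero_apply]
  · rw [Submodule.disjoint_def]
    intro x hx hx'
    obtain ⟨c, rfl⟩ := Fin.val_injective.surjective_comp_right x
    ext i
    exact eq_zero_of_subresultantCombination_eq_zero hqp hq hμl hb hd hdμ
      (hcomb fun j _ => congrFun hx j) (fun i hi => congrFun hx' ⟨i, hi⟩) i i.2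

end Subresultant

theorem stmt_3_general {K : Type*} [Field K] {p e q k l μ m : ℕ} [Fact p.Prime] [CharP K p]
    (he : 0 < e) (hq : q = p ^ e) [DecidableEq K[X]] (a b : ℕ → K) (ha : a k ≠ 0) (hb : b l ≠ 0)
    (hμ : (EuclideanDomain.gcd
        (∑ i ∈ Finset.range (k + 1), C (a i) * X ^ q ^ i)
        (∑ i ∈ Finset.range (l + 1), C (b i) * X ^ q ^ i)).natDegree = q ^ μ)
    (hm : m ≤ μ) :
    Module.finrank K (LinearMap.ker (Rmat q k l m a b).vecMulLinear) = μ - m ∧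
      (k + l - 2 * m) - (Rmat q k l m a b).rank = μ - m := by
  have hp : p.Prime := Fact.out
  have : ExpChar K p := .prime hp
  have hq1 : 1 < q := hq ▸ Nat.one_lt_pow he.ne' hp.one_lt
  have hdf := EuclideanDomain.gcd_dvd_left (qSum q (k + 1) a) (qSum q (l + 1) b)
  have hdg := EuclideanDomain.gcd_dvd_right (qSum q (k + 1) a) (qSum q (l + 1) b)
  have hμ_le {n : ℕ} {c : ℕ → K} (hc : c n ≠ 0)
      (hdvd : EuclideanDomain.gcd (qSum q (k + 1) a) (qSum q (l + 1) b) ∣ qSum q (n + 1) c) :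
      μ ≤ n := by
    have hn := natDegree_qSum_succ hq1 hc
    have h0 : qSum q (n + 1) c ≠ 0 := ne_zero_of_natDegree_gt (n := 0) (by rw [hn]; positivity)
    have hle := natDegree_le_of_dvd hdvd h0
    rwa [hn, qSum, qSum, hμ, Nat.pow_le_pow_iff_right hq1] at hle
  have hker := finrank_ker_vecMulLinear_Rmat hq hq1 hm (hμ_le ha hdf) (hμ_le hb hdg) ha hb hdf hdg
    (fun _ => EuclideanDomain.dvd_gcd) hμ
  have hrank := rank_add_finrank_ker_vecMulLinear (Rmat q k l m a b)
  rw [hker, Fintype.card_fin] at hrank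
  exact ⟨hker, by omega⟩

/-- Proposition: if `deg gcd(f,g) = q^μ` and `0 ≤ m ≤ μ`, then the nullity of
`R_{m,q}(f,g)` (the dimension of the kernel of the row-vector map `x ↦ x ⬝ R_{m,q}(f,g)`,
equivalently `(k+l-2m)` minus the rank) equals `μ - m`. -/
theorem stmt_3 (p e q k l μ m : ℕ) [Fact p.Prime] (he : 0 < e) (hq : q = p ^ e)
    [DecidableEq (Polynomial (AlgebraicClosure (ZMod p)))]
    (a b : ℕ → AlgebraicClosure (ZMod p)) (ha : a k ≠ 0) (hb : b l ≠ 0)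
    (hμ : (EuclideanDomain.gcd
        (∑ i ∈ Finset.range (k + 1), C (a i) * X ^ q ^ i)
        (∑ i ∈ Finset.range (l + 1), C (b i) * X ^ q ^ i)).natDegree = q ^ μ)
    (hm : m ≤ μ) :
    Module.finrank (AlgebraicClosure (ZMod p))
        (LinearMap.ker (Rmat q k l m a b).vecMulLinear) = μ - m ∧
      (k + l - 2 * m) - (Rmat q k l m a b).rank = μ - m := by
  have : CharP (AlgebraicClosure (ZMod p)) p :=
    charP_of_injective_algebraMap (algebraMap (ZMod p) _).injective p
  exact stmt_3_general he hq a b ha hb hμ hm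
end

section
/- Let q be a prime power, let n ≥ 1, let f(x) = Σ_{i=0}^{k} a_i x^{q^i} ∈ F_{q^n}[x] be a q-polynomial with a_k ≠ 0 and k ≤ n−1, and put g(x) = x^{q^n} − x. Then for 0 ≤ μ ≤ k: the F_q-dimension of the kernel of the F_q-linear transformation of F_{q^n} induced by f equals μ if and only if det(R_{0,q}(f,g)) = det(R_{1,q}(f,g)) = … = det(R_{μ−1,q}(f,g)) = 0 and det(R_{μ,q}(f,g)) ≠ 0. -/
/-!
A sequence `w` defines an `F`-linear functional `x^{q^e} ↦ w_e` on `q`-polynomials. A vector in the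
right kernel of `R_{m,q}(f,g)` is such a functional, restricted to `q`-degree less than `k + n - m`,
that kills all `x^{q^e}` with `e < m`, all `x^{q^s} ∘ f` with `s < n - m`, and all `x^{q^s} ∘ g`
with `s < k - m`. For `g = x^{q^n} - x` the last condition says that `w` is `n`-periodic, and by the
invertibility of the Moore matrix of a basis `x_i` of `F` over `F_q` the `n`-periodic sequences are
exactly the `w_e = ∑_i y_i x_i^{q^e}`. Such a `w` takes the value `∑_i y_i f(x_i)^{q^s}` at
`x^{q^s} ∘ f`.

Let `d = dim_q ker f`, and let the basis extend a basis of `ker f`. For `m < d`, the `m` equations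
`w_e = 0` have a nonzero solution `y` supported on the `d` basis vectors in `ker f`, so
`det R_m = 0`. For `m = d`, the `n - d` equations `∑_i y_i f(x_i)^{q^s} = 0` force `y_i = 0` off
`ker f` because the remaining `f(x_i)` are independent, and then the `d` equations `w_e = 0` force
`y = 0`, so `det R_d ≠ 0`. Hence `d` is the least index with a nonzero determinant.
-/

lemma linearIndependent_map_sumQuot_inr {R V W ι κ : Type*} [CommRing R] [AddCommGroup V]
    [Module R V] [AddCommGroup W] [Module R W] (f : V →ₗ[R] W)
    (b : Module.Basis ι R (LinearMap.ker f)) (c : Module.Basis κ R (V ⧸ LinearMap.ker f)) :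
    LinearIndependent R fun j => f (b.sumQuot c (Sum.inr j)) := by
  have hker : LinearMap.ker ((LinearMap.ker f).liftQ f le_rfl) = ⊥ :=
    Submodule.ker_liftQ_eq_bot _ _ _ le_rfl
  have h := c.linearIndependent.map' _ hker
  simp only [Function.comp_def, ← b.sumQuot_inr c, Submodule.liftQ_apply] at h
  exact h

section Subresultant

variable {F : Type*} [Field F]

/-- The pairing of a sequence `w` with the shifts of the `q`-polynomial
`f = ∑_{t ≤ k} a_t x^{q^t}`: the value at `x^{q^s} ∘ f = ∑_t a_t^{q^s} x^{q^{s+t}}` of the linear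
functional on `q`-polynomials that takes `x^{q^e}` to `w e`. -/
def qPairing (q k : ℕ) (a w : ℕ → F) (s : ℕ) : F :=
  ∑ t ∈ Finset.range (k + 1), a t ^ q ^ s * w (s + t)

lemma qPairing_congr {q k s : ℕ} {a w w' : ℕ → F} (h : ∀ e ≤ s + k, w e = w' e) :
    qPairing q k a w s = qPairing q k a w' s :=
  Finset.sum_congr rfl fun t ht => by
    rw [h (s + t) (Nat.add_le_add_left (Finset.mem_range_succ_iff.1 ht) s)]

lemma sum_band_mul_eq_qPairing {q k m i s N : ℕ} (hN : N + m = k + i + s + 1) (a : ℕ → F)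
    {w : ℕ → F} (hw : ∀ e < m, w e = 0) :
    ∑ j : Fin N, (if i ≤ j.val ∧ j.val ≤ k + i then a (k + i - j) ^ q ^ s else 0) *
      w (N + m - 1 - j) = qPairing q k a w s := by
  rw [Fin.sum_univ_eq_sum_range fun j =>
    (if i ≤ j ∧ j ≤ k + i then a (k + i - j) ^ q ^ s else 0) * w (N + m - 1 - j)]
  have band {j : ℕ}
      (h : (if i ≤ j ∧ j ≤ k + i then a (k + i - j) ^ q ^ s else 0) * w (N + m - 1 - j) ≠ 0) :
      i ≤ j ∧ j ≤ k + i := by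
    by_contra hj
    exact h (by rw [if_neg hj, zero_mul])
  refine Finset.sum_bij_ne_zero (fun j _ _ => k + i - j) (fun j _ h => ?_)
    (fun j _ h j' _ h' hjj' => ?_) (fun t ht h => ?_) (fun j _ h => ?_)
  · rw [Finset.mem_range]
    have := band h
    omega
  · have := band h
    have := band h'
    omega
  · rw [Finset.mem_range] at ht
    have hmt : m ≤ s + t := by
      by_contra! hlt
      exact h (by rw [hw _ hlt, mul_zero])
    have hj : i ≤ k + i - t ∧ k + i - t ≤ k + i := by omega
    have ht' : k + i - (k + i - t) = t := by omega
    have hst : N + m - 1 - (k + i - t) = s + t := by omega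
    exact ⟨k + i - t, Finset.mem_range.2 (by omega), by rwa [if_pos hj, ht', hst], ht'⟩
  · have hj := band h
    rw [if_pos hj]
    congr 2
    omega

lemma Rmat_mulVec_apply {q k l m : ℕ} (hml : m ≤ l) (a b : ℕ → F) {w : ℕ → F}
    (hw : ∀ e < m, w e = 0) (i : Fin (k + l - 2 * m)) :
    (Rmat q k l m a b).mulVec (fun j => w (k + l - m - 1 - j)) i =
      if i.val < l - m then qPairing q k a w (l - m - 1 - i)
      else qPairing q l b w (k - m - 1 - (i - (l - m))) := by
  have hi := i.isLt
  have hsize : k + l - m - 1 = k + l - 2 * m + m - 1 := by omega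
  simp only [Matrix.mulVec, dotProduct, Rmat, Matrix.of_apply, hsize]
  split_ifs with hil
  · exact sum_band_mul_eq_qPairing (by omega) a hw
  · exact sum_band_mul_eq_qPairing (by omega) b hw

-- `w` is a kernel vector read from the last entry to the first, the last one being indexed by `m`.
theorem det_Rmat_eq_zero_iff {q k l m : ℕ} (hmk : m ≤ k) (hml : m ≤ l) (a b : ℕ → F) :
    (Rmat q k l m a b).det = 0 ↔
      ∃ w : ℕ → F, (∀ e < m, w e = 0) ∧ (∃ e < k + l - m, w e ≠ 0) ∧
        (∀ s < l - m, qPairing q k a w s = 0) ∧ ∀ s < k - m, qPairing q l b w s = 0 := by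
  rw [← Matrix.exists_mulVec_eq_zero_iff]
  constructor
  · rintro ⟨v, hv, hRv⟩
    let w : ℕ → F := fun e =>
      if h : m ≤ e ∧ e < k + l - m then v ⟨k + l - m - 1 - e, by omega⟩ else 0
    have hw : ∀ e < m, w e = 0 := fun e he => dif_neg (by omega)
    have hvw : v = fun j : Fin (k + l - 2 * m) => w (k + l - m - 1 - j) := by
      ext j
      have hj : k + l - m - 1 - (k + l - m - 1 - j) = j := by omega
      simp only [w]
      rw [dif_pos (by omega)]
      simp only [hj]
    rw [hvw] at hv hRv
    obtain ⟨j, hj⟩ := Function.ne_iff.1 hv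
    refine ⟨w, hw, ⟨_, by omega, hj⟩, fun s hs => ?_, fun s hs => ?_⟩
    · have hrow := Rmat_mulVec_apply (q := q) (k := k) hml a b hw ⟨l - m - 1 - s, by omega⟩
      rwa [hRv, if_pos (by dsimp only; omega), Nat.sub_sub_self (by omega), eq_comm] at hrow
    · have hrow := Rmat_mulVec_apply (q := q) (k := k) hml a b hw
        ⟨l - m + (k - m - 1 - s), by omega⟩
      rwa [hRv, if_neg (by dsimp only; omega), Nat.add_sub_cancel_left,
        Nat.sub_sub_self (by omega), eq_comm] at hrow
  · rintro ⟨w, hw, ⟨e, he, hwe⟩, hf, hg⟩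
    have hme : m ≤ e := not_lt.1 fun h => hwe (hw e h)
    refine ⟨fun j => w (k + l - m - 1 - j),
      Function.ne_iff.2 ⟨⟨k + l - m - 1 - e, by omega⟩, ?_⟩, funext fun i => ?_⟩
    · rwa [Nat.sub_sub_self (by omega)]
    · rw [Rmat_mulVec_apply hml a b hw]
      split_ifs with hi
      · exact hf _ (by omega)
      · exact hg _ (by omega)

end Subresultant

section Moore

variable {F ι : Type*} [Field F] [Fintype ι]

/-- The row `(x, x^q, …, x^{q^{N-1}})` of a Moore matrix. -/
def mooreRow (q N : ℕ) (x : F) : Fin N → F :=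
  fun e => x ^ q ^ e.val

lemma card_le_of_linearIndependent_mooreRow {q N : ℕ} {x : ι → F}
    (h : LinearIndependent F fun i => mooreRow q N (x i)) : Fintype.card ι ≤ N := by
  simpa using h.fintype_card_le_finrank

lemma exists_sum_mul_pow_eq_zero (q : ℕ) (x : ι → F) {N : ℕ} (hN : N < Fintype.card ι) :
    ∃ y : ι → F, y ≠ 0 ∧ ∀ e < N, ∑ i, y i * x i ^ q ^ e = 0 := by
  obtain ⟨y, hy, i, hi⟩ := Fintype.not_linearIndependent_iff.1
    fun h => hN.not_ge (card_le_of_linearIndependent_mooreRow (q := q) (x := x) h)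
  exact ⟨y, Function.ne_iff.2 ⟨i, hi⟩, fun e he => by
    simpa [mooreRow] using congrFun hy ⟨e, he⟩⟩

end Moore

lemma sum_mul_pow_periodic {F ι : Type*} [Field F] [Fintype F] [Fintype ι] {q n : ℕ}
    (hF : Fintype.card F = q ^ n) (x y : ι → F) :
    Function.Periodic (fun e => ∑ i, y i * x i ^ q ^ e) n := fun e => by
  simp only [pow_add, pow_mul, pow_right_comm _ (q ^ e), ← hF, FiniteField.pow_card]

section FiniteSubfield

variable {K F : Type*} [Field K] [Fintype K] [Field F] [Algebra K F]

lemma frobeniusAlgHom_pow_apply (e : ℕ) (x : F) :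
    (FiniteField.frobeniusAlgHom K F ^ e) x = x ^ Fintype.card K ^ e := by
  rw [AlgHom.coe_pow, FiniteField.coe_frobeniusAlgHom, pow_iterate]

section MooreIndependence

variable {ι : Type*} [Fintype ι] {x : ι → F}

-- A relation between the columns is a `q`-polynomial of degree less than `q^N` that vanishes on the
-- `K`-span of `x`, which has at least `q^N` elements.
lemma linearIndependent_moore_cols (hx : LinearIndependent K x) {N : ℕ}
    (hN : N ≤ Fintype.card ι) :
    LinearIndependent F fun (e : Fin N) (i : ι) => x i ^ Fintype.card K ^ e.val := by
  classical
  refine Fintype.linearIndependent_iff.2 fun c hc e => ?_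
  have hNpos : 0 < N := e.pos
  let P : Polynomial F :=
    ∑ e : Fin N, Polynomial.C (c e) * Polynomial.X ^ Fintype.card K ^ e.val
  have hPx : ∀ i, P.eval (x i) = 0 := fun i => by
    simpa [P, Polynomial.eval_finsetSum] using congrFun hc i
  have hPspan : ∀ z : ι → K, P.eval (∑ i, z i • x i) = 0 := fun z => by
    have heval : ∀ y : F, P.eval y =
        ∑ e : Fin N, c e * (FiniteField.frobeniusAlgHom K F ^ e.val) y := fun y => by
      simp [P, Polynomial.eval_finsetSum, frobeniusAlgHom_pow_apply]
    calc P.eval (∑ i, z i • x i) = ∑ i, z i • P.eval (x i) := by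
          simp only [heval, map_sum, map_smul, Finset.mul_sum, Finset.smul_sum, mul_smul_comm]
          exact Finset.sum_comm
      _ = 0 := by simp only [hPx, smul_zero, Finset.sum_const_zero]
  have hdeg : P.natDegree < Fintype.card (ι → K) := by
    rw [Fintype.card_fun]
    refine (Polynomial.natDegree_sum_le_of_forall_le (n := Fintype.card K ^ (N - 1)) _ _
      fun i _ => (Polynomial.natDegree_C_mul_X_pow_le _ _).trans ?_).trans_lt ?_
    · exact Nat.pow_le_pow_right Fintype.card_pos (by omega)
    · exact Nat.pow_lt_pow_right Fintype.one_lt_card (by omega)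
  have hP : P = 0 := Polynomial.eq_zero_of_natDegree_lt_card_of_eval_eq_zero P
    hx.fintypeLinearCombination_injective hPspan hdeg
  calc c e = P.coeff (Fintype.card K ^ e.val) := by
        simp [P, Polynomial.coeff_X_pow, Nat.pow_right_inj Fintype.one_lt_card, Fin.val_inj]
    _ = 0 := by rw [hP, Polynomial.coeff_zero]

theorem linearIndependent_mooreRow_iff (hx : LinearIndependent K x) {N : ℕ} :
    LinearIndependent F (fun i => mooreRow (Fintype.card K) N (x i)) ↔ Fintype.card ι ≤ N := by
  classical
  refine ⟨fun h => card_le_of_linearIndependent_mooreRow h, fun hN => ?_⟩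
  let A : Matrix ι ι F := Matrix.of fun i j => x i ^ Fintype.card K ^ (Fintype.equivFin ι j).val
  have hcols : LinearIndependent F A.col :=
    (linearIndependent_moore_cols hx le_rfl).comp _ (Fintype.equivFin ι).injective
  have hrows : LinearIndependent F A.row :=
    Matrix.linearIndependent_rows_iff_isUnit.2 (Matrix.linearIndependent_cols_iff_isUnit.1 hcols)
  exact LinearIndependent.of_comp
    (LinearMap.funLeft F F fun j => Fin.castLE hN (Fintype.equivFin ι j)) hrows

lemma eq_zero_of_sum_mul_pow_eq_zero (hx : LinearIndependent K x) {N : ℕ}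
    (hN : Fintype.card ι ≤ N) {y : ι → F}
    (h : ∀ e < N, ∑ i, y i * x i ^ Fintype.card K ^ e = 0) (i : ι) : y i = 0 :=
  Fintype.linearIndependent_iff.1 ((linearIndependent_mooreRow_iff hx).2 hN) y
    (funext fun e => by simpa [mooreRow] using h e e.isLt) i

end MooreIndependence

variable (F) in
/-- The coefficient sequence of the `q`-polynomial `x^{q^n} - x`, for `n ≠ 0`. -/
def powSubXCoeff (n : ℕ) : ℕ → F :=
  fun t => if t = n then 1 else if t = 0 then -1 else 0

lemma qPairing_pow_sub_X {n : ℕ} (hn : n ≠ 0) (w : ℕ → F) (s : ℕ) :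
    qPairing (Fintype.card K) n (powSubXCoeff F n) w s = w (s + n) - w s := by
  have hneg : (-1 : F) ^ Fintype.card K ^ s = -1 := by
    rw [← frobeniusAlgHom_pow_apply (K := K), map_neg, map_one]
  have hmid : ∀ t < n - 1,
      powSubXCoeff F n (t + 1) ^ Fintype.card K ^ s * w (s + (t + 1)) = 0 := fun t ht => by
    rw [powSubXCoeff, if_neg (by omega), if_neg (by omega), zero_pow (by simp), zero_mul]
  obtain ⟨n, rfl⟩ := Nat.exists_eq_succ_of_ne_zero hn
  rw [qPairing, Finset.sum_range_succ, Finset.sum_range_succ',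
    Finset.sum_eq_zero fun t ht => hmid t (by simpa using ht)]
  simp [powSubXCoeff, hneg, sub_eq_neg_add]

theorem det_Rmat_pow_sub_X_eq_zero_iff {n k m : ℕ} (hn : n ≠ 0) (hmk : m ≤ k) (hmn : m ≤ n)
    (a : ℕ → F) :
    (Rmat (Fintype.card K) k n m a (powSubXCoeff F n)).det = 0 ↔
      ∃ w : ℕ → F, w.Periodic n ∧ w ≠ 0 ∧ (∀ e < m, w e = 0) ∧
        ∀ s < n - m, qPairing (Fintype.card K) k a w s = 0 := by
  rw [det_Rmat_eq_zero_iff hmk hmn]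
  simp only [qPairing_pow_sub_X (K := K) hn, sub_eq_zero]
  constructor
  · rintro ⟨w, hw, ⟨e₀, he₀, hwe₀⟩, hf, hrec⟩
    have hmod : ∀ e < k + n - m, w (e % n) = w e := by
      intro e
      induction e using Nat.strong_induction_on with
      | h e ih =>
        intro he
        rcases lt_or_ge e n with hen | hen
        · rw [Nat.mod_eq_of_lt hen]
        · rw [Nat.mod_eq_sub_mod hen, ih (e - n) (by omega) (by omega),
            ← hrec (e - n) (by omega), Nat.sub_add_cancel hen]
    refine ⟨fun e => w (e % n), fun e => by simp, Function.ne_iff.2 ⟨e₀, ?_⟩,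
      fun e he => (hmod e (by omega)).trans (hw e he), fun s hs => ?_⟩
    · rwa [hmod e₀ he₀]
    · rw [qPairing_congr fun e he => hmod e (by omega), hf s hs]
  · rintro ⟨w, hper, hw0, hw, hf⟩
    obtain ⟨e, he⟩ := Function.ne_iff.1 hw0
    refine ⟨w, hw, ⟨e % n, ?_, by rwa [hper.map_mod_nat]⟩, hf, fun s _ => hper s⟩
    have := Nat.mod_lt e (Nat.pos_of_ne_zero hn)
    omega

variable (K) in
/-- The `K`-linear endomorphism of `F` induced by the `q`-polynomial `∑_{t ≤ k} a_t x^{q^t}`,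
where `q = |K|`. -/
noncomputable def qMap (k : ℕ) (a : ℕ → F) : F →ₗ[K] F :=
  ∑ t ∈ Finset.range (k + 1), a t • (FiniteField.frobeniusAlgHom K F ^ t).toLinearMap

lemma qMap_apply (k : ℕ) (a : ℕ → F) (x : F) :
    qMap K k a x = ∑ t ∈ Finset.range (k + 1), a t * x ^ Fintype.card K ^ t := by
  simp only [qMap, LinearMap.sum_apply, LinearMap.smul_apply, AlgHom.toLinearMap_apply,
    frobeniusAlgHom_pow_apply, smul_eq_mul]

lemma qPairing_sum_mul_pow {ι : Type*} [Fintype ι] (k : ℕ) (a : ℕ → F) (x y : ι → F) (s : ℕ) :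
    qPairing (Fintype.card K) k a (fun e => ∑ i, y i * x i ^ Fintype.card K ^ e) s =
      ∑ i, y i * qMap K k a (x i) ^ Fintype.card K ^ s := by
  simp only [qPairing, qMap_apply, ← frobeniusAlgHom_pow_apply (K := K) s, map_sum, map_mul,
    Finset.mul_sum]
  rw [Finset.sum_comm]
  refine Finset.sum_congr rfl fun i _ => Finset.sum_congr rfl fun t _ => ?_
  rw [frobeniusAlgHom_pow_apply, frobeniusAlgHom_pow_apply, ← pow_mul, ← pow_add, add_comm t s,
    mul_left_comm]

lemma natCard_roots_eq_pow_finrank_ker [Module.Finite K F] (k : ℕ) (a : ℕ → F) :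
    Nat.card {x : F // ∑ i ∈ Finset.range (k + 1), a i * x ^ Fintype.card K ^ i = 0} =
      Fintype.card K ^ Module.finrank K (LinearMap.ker (qMap K k a)) := by
  simp only [← qMap_apply, ← LinearMap.mem_ker]
  rw [Module.natCard_eq_pow_finrank (K := K), Nat.card_eq_fintype_card]

section Kernel

variable [Fintype F] {n k m : ℕ}

lemma finrank_eq_of_card_eq_pow (hF : Fintype.card F = Fintype.card K ^ n) :
    Module.finrank K F = n :=
  Nat.pow_right_injective Fintype.one_lt_card (Module.card_eq_pow_finrank.symm.trans hF)

lemma exists_eq_sum_mul_pow {ι : Type*} [Fintype ι] (hF : Fintype.card F = Fintype.card K ^ n)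
    (b : Module.Basis ι K F) {w : ℕ → F} (hw : w.Periodic n) :
    ∃ y : ι → F, w = fun e => ∑ i, y i * b i ^ Fintype.card K ^ e := by
  have hcard : Fintype.card ι = n :=
    (Module.finrank_eq_card_basis b).symm.trans (finrank_eq_of_card_eq_pow hF)
  have hn : 0 < n := hcard ▸ Fintype.card_pos_iff.2 b.index_nonempty
  have hspan := LinearIndependent.span_eq_top_of_card_eq_finrank'
    ((linearIndependent_mooreRow_iff b.linearIndependent).2 hcard.le)
    (by rw [hcard, Module.finrank_fin_fun])
  obtain ⟨y, hy⟩ := (Submodule.mem_span_range_iff_exists_fun F).1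
    (hspan ▸ Submodule.mem_top : (fun e : Fin n => w e) ∈ _)
  refine ⟨y, funext fun e => ?_⟩
  rw [← hw.map_mod_nat, ← (sum_mul_pow_periodic hF b y).map_mod_nat e]
  simpa [mooreRow] using (congrFun hy ⟨e % n, Nat.mod_lt e hn⟩).symm

theorem det_Rmat_eq_zero_of_lt_finrank_ker (hF : Fintype.card F = Fintype.card K ^ n)
    (hmk : m ≤ k) (a : ℕ → F) (hm : m < Module.finrank K (LinearMap.ker (qMap K k a))) :
    (Rmat (Fintype.card K) k n m a (powSubXCoeff F n)).det = 0 := by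
  have hdn := (LinearMap.ker (qMap K k a)).finrank_le
  rw [finrank_eq_of_card_eq_pow hF] at hdn
  let b := Module.finBasis K (LinearMap.ker (qMap K k a))
  have hb : LinearIndependent K fun i => (b i : F) :=
    b.linearIndependent.map' _ (Submodule.ker_subtype _)
  obtain ⟨y, hy0, hy⟩ := exists_sum_mul_pow_eq_zero (Fintype.card K) (fun i => (b i : F))
    (hm.trans_eq (Fintype.card_fin _).symm)
  refine (det_Rmat_pow_sub_X_eq_zero_iff (by omega) hmk (by omega) a).2
    ⟨fun e => ∑ i, y i * (b i : F) ^ Fintype.card K ^ e, sum_mul_pow_periodic hF _ y,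
      fun hw => hy0 ?_, hy, fun s _ => ?_⟩
  · exact funext (eq_zero_of_sum_mul_pow_eq_zero hb le_rfl fun e _ => congrFun hw e)
  · rw [qPairing_sum_mul_pow]
    refine Finset.sum_eq_zero fun i _ => ?_
    rw [LinearMap.mem_ker.1 (b i).2, zero_pow (by simp), mul_zero]

theorem det_Rmat_ne_zero_of_finrank_ker_eq (hF : Fintype.card F = Fintype.card K ^ n)
    (hmk : m ≤ k) (a : ℕ → F) (hm : Module.finrank K (LinearMap.ker (qMap K k a)) = m) :
    (Rmat (Fintype.card K) k n m a (powSubXCoeff F n)).det ≠ 0 := by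
  have hdim := (LinearMap.ker (qMap K k a)).finrank_quotient_add_finrank
  rw [finrank_eq_of_card_eq_pow hF] at hdim
  have hn : 0 < n := finrank_eq_of_card_eq_pow (K := K) hF ▸ Module.finrank_pos
  rw [Ne, det_Rmat_pow_sub_X_eq_zero_iff hn.ne' hmk (by omega)]
  rintro ⟨w, hper, hw0, hw, hf⟩
  let bKer := Module.finBasis K (LinearMap.ker (qMap K k a))
  let bQuot := Module.finBasis K (F ⧸ LinearMap.ker (qMap K k a))
  obtain ⟨y, rfl⟩ := exists_eq_sum_mul_pow hF (bKer.sumQuot bQuot) hper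
  simp only [Fintype.sum_sum_type, Module.Basis.sumQuot_inl] at hw0 hw
  have hquot : ∀ j, y (Sum.inr j) = 0 := by
    have hind := linearIndependent_map_sumQuot_inr (qMap K k a) bKer bQuot
    refine eq_zero_of_sum_mul_pow_eq_zero hind (N := n - m)
      (by rw [Fintype.card_fin]; omega) fun s hs => ?_
    have hs0 := hf s hs
    rw [qPairing_sum_mul_pow, Fintype.sum_sum_type] at hs0
    simpa only [Module.Basis.sumQuot_inl, LinearMap.map_coe_ker,
      zero_pow (pow_ne_zero s Fintype.card_ne_zero), mul_zero, Finset.sum_const_zero,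
      zero_add] using hs0
  simp only [hquot, zero_mul, Finset.sum_const_zero, add_zero] at hw0 hw
  have hker : ∀ i, y (Sum.inl i) = 0 := by
    have hind : LinearIndependent K fun i => (bKer i : F) :=
      bKer.linearIndependent.map' _ (Submodule.ker_subtype _)
    exact eq_zero_of_sum_mul_pow_eq_zero hind (by rw [Fintype.card_fin, hm]) hw
  exact hw0 (funext fun e => by simp only [hker, zero_mul, Finset.sum_const_zero, Pi.zero_apply])

theorem finrank_ker_eq_iff_det_Rmat (hF : Fintype.card F = Fintype.card K ^ n) (hmk : m ≤ k)
    (a : ℕ → F) :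
    Module.finrank K (LinearMap.ker (qMap K k a)) = m ↔
      (∀ m' < m, (Rmat (Fintype.card K) k n m' a (powSubXCoeff F n)).det = 0) ∧
        (Rmat (Fintype.card K) k n m a (powSubXCoeff F n)).det ≠ 0 := by
  constructor
  · intro h
    exact ⟨fun m' hm' => det_Rmat_eq_zero_of_lt_finrank_ker hF (hm'.le.trans hmk) a (h ▸ hm'),
      det_Rmat_ne_zero_of_finrank_ker_eq hF hmk a h⟩
  · rintro ⟨hlt, hm⟩
    rcases lt_trichotomy (Module.finrank K (LinearMap.ker (qMap K k a))) m with h | h | h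
    · exact absurd (hlt _ h) (det_Rmat_ne_zero_of_finrank_ker_eq hF (h.le.trans hmk) a rfl)
    · exact h
    · exact absurd (det_Rmat_eq_zero_of_lt_finrank_ker hF hmk a h) hm

end Kernel

end FiniteSubfield

lemma exists_algebra_card_eq {F : Type*} [Field F] [Fintype F] {q n : ℕ}
    (hF : Fintype.card F = q ^ n) :
    ∃ (K : Type) (_ : Field K) (_ : Fintype K) (_ : Algebra K F), Fintype.card K = q := by
  obtain ⟨p, _, N, hp, hN⟩ := FiniteField.card' F
  have : Fact p.Prime := ⟨hp⟩
  have hqn : q ^ n ≠ 1 := hF ▸ Fintype.one_lt_card.ne'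
  have hn : n ≠ 0 := by
    rintro rfl
    exact hqn (pow_zero q)
  obtain ⟨j, -, rfl⟩ := (Nat.dvd_prime_pow hp).1 ((dvd_pow_self q hn).trans (hF ▸ hN).dvd)
  have hj : j ≠ 0 := by
    rintro rfl
    exact hqn (by simp)
  let _ : Algebra (ZMod p) F := ZMod.algebra F p
  have hfin : Module.finrank (ZMod p) F = j * n :=
    Nat.pow_right_injective hp.two_le
      ((FiniteField.pow_finrank_eq_card p F).trans (hF.trans (pow_mul p j n).symm))
  obtain ⟨φ⟩ := FiniteField.nonempty_algHom_of_finrank_dvd (F := ZMod p) (K := GaloisField p j)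
    (L := F) (by rw [GaloisField.finrank p hj, hfin]; exact dvd_mul_right j n)
  exact ⟨GaloisField p j, inferInstance, Fintype.ofFinite _, φ.toRingHom.toAlgebra,
    by rw [Fintype.card_eq_nat_card, GaloisField.card p j hj]⟩

theorem stmt_4_general {q n k : ℕ} {F : Type*} [Field F] [Fintype F]
    (hF : Fintype.card F = q ^ n) (a : ℕ → F) {μ : ℕ} (hμ : μ ≤ k) :
    Nat.card {x : F // ∑ i ∈ Finset.range (k + 1), a i * x ^ q ^ i = 0} = q ^ μ ↔
      (∀ m, m < μ →
          (Rmat q k n m a (fun t => if t = n then 1 else if t = 0 then -1 else 0)).det = 0) ∧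
        (Rmat q k n μ a (fun t => if t = n then 1 else if t = 0 then -1 else 0)).det ≠ 0 := by
  obtain ⟨K, _, _, _, rfl⟩ := exists_algebra_card_eq hF
  rw [natCard_roots_eq_pow_finrank_ker, Nat.pow_right_inj Fintype.one_lt_card]
  exact finrank_ker_eq_iff_det_Rmat hF hμ a

/-- Corollary: for a `q`-polynomial `f = ∑_{i=0}^k a_i x^{q^i} ∈ F_{q^n}[x]` with
`a_k ≠ 0`, `k ≤ n-1`, and `g(x) = x^{q^n} - x` (coefficients `b_n = 1`, `b_0 = -1`,
else `0`), and `0 ≤ μ ≤ k`: the `F_q`-dimension of the kernel of the `F_q`-linear map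
induced by `f` equals `μ` (i.e. the kernel has `q^μ` elements) iff
`det R_{0,q}(f,g) = ⋯ = det R_{μ-1,q}(f,g) = 0` and `det R_{μ,q}(f,g) ≠ 0`. -/
theorem stmt_4 (p e q n k : ℕ) (hp : p.Prime) (he : 0 < e) (hq : q = p ^ e)
    (hn : 0 < n) (F : Type*) [Field F] [Fintype F] (hF : Fintype.card F = q ^ n)
    (a : ℕ → F) (hk : k ≤ n - 1) (hak : a k ≠ 0) (μ : ℕ) (hμ : μ ≤ k) :
    Nat.card {x : F // ∑ i ∈ Finset.range (k + 1), a i * x ^ q ^ i = 0} = q ^ μ ↔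
      (∀ m, m < μ →
          (Rmat q k n m a (fun t => if t = n then 1 else if t = 0 then -1 else 0)).det = 0) ∧
        (Rmat q k n μ a (fun t => if t = n then 1 else if t = 0 then -1 else 0)).det ≠ 0 :=
  stmt_4_general hF a hμ
end

section
/- Let F be a field (or commutative ring), let 0 < l ≤ k be integers, let A and C be k×l matrices over F, and let B be a k×(k−l) matrix over F. Let M be the (k+l)×(k+l) block matrix M = [[A, B, C], [I_l, O, −I_l]], where I_l is the l×l identity matrix and O is the l×(k−l) zero matrix, and let N be the k×k block matrix N = [B | A+C]. Then det(M) = (−1)^{l(k−l+1)} det(N). -/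
/-!
Moving the first `l` columns of `M` past the remaining `k` is the `l`-fold rotation of the columns,
of sign `(-1) ^ (k * l)`, and turns `M` into `[[P, A], [E, 1]]` with `P = [B | C]` and
`E = [0 | -1]`. The determinant of the latter is that of the Schur complement
`P - A * E = [B | A + C]`. The exponents `k * l` and `l * (k - l + 1)` have the same parity because
`l * (l - 1)` is even.
-/

open Equiv Matrix

lemma val_finRotate_pow_apply (n l : ℕ) (i : Fin n) :
    ((finRotate n ^ l) i).val = (i.val + l) % n := by
  induction l with
  | zero => simp [Nat.mod_eq_of_lt i.isLt]
  | succ l ih =>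
    have := i.neZero
    rw [pow_succ', Perm.mul_apply, finRotate_apply, Fin.val_add, ih, Fin.val_one']
    simp [Nat.add_assoc]

lemma finRotate_add_pow (k l : ℕ) :
    finRotate (k + l) ^ l = finAddFlip.trans (finCongr (Nat.add_comm l k)) := by
  ext i
  rw [val_finRotate_pow_apply]
  induction i using Fin.addCases with
  | left i => simp [Nat.add_comm _ l, Nat.mod_eq_of_lt]
  | right i =>
    have hi : k + i.val + l = i.val + (k + l) := by omega
    have hi_lt : i.val < k + l := by omega
    simp [hi, Nat.mod_eq_of_lt hi_lt]

lemma sign_finAddFlip_trans_finCongr (k l : ℕ) :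
    Perm.sign (finAddFlip.trans (finCongr (Nat.add_comm l k))) = (-1) ^ (k * l) := by
  rw [← finRotate_add_pow, map_pow, sign_finRotate, ← pow_mul]
  apply neg_one_pow_congr
  cases l <;> grind

/-- The identification of `Fin a ⊕ Fin b` with `Fin n`, for `a + b = n`, that puts the indices from
`Fin a` first; it splits rows or columns into two blocks. Keeping `n` separate from `a + b` lets
blocks of sizes `l`, `k` index `Fin (k + l)`, and blocks of sizes `k - l`, `l` index `Fin k`. -/
def finSumFinEquivOfAddEq {a b n : ℕ} (h : a + b = n) : Fin a ⊕ Fin b ≃ Fin n :=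
  finSumFinEquiv.trans (finCongr h)

section FinSumFin

variable {a b n : ℕ} (h : a + b = n)

@[simp]
lemma val_finSumFinEquivOfAddEq_inl (i : Fin a) :
    (finSumFinEquivOfAddEq h (Sum.inl i)).val = i.val := by
  simp [finSumFinEquivOfAddEq]

@[simp]
lemma val_finSumFinEquivOfAddEq_inr (j : Fin b) :
    (finSumFinEquivOfAddEq h (Sum.inr j)).val = a + j.val := by
  simp [finSumFinEquivOfAddEq]

end FinSumFin

lemma sign_sumComm_trans_finSumFinEquivOfAddEq (k l : ℕ) :
    Perm.sign (((sumComm (Fin k) (Fin l)).trans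
      (finSumFinEquivOfAddEq (Nat.add_comm l k))).trans finSumFinEquiv.symm) =
      (-1) ^ (k * l) := by
  rw [← Perm.sign_permCongr finSumFinEquiv, ← sign_finAddFlip_trans_finCongr]
  congr 1
  ext i
  simp [finAddFlip, finSumFinEquivOfAddEq]

section BlockDeterminant

variable {R : Type*} [CommRing R]

lemma fromCols_sub_mul_fromCols_zero_neg_one {m n p : Type*} [Fintype n] [DecidableEq n]
    (A C : Matrix m n R) (B : Matrix m p R) :
    fromCols B C - A * fromCols (0 : Matrix n p R) (-1 : Matrix n n R) = fromCols B (A + C) := by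
  rw [mul_fromCols]
  ext i (j | j) <;> simp [add_comm]

variable {k l : ℕ}

theorem det_reindex_fromBlocks_one₂₁ (A : Matrix (Fin k) (Fin l) R)
    (P : Matrix (Fin k) (Fin k) R) (E : Matrix (Fin l) (Fin k) R) :
    (reindex finSumFinEquiv (finSumFinEquivOfAddEq (Nat.add_comm l k))
      (fromBlocks A P 1 E)).det = (-1) ^ (k * l) * (P - A * E).det := by
  let c := finSumFinEquivOfAddEq (Nat.add_comm l k)
  have hswap : reindex finSumFinEquiv c (fromBlocks A P 1 E) =
      reindex finSumFinEquiv ((sumComm _ _).trans c) (fromBlocks P A E 1) := by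
    rw [← symm_apply_eq]
    ext (i | i) (j | j) <;> simp
  rw [hswap, det_reindex, sign_sumComm_trans_finSumFinEquivOfAddEq, det_fromBlocks_one₂₂]
  simp

theorem det_reindex_fromBlocks_fromCols {p : Type*} (A C : Matrix (Fin k) (Fin l) R)
    (B : Matrix (Fin k) p R) (f : Fin k → p ⊕ Fin l) :
    (reindex finSumFinEquiv (finSumFinEquivOfAddEq (Nat.add_comm l k))
      (fromBlocks A ((fromCols B C).submatrix id f) 1
        ((fromCols 0 (-1)).submatrix id f))).det =
      (-1) ^ (k * l) * ((fromCols B (A + C)).submatrix id f).det := by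
  rw [det_reindex_fromBlocks_one₂₁, ← fromCols_sub_mul_fromCols_zero_neg_one]
  rfl

end BlockDeterminant

/-- Corollary (block determinant identity): for `0 < l ≤ k`, `k×l` matrices `A, C`, and a
`k×(k-l)` matrix `B`, the `(k+l)×(k+l)` block matrix `M = [[A, B, C], [I_l, O, -I_l]]`
and the `k×k` block matrix `N = [B | A+C]` satisfy
`det M = (-1)^(l(k-l+1)) det N`. -/
theorem stmt_5 (R : Type*) [CommRing R] (k l : ℕ) (hl : 0 < l) (hlk : l ≤ k)
    (A C : Matrix (Fin k) (Fin l) R) (B : Matrix (Fin k) (Fin (k - l)) R) :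
    (Matrix.of fun i j : Fin (k + l) =>
        if hi : i.val < k then
          if hj : j.val < l then A ⟨i.val, hi⟩ ⟨j.val, hj⟩
          else if hj2 : j.val < k then B ⟨i.val, hi⟩ ⟨j.val - l, by omega⟩
          else C ⟨i.val, hi⟩ ⟨j.val - k, by have := j.isLt; omega⟩
        else
          if j.val < l then (if j.val = i.val - k then (1 : R) else 0)
          else if j.val < k then 0
          else (if j.val - k = i.val - k then -1 else 0)).det =
      (-1) ^ (l * (k - l + 1)) *
        (Matrix.of fun i j : Fin k =>
          if hj : j.val < k - l then B i ⟨j.val, hj⟩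
          else A i ⟨j.val - (k - l), by have := j.isLt; omega⟩
            + C i ⟨j.val - (k - l), by have := j.isLt; omega⟩).det := by
  set M : Matrix (Fin (k + l)) (Fin (k + l)) R := Matrix.of _ with hM
  set N : Matrix (Fin k) (Fin k) R := Matrix.of _ with hN
  let c := finSumFinEquivOfAddEq (Nat.add_comm l k)
  let e := finSumFinEquivOfAddEq (Nat.sub_add_cancel hlk)
  have hM_blocks : M = reindex finSumFinEquiv c (fromBlocks A
      ((fromCols B C).submatrix id e.symm) 1 ((fromCols 0 (-1)).submatrix id e.symm)) := by
    rw [← symm_apply_eq]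
    ext i (j | j)
    · cases i <;> simp [hM, c, one_apply, Fin.ext_iff, eq_comm]
    · obtain ⟨j, rfl⟩ := e.surjective j
      have hB_lt (j : Fin (k - l)) : l + j.val < k := by omega
      have hC_val (j : Fin l) : l + (k - l + j.val) = k + j.val := by omega
      have hC_not_lt (j : Fin l) : ¬ k + j.val < l := by omega
      cases i <;> cases j <;>
        simp [hM, c, e, hB_lt, hC_val, hC_not_lt, one_apply, Fin.ext_iff, eq_comm, neg_ite]
  have hN_cols : N = (fromCols B (A + C)).submatrix id e.symm := by
    ext i j
    obtain ⟨j, rfl⟩ := e.surjective j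
    cases j <;> simp [hN, e]
  have hparity : (-1 : R) ^ (k * l) = (-1) ^ (l * (k - l + 1)) :=
    neg_one_pow_congr (by grind)
  rw [hM_blocks, hN_cols, ← hparity]
  exact det_reindex_fromBlocks_fromCols A C B e.symm
end

section
/- Let q be a prime power, let n ≥ 1, let s be an integer with gcd(s,n) = 1, put σ = q^s, and let f(x) = Σ_{i=0}^{n−1} a_i x^{q^i} ∈ F_{q^n}[x]. Let P be the n×n permutation matrix such that for every n×n matrix A, the i-th row of PA is the (s·i mod n)-th row of A. Then P D(f) P^{−1} = D_σ(g), where g(x) = Σ_{i=0}^{n−1} a_{(s·i) mod n} x^{σ^i}; in particular, the rank of D(f) equals the rank of the σ-Dickson matrix obtained by this conjugation. -/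
/-!
Conjugation by the permutation matrix of `π : i ↦ s * i mod n` turns `D(f)` into the matrix with
`(i, j)` entry `D(f) (π i) (π j)`. The coefficient index of this entry is
`s * j - s * i = s * (j - i)` modulo `n`, and its exponent `q ^ (s * i mod n)` may be replaced by
`q ^ (s * i) = σ ^ i`, because iterating `x ↦ x ^ q` is `n`-periodic at each coefficient.
-/

/-- The full `σ`-Dickson matrix of `g = ∑_{i=0}^{n-1} b_i x^{σ^i}`: the `n × n` matrix
with `(i,j)` entry `b_((j-i) mod n) ^ (σ ^ i)` (first argument playing the role of `σ`;
with `σ = q` this is the ordinary Dickson matrix). -/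
noncomputable def dickFull (σ n : ℕ) {F : Type*} [Field F] (a : ℕ → F) :
    Matrix (Fin n) (Fin n) F :=
  Matrix.of fun i j => a ((j.val + n - i.val) % n) ^ σ ^ i.val

/-- Multiplication by `s` modulo `n` on the index type `Fin n`, for an arbitrary `s`; it reindexes
the rows and columns of a Dickson matrix. -/
def mulMod (n s : ℕ) (i : Fin n) : Fin n :=
  ⟨(s * i.val) % n, Nat.mod_lt _ i.pos⟩

lemma mulMod_bijective {n s : ℕ} (hs : s.Coprime n) : Function.Bijective (mulMod n s) := by
  refine Finite.injective_iff_bijective.mp fun i j hij => Fin.ext ?_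
  have hmul : s * i.val ≡ s * j.val [MOD n] := congrArg Fin.val hij
  have hmod : i.val ≡ j.val [MOD n] := Nat.ModEq.cancel_left_of_coprime hs.symm hmul
  exact hmod.eq_of_lt_of_lt i.isLt j.isLt

/-- `mulMod n s` as a permutation, for `s` coprime to `n`; its permutation matrix is the matrix
`P` of the theorem. -/
noncomputable def mulModPerm {n s : ℕ} (hs : s.Coprime n) : Equiv.Perm (Fin n) :=
  Equiv.ofBijective (mulMod n s) (mulMod_bijective hs)

lemma coe_mulModPerm {n s : ℕ} (hs : s.Coprime n) : ⇑(mulModPerm hs) = mulMod n s :=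
  rfl

lemma permMatrix_mulModPerm (R : Type*) [Zero R] [One R] {n s : ℕ} (hs : s.Coprime n) :
    (mulModPerm hs).permMatrix R =
      Matrix.of fun i t : Fin n => if t.val = (s * i.val) % n then (1 : R) else 0 := by
  ext i t
  simp [PEquiv.toMatrix_apply, coe_mulModPerm, mulMod, Fin.ext_iff, eq_comm]

section PermutationMatrix

variable {ι R : Type*} [Fintype ι] [DecidableEq ι] [CommRing R]

lemma inv_permMatrix (π : Equiv.Perm ι) : (π.permMatrix R)⁻¹ = π⁻¹.permMatrix R := by
  apply Matrix.inv_eq_right_inv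
  rw [← Matrix.permMatrix_mul, inv_mul_cancel, Matrix.permMatrix_one]

lemma permMatrix_mul_mul_inv (π : Equiv.Perm ι) (A : Matrix ι ι R) :
    π.permMatrix R * A * (π.permMatrix R)⁻¹ = A.submatrix π π := by
  rw [inv_permMatrix, PEquiv.toMatrix_toPEquiv_mul, PEquiv.mul_toMatrix_toPEquiv,
    Matrix.submatrix_submatrix]
  rfl

end PermutationMatrix

lemma pow_pow_mod_of_pow_pow_eq_self {M : Type*} [Monoid M] {x : M} {q n : ℕ}
    (hx : x ^ q ^ n = x) (m : ℕ) : x ^ q ^ (m % n) = x ^ q ^ m := by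
  have hperiodic : Function.IsPeriodicPt (· ^ q) n x := by
    simpa only [Function.IsPeriodicPt, Function.IsFixedPt, pow_iterate] using hx
  simpa only [pow_iterate] using hperiodic.iterate_mod_apply m

lemma mul_mod_add_sub_mul_mod {n i : ℕ} (hi : i < n) (s j : ℕ) :
    ((s * j) % n + n - (s * i) % n) % n = (s * (j + n - i)) % n := by
  have hle : (s * i) % n ≤ (s * j) % n + n := (Nat.mod_lt _ (by lia)).le.trans le_add_self
  refine Nat.ModEq.add_right_cancel (Nat.mod_modEq (s * i) n) ?_
  calc (s * j) % n + n - (s * i) % n + (s * i) % n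
      = (s * j) % n + n := Nat.sub_add_cancel hle
    _ ≡ s * j + s * n [MOD n] := (Nat.mod_modEq _ _).add (by simp [Nat.ModEq])
    _ = s * (j + n - i) + s * i := by
      rw [← mul_add, ← mul_add, Nat.sub_add_cancel (by lia)]

lemma dickFull_submatrix_mulMod {F : Type*} [Field F] {q n : ℕ} {a : ℕ → F}
    (ha : ∀ i < n, a i ^ q ^ n = a i) (s : ℕ) :
    (dickFull q n a).submatrix (mulMod n s) (mulMod n s) =
      dickFull (q ^ s) n (fun i => a ((s * i) % n)) := by
  ext i j
  simp only [dickFull, mulMod, Matrix.submatrix_apply, Matrix.of_apply]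
  rw [mul_mod_add_sub_mul_mod i.isLt, Nat.mul_mod_mod, ← pow_mul,
    pow_pow_mod_of_pow_pow_eq_self (ha _ (Nat.mod_lt _ i.pos))]

theorem stmt_9_general (q n s : ℕ) (hs : s.Coprime n) (F : Type*) [Field F] (a : ℕ → F)
    (ha : ∀ i < n, a i ^ q ^ n = a i) :
    (Matrix.of fun i t : Fin n => if t.val = (s * i.val) % n then (1 : F) else 0)
          * dickFull q n a
          * (Matrix.of fun i t : Fin n => if t.val = (s * i.val) % n then (1 : F) else 0)⁻¹
        = dickFull (q ^ s) n (fun i => a ((s * i) % n)) ∧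
      (dickFull q n a).rank = (dickFull (q ^ s) n (fun i => a ((s * i) % n))).rank := by
  have hsubmatrix : (dickFull q n a).submatrix (mulModPerm hs) (mulModPerm hs) =
      dickFull (q ^ s) n (fun i => a ((s * i) % n)) := dickFull_submatrix_mulMod ha s
  rw [← permMatrix_mulModPerm F hs, permMatrix_mul_mul_inv, ← hsubmatrix, Matrix.rank_submatrix]
  exact ⟨rfl, rfl⟩

/-- With `σ = q^s`, `gcd(s,n) = 1`, `f = ∑_{i=0}^{n-1} a_i x^{q^i} ∈ F_{q^n}[x]`, and `P`
the permutation matrix whose `i`-th row of `P·A` is the `(s·i mod n)`-th row of `A`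
(i.e. `P i t = δ_{t, s·i mod n}`), one has `P · D(f) · P⁻¹ = D_σ(g)` where
`g = ∑_{i=0}^{n-1} a_{(s·i) mod n} x^{σ^i}`; in particular `rank D(f) = rank D_σ(g)`. -/
theorem stmt_9 (p e q n s : ℕ) (hp : p.Prime) (he : 0 < e) (hq : q = p ^ e)
    (hn : 0 < n) (hs : Nat.gcd s n = 1)
    (F : Type*) [Field F] [Fintype F] (hF : Fintype.card F = q ^ n)
    (a : ℕ → F) :
    (Matrix.of fun i t : Fin n => if t.val = (s * i.val) % n then (1 : F) else 0)
          * dickFull q n a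
          * (Matrix.of fun i t : Fin n => if t.val = (s * i.val) % n then (1 : F) else 0)⁻¹
        = dickFull (q ^ s) n (fun i => a ((s * i) % n)) ∧
      (dickFull q n a).rank = (dickFull (q ^ s) n (fun i => a ((s * i) % n))).rank :=
  stmt_9_general q n s hs F a fun i _ => hF ▸ FiniteField.pow_card (a i)
end

section
/- Let q be a prime power, let n ≥ 1, and let f(x) = Σ_{i=0}^{n−1} a_i x^{q^i} ∈ F_{q^n}[x]. Let H(y) be the n×n matrix with polynomial entries obtained from the Dickson matrix D(f) by replacing each diagonal entry a_0^{q^i} by y^{q^i}, and let H_0(y) ∈ F_{q^n}[y] be its determinant. Then every root of H_0(y) in the algebraic closure of F_q lies in F_{q^n}. -/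
/-!
Replacing the diagonal of the Dickson matrix `D(f)` amounts to replacing the coefficient `a₀` by
`z`, so `M = H(z)` is again a Dickson matrix. Let `φ` be the `q`-power map. As `a₁, …, aₙ₋₁` are
fixed by `φⁿ`, shifting both indices of `M` cyclically by one gives `φ(M) + c E`, where
`c = z - z^{qⁿ}` and `E` is the matrix unit at the last diagonal position.

Suppose `det M = 0`. If every kernel vector of `M` vanished at the last coordinate, then the kernel
would be stable under `v ↦ φ(v)` shifted by one, so its elements would vanish at every coordinate.
Hence some kernel vector of `M`, and likewise of `Mᵀ`, is nonzero at the last coordinate. For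
`c ≠ 0` this forces `rank (φ(M) + c E) > rank φ(M)`, yet both ranks equal `rank M`. So
`z^{qⁿ} = z`, i.e. `z ∈ F_{qⁿ}`.
-/

open Matrix

section Rank

variable {K L m n : Type*} [Field K] [Field L] [Fintype n]

lemma rank_le_rank_map [Finite m] (φ : K →+* L) (M : Matrix m n K) :
    M.rank ≤ (M.map φ).rank := by
  let := φ.toAlgebra
  obtain ⟨w, hw, -, hli⟩ := Submodule.exists_fun_fin_finrank_span_eq K (Set.range M.col)
  have hli' : LinearIndependent L fun i ↦ φ ∘ w i := linearIndependent_algebraMap_comp_iff.mpr hli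
  have hcol : Set.range (fun i ↦ φ ∘ w i) ⊆ Set.range (M.map φ).col := by
    rintro _ ⟨i, rfl⟩
    obtain ⟨j, hj⟩ := hw i
    exact ⟨j, congrArg (φ ∘ ·) hj⟩
  calc
    M.rank = Module.finrank L (Submodule.span L (Set.range fun i ↦ φ ∘ w i)) := by
      rw [finrank_span_eq_card hli', Fintype.card_fin, M.rank_eq_finrank_span_cols]
    _ ≤ (M.map φ).rank := by
      rw [(M.map φ).rank_eq_finrank_span_cols]
      exact Submodule.finrank_mono (Submodule.span_mono hcol)

lemma rank_lt_rank_add_single [DecidableEq n] {A : Matrix n n K} {u v : n → K} {k : n} {c : K}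
    (hu : u ᵥ* A = 0) (huk : u k ≠ 0) (hv : A *ᵥ v = 0) (hvk : v k ≠ 0) (hc : c ≠ 0) :
    A.rank < (A + single k k c).rank := by
  have hmem : Pi.single k 1 ∈ LinearMap.range (A + single k k c).mulVecLin := by
    refine ⟨(c * v k)⁻¹ • v, ?_⟩
    rw [map_smul, mulVecLin_apply, add_mulVec, hv, zero_add, single_mulVec_eq,
      inv_smul_smul₀ (mul_ne_zero hc hvk)]
  have hnotMem : Pi.single k 1 ∉ LinearMap.range A.mulVecLin := by
    rintro ⟨w, hw⟩
    apply huk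
    calc
      u k = u ⬝ᵥ (A *ᵥ w) := by rw [← mulVecLin_apply, hw, dotProduct_single_one]
      _ = 0 := by rw [dotProduct_mulVec, hu, zero_dotProduct]
  have hle : LinearMap.range A.mulVecLin ≤ LinearMap.range (A + single k k c).mulVecLin := by
    rintro _ ⟨w, rfl⟩
    have hw : A *ᵥ w = (A + single k k c) *ᵥ w - (c * w k) • Pi.single k 1 := by
      rw [add_mulVec, single_mulVec_eq, add_sub_cancel_right]
    rw [mulVecLin_apply, hw]
    exact sub_mem (LinearMap.mem_range_self (A + single k k c).mulVecLin w)
      (Submodule.smul_mem _ _ hmem)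
  exact Submodule.finrank_lt_finrank_of_lt (SetLike.lt_iff_le_and_exists.mpr
    ⟨hle, _, hmem, hnotMem⟩)

end Rank

lemma map_mulVec_comp_eq_zero {R S m n : Type*} [NonAssocSemiring R] [NonAssocSemiring S]
    [Fintype n] (φ : R →+* S) {A : Matrix m n R} {v : n → R} (hv : A *ᵥ v = 0) :
    A.map φ *ᵥ (φ ∘ v) = 0 := by
  ext i
  rw [← RingHom.map_mulVec, hv, Pi.zero_apply, map_zero, Pi.zero_apply]

section TwistedShift

variable {K ι : Type*} [Field K] [Fintype ι] [DecidableEq ι] {φ : K →+* K} {σ : Equiv.Perm ι}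
  {M : Matrix ι ι K} {k : ι} {c : K}

lemma mulVec_comp_symm_eq_zero (hM : M.submatrix σ σ = M.map φ + single k k c) {v : ι → K}
    (hv : M *ᵥ v = 0) (hvk : v k = 0) : M *ᵥ (φ ∘ v ∘ σ.symm) = 0 := by
  have hcomp : (M *ᵥ (φ ∘ v ∘ σ.symm)) ∘ σ = 0 := by
    rw [← Function.comp_assoc, ← submatrix_mulVec_equiv, hM, add_mulVec,
      map_mulVec_comp_eq_zero φ hv, single_mulVec_eq, Function.comp_apply, hvk, map_zero, mul_zero,
      zero_smul, add_zero]
  simpa only [Function.comp_assoc, Equiv.self_comp_symm, Function.comp_id, Pi.zero_comp]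
    using congrArg (· ∘ σ.symm) hcomp

lemma exists_mulVec_eq_zero_apply_ne_zero (hσ : σ.IsCycleOn Set.univ)
    (hM : M.submatrix σ σ = M.map φ + single k k c) (hdet : M.det = 0) :
    ∃ v, M *ᵥ v = 0 ∧ v k ≠ 0 := by
  by_contra! hk
  have hpow (t : ℕ) : ∀ v, M *ᵥ v = 0 → v ((σ⁻¹ ^ t) k) = 0 := by
    induction t with
    | zero => exact hk
    | succ t ih =>
      intro v hv
      have hshift := ih _ (mulVec_comp_symm_eq_zero hM hv (hk v hv))
      rw [pow_succ']
      exact (map_eq_zero φ).mp hshift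
  obtain ⟨v, hv0, hv⟩ := exists_mulVec_eq_zero_iff.mpr hdet
  refine hv0 (funext fun i ↦ ?_)
  obtain ⟨t, rfl⟩ := hσ.inv.exists_pow_eq' Set.finite_univ (Set.mem_univ k) (Set.mem_univ i)
  exact hpow t v hv

theorem det_ne_zero_of_submatrix_eq_map_add_single (hσ : σ.IsCycleOn Set.univ)
    (hM : M.submatrix σ σ = M.map φ + single k k c) (hc : c ≠ 0) : M.det ≠ 0 := by
  intro hdet
  have hMT : Mᵀ.submatrix σ σ = Mᵀ.map φ + single k k c := by
    rw [← transpose_submatrix, hM, transpose_add, transpose_single, transpose_map]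
  obtain ⟨v, hv, hvk⟩ := exists_mulVec_eq_zero_apply_ne_zero hσ hM hdet
  obtain ⟨u, hu, huk⟩ := exists_mulVec_eq_zero_apply_ne_zero hσ hMT (by rwa [det_transpose])
  have hφu : (φ ∘ u) ᵥ* M.map φ = 0 := by
    rw [← mulVec_transpose, ← transpose_map]
    exact map_mulVec_comp_eq_zero φ hu
  have hlt : (M.map φ).rank < (M.map φ + single k k c).rank :=
    rank_lt_rank_add_single hφu ((map_ne_zero φ).mpr huk) (map_mulVec_comp_eq_zero φ hv)
      ((map_ne_zero φ).mpr hvk) hc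
  rw [← hM, rank_submatrix] at hlt
  exact hlt.not_ge (rank_le_rank_map φ M)

end TwistedShift

section Dickson

/-- The Dickson matrix of the coefficient vector `a`, with an arbitrary map `φ` in place of the
`q`-power map. The index `j - i` is taken in `Fin n`, that is, modulo `n`. -/
def dicksonMatrix {R : Type*} {n : ℕ} (φ : R → R) (a : Fin n → R) : Matrix (Fin n) (Fin n) R :=
  of fun i j ↦ φ^[i] (a (j - i))

variable {F K : Type*} {n : ℕ} [NeZero n]

lemma isCycleOn_addRight_one : (Equiv.addRight (1 : Fin n)).IsCycleOn Set.univ := by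
  refine ⟨Set.bijOn_univ.mpr (Equiv.bijective _), fun i _ j _ ↦ ⟨(j - i).val, ?_⟩⟩
  open scoped Fin.CommRing in
  simp only [zpow_natCast, Equiv.nsmul_addRight, Equiv.coe_addRight, nsmul_one,
    Fin.cast_val_eq_self, add_sub_cancel]

lemma dicksonMatrix_submatrix_addRight_one [AddCommGroup K] (φ : K → K) (a : Fin n → K)
    (ha : ∀ i ≠ 0, φ^[n] (a i) = a i) :
    (dicksonMatrix φ a).submatrix (Equiv.addRight 1) (Equiv.addRight 1) =
      (dicksonMatrix φ a).map φ + single (-1) (-1) (a 0 - φ^[n] (a 0)) := by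
  ext i j
  simp only [dicksonMatrix, submatrix_apply, Matrix.add_apply, map_apply, of_apply,
    Equiv.coe_addRight, add_sub_add_right_eq_sub, ← Function.iterate_succ_apply' φ,
    Nat.succ_eq_add_one]
  by_cases hi : i.val + 1 < n
  · have hi' : -1 ≠ i := by
      rintro rfl
      simpa using Fin.val_add_one_of_lt' hi
    rw [Fin.val_add_one_of_lt' hi, single_apply_of_row_ne hi', add_zero]
  · have hin : i.val + 1 = n := by lia
    have hi' : i = -1 := by
      rw [eq_neg_iff_add_eq_zero]
      ext
      simp [Fin.val_add, hin]
    rw [hin, hi', neg_add_cancel, Fin.val_zero, Function.iterate_zero_apply]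
    by_cases hj : j = -1
    · rw [hj, sub_self, single_apply_same, add_sub_cancel]
    · rw [single_apply_of_col_ne _ _ (Ne.symm hj), add_zero, ha _ (sub_ne_zero.mpr hj)]

theorem iterate_apply_eq_of_det_dicksonMatrix_eq_zero [Field K] (φ : K →+* K) (a : Fin n → K)
    (ha : ∀ i ≠ 0, φ^[n] (a i) = a i) (hdet : (dicksonMatrix φ a).det = 0) :
    φ^[n] (a 0) = a 0 := by
  by_contra hne
  exact det_ne_zero_of_submatrix_eq_map_add_single isCycleOn_addRight_one
    (dicksonMatrix_submatrix_addRight_one φ a ha) (sub_ne_zero.mpr (Ne.symm hne)) hdet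

lemma aeval_det_eq_det_dicksonMatrix [CommRing F] [CommRing K] [Algebra F K] (q : ℕ) (a : ℕ → F)
    (z : K) :
    Polynomial.aeval z
        (Matrix.det (Matrix.of fun i j : Fin n =>
          if i = j then Polynomial.X ^ q ^ i.val
          else Polynomial.C (a ((j.val + n - i.val) % n) ^ q ^ i.val))) =
      (dicksonMatrix (· ^ q)
        (Function.update (fun i : Fin n ↦ algebraMap F K (a i)) 0 z)).det := by
  rw [AlgHom.map_det]
  congr 1
  ext i j
  rcases eq_or_ne i j with rfl | hij
  · simp [dicksonMatrix, pow_iterate]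
  · have hval : (j - i).val = (j.val + n - i.val) % n := by
      rw [Fin.val_sub]
      congr 1
      lia
    simp [dicksonMatrix, pow_iterate, hij, sub_ne_zero.mpr hij.symm, hval]

end Dickson

lemma mem_range_algebraMap_of_pow_card_eq {F K : Type*} [Field F] [Fintype F] [CommRing K]
    [IsDomain K] [Algebra F K] {z : K} (hz : z ^ Fintype.card F = z) :
    z ∈ Set.range (algebraMap F K) := by
  have hsplit : (Polynomial.X ^ Fintype.card F - Polynomial.X : Polynomial F).Splits := by
    simpa using Polynomial.splits_X_pow_nat_card_sub_X (K := F)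
  exact hsplit.mem_range_of_isRoot (FiniteField.X_pow_card_sub_X_ne_zero F Fintype.one_lt_card)
    (by simp [hz])

theorem stmt_12_general {p e q n : ℕ} (hp : p.Prime) (hq : q = p ^ e) (hn : 0 < n)
    {F K : Type*} [Field F] [Fintype F] (hF : Fintype.card F = q ^ n) [Field K] [Algebra F K]
    (a : ℕ → F) (z : K)
    (hz : Polynomial.aeval z
        (Matrix.det (Matrix.of fun i j : Fin n =>
          if i = j then Polynomial.X ^ q ^ i.val
          else Polynomial.C (a ((j.val + n - i.val) % n) ^ q ^ i.val))) = 0) :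
    ∃ w : F, algebraMap F K w = z := by
  have : NeZero n := ⟨hn.ne'⟩
  have : Fact p.Prime := ⟨hp⟩
  subst hq
  have : CharP F p := charP_of_card_eq_prime_pow (hF.trans (pow_mul p e n).symm)
  have : CharP K p := charP_of_injective_algebraMap (algebraMap F K).injective p
  have hiter (x : K) : (iterateFrobenius K p e)^[n] x = x ^ Fintype.card F := by
    rw [hF]
    exact congrFun (pow_iterate (p ^ e) n) x
  rw [aeval_det_eq_det_dicksonMatrix] at hz
  apply mem_range_algebraMap_of_pow_card_eq
  have hfix := iterate_apply_eq_of_det_dicksonMatrix_eq_zero (iterateFrobenius K p e) _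
    (fun i hi ↦ by
      rw [hiter, Function.update_of_ne hi, ← map_pow, FiniteField.pow_card]) hz
  rwa [hiter, Function.update_self] at hfix

/-- Corollary (part 1): let `f = ∑_{i=0}^{n-1} a_i x^{q^i} ∈ F_{q^n}[x]` and let `H(y)`
be the matrix obtained from the Dickson matrix `D(f)` by replacing each diagonal entry
`a_0^{q^i}` by `y^{q^i}`, with `H_0(y) = det H(y) ∈ F_{q^n}[y]`.  Then every root of
`H_0` in the algebraic closure of `F_q` (= the algebraic closure of `F_{q^n}`) lies
in `F_{q^n}`. -/
theorem stmt_12 (p e q n : ℕ) (hp : p.Prime) (he : 0 < e) (hq : q = p ^ e)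
    (hn : 0 < n) (F : Type*) [Field F] [Fintype F] (hF : Fintype.card F = q ^ n)
    (a : ℕ → F) (z : AlgebraicClosure F)
    (hz : Polynomial.aeval z
        (Matrix.det (Matrix.of fun i j : Fin n =>
          if i = j then Polynomial.X ^ q ^ i.val
          else Polynomial.C (a ((j.val + n - i.val) % n) ^ q ^ i.val))) = 0) :
    ∃ w : F, algebraMap F (AlgebraicClosure F) w = z :=
  stmt_12_general hp hq hn hF a z hz
end
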